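/- arXiv:2602.10488 — 3 statements merged into one kernel-verified Lean document; each statement's English description precedes it below -/
import Mathlib

section
/- Fix an integer n ≥ 2 and let m be a squarefree integer with |m| > 1 such that X^n − m is irreducible over ℚ. Let K_m = ℚ(α) where α is a root of X^n − m, let 𝓞_m be its ring of integers, and let g(m) = [𝓞_m : ℤ[α]]. Then gcd(g(m), m) = 1 and g(m)² divides n^n. In particular, every prime dividing g(m) divides n, and for each prime p dividing n one has 2·v_p(g(m)) ≤ n·v_p(n), where v_p denotes the p-adic valuation. -/
open NumberField Polynomial

/-- The trace-form discriminant of a family of algebraic integers does not depend on whether it is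
computed over `ℤ` or over `ℚ`. -/
theorem NumberField.RingOfIntegers.coe_algebraDiscr {K : Type*} [Field K] [NumberField K]
    {ι : Type*} [Fintype ι] [DecidableEq ι] (v : ι → 𝓞 K) :
    ((Algebra.discr ℤ v : ℤ) : ℚ) = Algebra.discr ℚ (fun i ↦ (v i : K)) := by
  rw [Algebra.discr_def, Algebra.discr_def, ← eq_intCast (algebraMap ℤ ℚ), RingHom.map_det]
  congr 1
  ext i j
  simp [Algebra.traceMatrix_apply, Algebra.traceForm_apply, Algebra.coe_trace_int]

/-- The discriminant of the power basis of an integral generator `α` of `K` is the square of the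
index `[𝓞 K : ℤ[α]]` times the discriminant of `K`. -/
theorem NumberField.discr_powerBasis_eq_index_sq_mul_discr {K : Type*} [Field K] [NumberField K]
    (B : PowerBasis ℚ K) (α : 𝓞 K) (hB : B.gen = α) :
    Algebra.discr ℚ B.basis =
      ((Subalgebra.toSubmodule (Algebra.adjoin ℤ {α})).toAddSubgroup.index : ℚ) ^ 2 *
        (NumberField.discr K : ℚ) := by
  have hint : IsIntegral ℤ α := RingOfIntegers.isIntegral α
  have hdim : (Algebra.adjoin.powerBasis' hint).dim = B.dim := by
    rw [Algebra.adjoin.powerBasis'_dim, ← B.natDegree_minpoly, hB,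
      minpoly.isIntegrallyClosed_eq_field_fractions ℚ K hint,
      (minpoly.monic hint).natDegree_map]
  let bN : Module.Basis (Fin B.dim) ℤ
      (Subalgebra.toSubmodule (Algebra.adjoin ℤ {α})).toAddSubgroup :=
    (Algebra.adjoin.powerBasis' hint).basis.reindex (finCongr hdim)
  have hbN (i : Fin B.dim) : ((bN i : _) : 𝓞 K) = α ^ (i : ℕ) := by
    have hi : (Algebra.adjoin.powerBasis' hint).basis.reindex (finCongr hdim) i =
        (Algebra.adjoin.powerBasis' hint).gen ^ (i : ℕ) := by
      rw [Module.Basis.reindex_apply, PowerBasis.basis_eq_pow]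
      rfl
    rw [Algebra.adjoin.powerBasis'_gen] at hi
    exact congrArg Subtype.val hi
  have hcard : Fintype.card (Module.Free.ChooseBasisIndex ℤ (𝓞 K)) = B.dim := by
    rw [← Module.finrank_eq_card_chooseBasisIndex, RingOfIntegers.rank, B.finrank]
  let bO : Module.Basis (Fin B.dim) ℤ (𝓞 K) :=
    (RingOfIntegers.basis K).reindex (Fintype.equivFinOfCardEq hcard)
  have hdisc := Algebra.discr_of_matrix_vecMul bO (bO.toMatrix fun i ↦ (bN i : 𝓞 K))
  rw [bO.toMatrix_map_vecMul, ← Module.Basis.det_apply, NumberField.discr_eq_discr K bO,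
    ← Int.natAbs_sq, ← AddSubgroup.index_eq_natAbs_det bO _ bN] at hdisc
  have hpow : (fun i ↦ ((bN i : 𝓞 K) : K)) = B.basis := by
    ext i
    simp [hbN, hB]
  rw [← hpow, ← RingOfIntegers.coe_algebraDiscr, hdisc]
  push_cast
  rfl

/-- If the minimal polynomial of an integral generator `α` is Eisenstein at `p`, then `p` does not
divide the index `[𝓞 K : ℤ[α]]`. -/
theorem NumberField.not_dvd_index_of_minpoly_isEisensteinAt {K : Type*} [Field K] [NumberField K]
    (B : PowerBasis ℚ K) (α : 𝓞 K) (hB : B.gen = α) {p : ℕ} (hp : p.Prime)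
    (hei : (minpoly ℤ (α : K)).IsEisensteinAt (Ideal.span {(p : ℤ)})) :
    ¬ p ∣ (Subalgebra.toSubmodule (Algebra.adjoin ℤ {α})).toAddSubgroup.index := by
  intro hdvd
  set H := (Subalgebra.toSubmodule (Algebra.adjoin ℤ {α})).toAddSubgroup with hH
  have hmem (z : 𝓞 K) : z ∈ H ↔ (z : K) ∈ Algebra.adjoin ℤ {(α : K)} := by
    have hmap : (Algebra.adjoin ℤ {α}).map (Algebra.ofId (𝓞 K) K |>.restrictScalars ℤ) =
        Algebra.adjoin ℤ {(α : K)} := by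
      rw [AlgHom.map_adjoin, Set.image_singleton]
      rfl
    rw [← hmap]
    refine ⟨fun hz ↦ ⟨z, hz, rfl⟩, ?_⟩
    rintro ⟨y, hy, hyz⟩
    rwa [← RingOfIntegers.coe_injective hyz]
  have hindex : H.index ≠ 0 := by
    intro h0
    have hdisc := discr_powerBasis_eq_index_sq_mul_discr B α hB
    rw [← hH, h0] at hdisc
    exact Algebra.discr_not_zero_of_basis ℚ B.basis (by simpa using hdisc)
  have : Finite (𝓞 K ⧸ H) :=
    Nat.finite_of_card_ne_zero hindex
  have : Fact p.Prime := ⟨hp⟩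
  obtain ⟨x, hx⟩ := exists_prime_addOrderOf_dvd_card' (G := 𝓞 K ⧸ H) p hdvd
  obtain ⟨z, rfl⟩ := QuotientAddGroup.mk_surjective x
  have hpz : p • z ∈ H := by
    rw [← QuotientAddGroup.eq_zero_iff, QuotientAddGroup.mk_nsmul, ← hx, addOrderOf_nsmul_eq_zero]
  have hz : z ∉ H := by
    intro hz
    rw [(QuotientAddGroup.eq_zero_iff z).2 hz, addOrderOf_zero] at hx
    exact hp.one_lt.ne hx
  refine hz ((hmem z).2 ?_)
  rw [← hB] at hei ⊢
  refine mem_adjoin_of_smul_prime_smul_of_minpoly_isEisensteinAt (p := (p : ℤ))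
    (Nat.prime_iff_prime_int.1 hp) ?_ (RingOfIntegers.isIntegral_coe z) ?_ hei
  · rw [hB]
    exact RingOfIntegers.isIntegral_coe α
  · rw [hB]
    simpa using (hmem _).1 hpz

/-- `X ^ n - m` is Eisenstein at every prime divisor of a squarefree integer `m`. -/
theorem Polynomial.isEisensteinAt_X_pow_sub_C_of_squarefree {n : ℕ} (hn : n ≠ 0) {m : ℤ}
    (hm : Squarefree m) {p : ℕ} (hp : p.Prime) (hpm : (p : ℤ) ∣ m) :
    ((X : ℤ[X]) ^ n - C m).IsEisensteinAt (Ideal.span {(p : ℤ)}) := by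
  have hp' := Nat.prime_iff_prime_int.1 hp
  refine (monic_X_pow_sub_C m hn).isEisensteinAt_of_mem_of_notMem
    ((Ideal.span_singleton_prime hp'.ne_zero).2 hp').ne_top (fun {i} hi ↦ ?_) ?_
  · rw [natDegree_X_pow_sub_C] at hi
    rw [coeff_sub, coeff_X_pow, if_neg hi.ne, coeff_C, Ideal.mem_span_singleton]
    split_ifs <;> simp [hpm]
  · rw [Ideal.span_singleton_pow, Ideal.mem_span_singleton, coeff_sub, coeff_X_pow,
      if_neg hn.symm, coeff_C_zero, zero_sub, dvd_neg, sq]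
    exact fun h ↦ hp'.not_isUnit (hm _ h)

/-- Up to sign, the discriminant of the power basis of a root of `X ^ n - m` is
`n ^ n * m ^ (n - 1)`. -/
theorem PowerBasis.abs_discr_of_minpoly_eq_X_pow_sub_C {K : Type*} [Field K] [NumberField K]
    (B : PowerBasis ℚ K) {n : ℕ} (hn : n ≠ 0) {m : ℚ}
    (hmin : minpoly ℚ B.gen = X ^ n - C m) :
    |Algebra.discr ℚ B.basis| = n ^ n * |m| ^ (n - 1) := by
  have hdim : B.dim = n := by rw [← B.natDegree_minpoly, hmin, natDegree_X_pow_sub_C]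
  have hnorm : |Algebra.norm ℚ B.gen| = |m| := by
    rw [Algebra.PowerBasis.norm_gen_eq_coeff_zero_minpoly, hmin]
    simp [abs_mul, hn.symm]
  have hder : aeval B.gen (derivative (minpoly ℚ B.gen)) =
      algebraMap ℚ K n * B.gen ^ (n - 1) := by
    simp [hmin, derivative_X_pow]
  rw [Algebra.discr_powerBasis_eq_norm, hder, map_mul, map_pow, Algebra.norm_algebraMap,
    B.finrank, hdim]
  simp [abs_mul, abs_pow, hnorm]

/-- **Coprimality and divisibility bounds for the pure power-basis index.**
Fix `n ≥ 2` and a squarefree integer `m` with `|m| > 1` such that `X^n − m` is irreducible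
over `ℚ`.  Let `K = ℚ(α)` with `α^n = m` and let `g(m) = [𝓞_K : ℤ[α]]`.  Then
`gcd(g(m), m) = 1` and `g(m)² ∣ n^n`; in particular every prime dividing `g(m)` divides
`n`, and `2·v_p(g(m)) ≤ n·v_p(n)` for every prime `p ∣ n`. -/
theorem index_coprime_and_sq_dvd (n : ℕ) (hn : 2 ≤ n)
    (m : ℤ) (hm : Squarefree m) (hm1 : 1 < |m|)
    (hirr : Irreducible ((X : ℚ[X]) ^ n - C (m : ℚ)))
    (K : Type*) [Field K] [NumberField K] (α : 𝓞 K)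
    (hα : (α : K) ^ n = (m : K))
    (hgen : Algebra.adjoin ℚ {(α : K)} = ⊤)
    (g : ℕ) (hg : g = (Subalgebra.toSubmodule (Algebra.adjoin ℤ {α})).toAddSubgroup.index) :
    Nat.gcd g m.natAbs = 1 ∧ g ^ 2 ∣ n ^ n ∧
      (∀ p : ℕ, p.Prime → p ∣ g → p ∣ n) ∧
      (∀ p : ℕ, p.Prime → p ∣ n → 2 * padicValNat p g ≤ n * padicValNat p n) := by
  have hn0 : n ≠ 0 := by lia
  have hα' : IsIntegral ℤ (α : K) := RingOfIntegers.isIntegral_coe α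
  have hminQ : minpoly ℚ (α : K) = X ^ n - C (m : ℚ) :=
    (minpoly.eq_of_irreducible_of_monic hirr (by simp [hα]) (monic_X_pow_sub_C _ hn0)).symm
  have hminZ : minpoly ℤ (α : K) = X ^ n - C m := by
    apply map_injective (algebraMap ℤ ℚ) (algebraMap ℤ ℚ).injective_int
    rw [← minpoly.isIntegrallyClosed_eq_field_fractions' ℚ hα', hminQ]
    simp
  let B : PowerBasis ℚ K := PowerBasis.ofAdjoinEqTop hα'.tower_top hgen
  have hB : B.gen = α := PowerBasis.ofAdjoinEqTop_gen _ _
  have hcop : Nat.Coprime g m.natAbs := by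
    refine Nat.Coprime.symm (Nat.coprime_of_dvd fun p hp hpm hpg ↦ ?_)
    refine not_dvd_index_of_minpoly_isEisensteinAt B α hB hp ?_ (hg ▸ hpg)
    rw [hminZ]
    exact isEisensteinAt_X_pow_sub_C_of_squarefree hn0 hm hp (Int.natCast_dvd.2 hpm)
  have hprod : g ^ 2 * (NumberField.discr K).natAbs = n ^ n * m.natAbs ^ (n - 1) := by
    have habs := B.abs_discr_of_minpoly_eq_X_pow_sub_C hn0 (hB ▸ hminQ)
    rw [discr_powerBasis_eq_index_sq_mul_discr B α hB, ← hg, abs_mul, abs_pow,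
      Nat.abs_cast] at habs
    rw [← Nat.cast_inj (R := ℚ)]
    push_cast [Nat.cast_natAbs]
    exact habs
  have hsq : g ^ 2 ∣ n ^ n :=
    (hcop.pow 2 (n - 1)).dvd_of_dvd_mul_right (hprod ▸ Dvd.intro _ rfl)
  refine ⟨hcop, hsq, fun p hp hpg ↦ ?_, fun p hp _ ↦ ?_⟩
  · exact hp.dvd_of_dvd_pow ((dvd_pow hpg two_ne_zero).trans hsq)
  · have : Fact p.Prime := ⟨hp⟩
    have hnn : n ^ n ≠ 0 := pow_ne_zero n hn0
    rw [← padicValNat.pow, ← padicValNat.pow]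
    exact (padicValNat_dvd_iff_le hnn).1 (pow_padicValNat_dvd.trans hsq)
end

section
/- Let n ≥ 4, N = n(n−1)/2, and let g ≥ 2 be an integer such that g² divides n^n. Then the polynomial X^N − g has no root in the cyclotomic field ℚ(ζ_{2N}); equivalently, g is not an N-th power of any element of ℚ(ζ_{2N}), so that ℚ(ζ_{2N}, g^{1/N}) ≠ ℚ(ζ_{2N}). -/
open NumberField in
/-- An element of an abelian number field with a real conjugate and a rational power has a
rational square. -/
theorem exists_rat_eq_sq_of_pow_eq_natCast {K : Type*} [Field K] [NumberField K]
    [IsAbelianGalois ℚ K] (φ : K →+* ℂ) {y : K} {r : ℝ} (hr : φ y = r) {N g : ℕ} (hN : N ≠ 0)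
    (hy : y ^ N = g) : ∃ q : ℚ, algebraMap ℚ K q = y ^ 2 := by
  obtain ⟨c, hc⟩ := ComplexEmbedding.exists_comp_symm_eq_of_comp_eq (k := ℚ) φ
    (ComplexEmbedding.conjugate φ) (Subsingleton.elim _ _)
  replace hc (z : K) : φ (c.symm z) = starRingEnd ℂ (φ z) := RingHom.congr_fun hc z
  have hcy : c.symm y = y := φ.injective (by rw [hc, hr, Complex.conj_ofReal])
  refine (IsGalois.mem_range_algebraMap_iff_fixed (F := ℚ) (y ^ 2)).2 fun σ ↦ ?_
  have hcomm : c.symm (σ y) = σ y := by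
    have h : c.symm * σ = σ * c.symm := mul_comm' _ _
    rw [← AlgEquiv.mul_apply, h, AlgEquiv.mul_apply, hcy]
  obtain ⟨s, hs⟩ := Complex.conj_eq_iff_real.1 ((hc (σ y)).symm.trans (congrArg φ hcomm))
  have hpow : s ^ N = r ^ N := by
    have h : φ (σ y) ^ N = φ y ^ N := by
      rw [← map_pow, ← map_pow, ← map_pow, hy, map_natCast]
    rw [hs, hr] at h
    exact_mod_cast h
  have habs : |s| = |r| := by
    refine (pow_left_inj₀ (abs_nonneg s) (abs_nonneg r) hN).1 ?_
    rw [← abs_pow, ← abs_pow, hpow]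
  apply φ.injective
  rw [map_pow, map_pow, map_pow, hs, hr]
  exact_mod_cast sq_eq_sq_iff_abs_eq_abs s r |>.2 habs

/-- If a natural number `g` is an `N`-th power in a cyclotomic field containing the `N`-th roots
of unity, then it is the `N`-th power of a square root of a natural number. -/
theorem exists_sq_eq_natCast_of_pow_eq_natCast {K : Type*} [Field K] [NumberField K] (m : ℕ)
    [NeZero m] [IsCyclotomicExtension {m} ℚ K] {N g : ℕ} (hNm : N ∣ m) {x : K}
    (hx : x ^ N = g) : ∃ (y : K) (h : ℕ), y ^ 2 = h ∧ y ^ N = g := by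
  have hN : N ≠ 0 := fun h ↦ NeZero.ne m (zero_dvd_iff.1 (h ▸ hNm))
  have : NeZero N := ⟨hN⟩
  have : IsAbelianGalois ℚ K := IsCyclotomicExtension.isAbelianGalois {m} ℚ K
  rcases Nat.eq_zero_or_pos g with rfl | hg
  · exact ⟨0, 0, by simp, by simp [hN]⟩
  obtain ⟨φ⟩ : Nonempty (K →+* ℂ) := inferInstance
  obtain ⟨k, hk⟩ := hNm
  have hζ : IsPrimitiveRoot (IsCyclotomicExtension.zeta m ℚ K ^ k) N :=
    (IsCyclotomicExtension.zeta_spec m ℚ K).pow (NeZero.pos m) (by rw [hk, mul_comm])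
  set ζ := IsCyclotomicExtension.zeta m ℚ K ^ k
  set r : ℝ := (g : ℝ) ^ (1 / N : ℝ)
  have hrN : r ^ N = g := by
    rw [← Real.rpow_natCast, ← Real.rpow_mul (Nat.cast_nonneg g), one_div,
      inv_mul_cancel₀ (Nat.cast_ne_zero.2 hN), Real.rpow_one]
  have hφx : φ x ^ N = g := by rw [← map_pow, hx, map_natCast]
  have hg0 : (g : ℂ) ≠ 0 := Nat.cast_ne_zero.2 hg.ne'
  have hφx0 : φ x ≠ 0 := fun h ↦ hg0 (by rw [← hφx, h, zero_pow hN])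
  obtain ⟨i, -, hi⟩ := (hζ.map_of_injective φ.injective).eq_pow_of_pow_eq_one
    (ξ := r / φ x) (by
      rw [div_pow, hφx, ← Complex.ofReal_pow, hrN, Complex.ofReal_natCast, div_self hg0])
  have hy : (x * ζ ^ i) ^ N = g := by
    rw [mul_pow, hx, ← pow_mul, mul_comm i, pow_mul, hζ.pow_eq_one, one_pow, mul_one]
  have hφy : φ (x * ζ ^ i) = r := by
    rw [map_mul, map_pow, hi, mul_div_cancel₀ _ hφx0]
  obtain ⟨q, hq⟩ := exists_rat_eq_sq_of_pow_eq_natCast φ hφy hN hy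
  have hqN : q ^ N = (g : ℚ) ^ 2 := by
    apply (algebraMap ℚ K).injective
    rw [map_pow, hq, pow_right_comm, hy, map_pow, map_natCast]
  have hqr : (q : ℝ) = r ^ 2 := by
    have h := congrArg φ hq
    rw [map_pow, hφy, eq_ratCast, map_ratCast] at h
    exact_mod_cast h
  obtain ⟨a, ha⟩ := IsIntegrallyClosed.exists_algebraMap_eq_of_isIntegral_pow (R := ℤ) (x := q)
    (Nat.pos_of_ne_zero hN) (by
      rw [hqN, ← map_natCast (algebraMap ℤ ℚ), ← map_pow]
      exact isIntegral_algebraMap)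
  have ha0 : 0 ≤ a := by
    have h : (0 : ℝ) ≤ q := hqr ▸ sq_nonneg r
    rw [← ha, eq_intCast] at h
    exact_mod_cast h
  lift a to ℕ using ha0
  exact ⟨x * ζ ^ i, a, by rw [← hq, ← ha]; simp, hy⟩

/-- The twelfth cyclotomic field does not contain a square root of two. -/
theorem sq_ne_two_of_isCyclotomicExtension_twelve {K : Type*} [Field K] [NumberField K]
    [IsCyclotomicExtension {12} ℚ K] (y : K) : y ^ 2 ≠ 2 := by
  intro hy
  have hζ := IsCyclotomicExtension.zeta_spec 12 ℚ K
  set ζ := IsCyclotomicExtension.zeta 12 ℚ K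
  have hi : (ζ ^ 3) ^ 2 = -1 := by
    have h : IsPrimitiveRoot ((ζ ^ 3) ^ 2) 2 := by
      rw [← pow_mul]
      exact hζ.pow (by norm_num) (by norm_num)
    exact h.eq_neg_one_of_two_right
  have hw : ((1 + ζ ^ 3) / y) ^ 2 = ζ ^ 3 := by
    rw [div_pow, hy, div_eq_iff two_ne_zero]
    linear_combination hi
  have hw4 : ((1 + ζ ^ 3) / y) ^ 2 ^ 2 = -1 := by
    rw [show 2 ^ 2 = 2 * 2 by rfl, pow_mul, hw, hi]
  have hw8 : IsPrimitiveRoot ((1 + ζ ^ 3) / y) 8 := by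
    have h : orderOf ((1 + ζ ^ 3) / y) = 2 ^ (2 + 1) :=
      orderOf_eq_prime_pow (by rw [hw4]; norm_num) (by rw [pow_succ 2 2, pow_mul, hw4]; norm_num)
    exact IsPrimitiveRoot.iff_orderOf.2 h
  have hle := hw8.lcm_totient_le_finrank (K := ℚ) hζ
    (Polynomial.cyclotomic.irreducible_rat (by decide))
  rw [IsCyclotomicExtension.finrank K
    (Polynomial.cyclotomic.irreducible_rat (n := 12) (by norm_num))] at hle
  revert hle
  decide

theorem sq_lt_two_pow_pred {n : ℕ} (hn : 7 ≤ n) : n ^ 2 < 2 ^ (n - 1) := by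
  induction n, hn using Nat.le_induction with
  | base => norm_num
  | succ k hk ih =>
    obtain ⟨j, rfl⟩ : ∃ j, k = j + 1 := ⟨k - 1, by omega⟩
    simp only [Nat.add_sub_cancel] at ih ⊢
    rw [pow_succ 2 j]
    nlinarith

theorem eq_four_and_eq_two_of_pow_pred_dvd_sq {n h : ℕ} (hn : 4 ≤ n) (hh : 2 ≤ h)
    (hdvd : h ^ (n - 1) ∣ n ^ 2) : n = 4 ∧ h = 2 := by
  have hle : h ^ (n - 1) ≤ n ^ 2 := Nat.le_of_dvd (by positivity) hdvd
  have hn7 : n < 7 := by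
    by_contra! hn7
    exact absurd (sq_lt_two_pow_pred hn7)
      (not_lt.2 ((Nat.pow_le_pow_left hh _).trans hle))
  have hh3 : h < 3 := by
    by_contra! hh3
    have h3 := (Nat.pow_le_pow_left hh3 (n - 1)).trans hle
    interval_cases n <;> norm_num at h3
  obtain rfl : h = 2 := by omega
  interval_cases n <;> revert hdvd <;> decide

/-- **Kummer nontriviality for pure-field index values.**  Let `n ≥ 4`, `N = n(n−1)/2`, and
let `g ≥ 2` satisfy `g² ∣ n^n` (the constraint satisfied by any pure power-basis index).
Then `X^N − g` has no root in the cyclotomic field `ℚ(ζ_{2N})`; equivalently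
`ℚ(ζ_{2N}, g^{1/N}) ≠ ℚ(ζ_{2N})`. -/
theorem no_nthRoot_in_cyclotomic (n : ℕ) (hn : 4 ≤ n)
    (N : ℕ+) (hN : (N : ℕ) = n * (n - 1) / 2)
    (g : ℕ) (hg : 2 ≤ g) (hgsq : g ^ 2 ∣ n ^ n) :
    ∀ x : CyclotomicField (2 * N) ℚ, x ^ (N : ℕ) ≠ (g : CyclotomicField (2 * N) ℚ) := by
  intro x hx
  have : NeZero ((2 * (N : ℕ) : ℕ) : ℚ) := ⟨by exact_mod_cast (2 * N).ne_zero⟩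
  have : IsCyclotomicExtension {2 * (N : ℕ)} ℚ (CyclotomicField (2 * N) ℚ) :=
    CyclotomicField.isCyclotomicExtension _ _
  obtain ⟨y, h, hyh, hyg⟩ := exists_sq_eq_natCast_of_pow_eq_natCast (2 * (N : ℕ))
    (Dvd.intro_left 2 rfl) hx
  have hhg : h ^ (N : ℕ) = g ^ 2 := by
    have h' : (h : CyclotomicField (2 * N) ℚ) ^ (N : ℕ) = (g : CyclotomicField (2 * N) ℚ) ^ 2 := by
      rw [← hyh, ← hyg, pow_right_comm]
    exact_mod_cast h'
  have hh : 2 ≤ h := by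
    by_contra! hlt
    have h1 : h ^ (N : ℕ) ≤ 1 := pow_le_one₀ (Nat.zero_le h) (by omega)
    nlinarith
  have h2N : (N : ℕ) * 2 = (n - 1) * n := by
    rw [hN, Nat.div_mul_cancel (Nat.even_mul_pred_self n).two_dvd, mul_comm]
  have hdvd : h ^ (n - 1) ∣ n ^ 2 := by
    refine (Nat.pow_dvd_pow_iff (n := n) (by omega)).1 ?_
    rw [← pow_mul, ← h2N, pow_mul, hhg, ← pow_mul n, mul_comm 2 n, pow_mul n]
    exact pow_dvd_pow_of_dvd hgsq 2
  obtain ⟨rfl, rfl⟩ := eq_four_and_eq_two_of_pow_pred_dvd_sq hn hh hdvd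
  have h12 : 2 * (N : ℕ) = 12 := by omega
  have : IsCyclotomicExtension {12} ℚ (CyclotomicField (2 * N) ℚ) := by
    rw [← h12]
    infer_instance
  exact sq_ne_two_of_isCyclotomicExtension_twelve y (by exact_mod_cast hyh)
end

section
/- Let N ≥ 2 and let g be a nonzero integer such that the polynomial X^N − g has no root in ℚ(ζ_{2N}). Let P_g be the set of rational primes q such that q ∤ 2Ng, q ≡ 1 (mod 2N), and g is not an N-th power in ℤ/qℤ. Let L_g denote the splitting field over ℚ of (X^N − g)(X^{2N} − 1) and set δ_g = 1/φ(2N) − 1/[L_g : ℚ]. Then δ_g > 0, the set P_g has natural density δ_g among the primes (i.e., #{q ≤ x : q ∈ P_g}/#{q ≤ x : q prime} → δ_g as x → ∞), and the sum ∑_{q ∈ P_g} 1/q diverges. -/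
open MeasureTheory Bornology Pointwise Module

/-- If a segment joins a point of `A` to a point outside `A`, it meets the frontier of `A`. -/
theorem exists_mem_frontier_dist_le {E : Type*} [NormedAddCommGroup E] [NormedSpace ℝ E]
    {A : Set E} {x y : E} (hx : x ∈ A) (hy : y ∉ A) :
    ∃ z ∈ frontier A, dist x z ≤ dist x y ∧ dist y z ≤ dist x y := by
  obtain ⟨z, hz, hzA⟩ : (segment ℝ x y ∩ frontier A).Nonempty := by
    by_contra! hne
    have hcover : segment ℝ x y ⊆ interior A ∪ (closure A)ᶜ := fun z hz ↦ by
      by_contra hz'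
      rw [Set.mem_union, Set.mem_compl_iff, not_or, not_not] at hz'
      exact (Set.ext_iff.mp hne z).mp ⟨hz, hz'.2, hz'.1⟩
    have hxi : x ∈ interior A := (hcover (left_mem_segment ℝ x y)).resolve_right
      fun h ↦ h (subset_closure hx)
    have hyi : y ∈ (closure A)ᶜ := (hcover (right_mem_segment ℝ x y)).resolve_left
      fun h ↦ hy (interior_subset h)
    obtain ⟨z, -, hz₁, hz₂⟩ := (convex_segment (𝕜 := ℝ) x y).isPreconnected _ _ isOpen_interior
      isClosed_closure.isOpen_compl hcover ⟨x, left_mem_segment ℝ x y, hxi⟩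
      ⟨y, right_mem_segment ℝ x y, hyi⟩
    exact hz₂ (interior_subset_closure hz₁)
  refine ⟨z, hzA, ?_, ?_⟩
  · have := dist_add_dist_of_mem_segment hz
    have := dist_nonneg (x := z) (y := y)
    linarith
  · have := dist_add_dist_of_mem_segment hz
    have := dist_nonneg (x := x) (y := z)
    rw [dist_comm y z]
    linarith

section LatticeCount

variable {E : Type*} [NormedAddCommGroup E] [NormedSpace ℝ E] [FiniteDimensional ℝ E]
  [MeasurableSpace E] [BorelSpace E] (μ : Measure E) [μ.IsAddHaarMeasure]

/-- Comparison of the number of lattice points of a bounded set with its volume: the error is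
controlled by the volume of a neighbourhood of the frontier. -/
theorem abs_card_mul_covolume_sub_le (L : Submodule ℤ E) [DiscreteTopology L] [IsZLattice ℝ L] :
    ∃ R : ℝ, 0 < R ∧ ∀ A : Set E, IsBounded A → MeasurableSet A →
      ∀ V : Set E, μ V ≠ ⊤ → (∀ x, ∀ z ∈ frontier A, dist x z ≤ R → x ∈ V) →
      |(Nat.card (A ∩ L : Set E) : ℝ) * ZLattice.covolume L μ - μ.real A| ≤ μ.real V := by
  let b := Free.chooseBasis ℤ L
  let B := b.ofZLatticeBasis ℝ L
  let F := ZSpan.fundamentalDomain B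
  have hspan : Submodule.span ℤ (Set.range B) = L := b.ofZLatticeBasis_span ℝ L
  have hFm : MeasurableSet F := ZSpan.fundamentalDomain_measurableSet B
  obtain ⟨R, hR0, hR⟩ := (ZSpan.fundamentalDomain_isBounded B).exists_pos_norm_le
  refine ⟨R, hR0, fun A hA hAm V hVtop hV ↦ ?_⟩
  have hfin : (A ∩ L : Set E).Finite := by
    have : DiscreteTopology L.toAddSubgroup := inferInstanceAs (DiscreteTopology L)
    exact Metric.finite_isBounded_inter_isClosed (s := (L : Set E))
      (isDiscrete_iff_discreteTopology.mpr ‹DiscreteTopology L›) hA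
      (AddSubgroup.isClosed_of_discrete (H := L.toAddSubgroup))
  have : Finite (A ∩ L : Set E) := hfin
  have : Fintype (A ∩ L : Set E) := Fintype.ofFinite _
  let U : Set E := ⋃ a : (A ∩ L : Set E), (a : E) +ᵥ F
  have hcov : ZLattice.covolume L μ = μ.real F :=
    ZLattice.covolume_eq_measure_fundamentalDomain L μ (ZLattice.isAddFundamentalDomain b μ)
  have hFtop : μ F ≠ ⊤ := (ZSpan.fundamentalDomain_isBounded B).measure_lt_top.ne
  have hdisj : Pairwise (Function.onFun Disjoint fun a : (A ∩ L : Set E) ↦ (a : E) +ᵥ F) := by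
    intro a a' haa'
    rw [Function.onFun, Set.disjoint_left]
    rintro x ⟨y, hy, rfl⟩ ⟨y', hy', h⟩
    apply haa'
    have h' : (a' : E) + y' = a + y := h
    have ha : (a : E) ∈ Submodule.span ℤ (Set.range B) := by rw [hspan]; exact a.2.2
    have ha' : (a' : E) ∈ Submodule.span ℤ (Set.range B) := by rw [hspan]; exact a'.2.2
    have h1 : y = y' := by
      rw [← ZSpan.fract_eq_self.mpr hy, ← ZSpan.fract_eq_self.mpr hy',
        ← ZSpan.fract_zSpan_add B y ha, ← ZSpan.fract_zSpan_add B y' ha', h']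
    subst h1
    exact Subtype.ext (add_right_cancel h').symm
  have hUm : MeasurableSet U := MeasurableSet.iUnion fun a ↦ hFm.const_vadd _
  have hU : μ.real U = (Nat.card (A ∩ L : Set E) : ℝ) * ZLattice.covolume L μ := by
    rw [measureReal_def, measure_iUnion hdisj (fun a ↦ hFm.const_vadd _), hcov]
    simp [measure_vadd, tsum_fintype, ENNReal.toReal_mul, measureReal_def]
  have hUtop : μ U ≠ ⊤ := by
    rw [measure_iUnion hdisj (fun a ↦ hFm.const_vadd _)]
    simp only [measure_vadd, tsum_fintype, Finset.sum_const, nsmul_eq_mul]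
    exact ENNReal.mul_ne_top (ENNReal.natCast_ne_top _) hFtop
  have hAtop : μ A ≠ ⊤ := hA.measure_lt_top.ne
  have h1 : U ⊆ A ∪ V := by
    intro x hx
    obtain ⟨a, y, hy, rfl⟩ := Set.mem_iUnion.mp hx
    by_cases hxA : (a : E) + y ∈ A
    · exact Or.inl hxA
    · obtain ⟨z, hz, -, h⟩ := exists_mem_frontier_dist_le a.2.1 hxA
      refine Or.inr (hV _ z hz (h.trans ?_))
      simpa using hR y hy
  have h2 : A ⊆ U ∪ V := by
    intro x hx
    let a : E := ZSpan.floor B x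
    have haL : a ∈ L := by
      exact hspan.le (ZSpan.floor B x).2
    have hax : a + ZSpan.fract B x = x := by simp [a, ZSpan.fract_apply]
    have hfr := ZSpan.fract_mem_fundamentalDomain B x
    by_cases haA : a ∈ A
    · exact Or.inl (Set.mem_iUnion.mpr ⟨⟨a, haA, haL⟩, ZSpan.fract B x, hfr, hax⟩)
    · obtain ⟨z, hz, h, -⟩ := exists_mem_frontier_dist_le hx haA
      refine Or.inr (hV _ z hz (h.trans ?_))
      rw [dist_eq_norm]
      nth_rw 1 [← hax]
      simpa using hR _ hfr
  rw [← hU, abs_sub_le_iff]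
  have h3 := (measureReal_mono h1 (measure_union_ne_top hAtop hVtop)).trans (measureReal_union_le A V)
  have h4 := (measureReal_mono h2 (measure_union_ne_top hUtop hVtop)).trans (measureReal_union_le U V)
  constructor <;> linarith

open Filter Asymptotics in
/-- Counting lattice points in dilates of a bounded set whose frontier has neighbourhoods of
linearly small volume. -/
theorem card_smul_inter_lattice_isBigO (L : Submodule ℤ E) [DiscreteTopology L] [IsZLattice ℝ L]
    {D : Set E} (hD : IsBounded D) (hDm : MeasurableSet D) {C : ℝ} (hC₀ : 0 ≤ C)
    (hC : ∀ ε : ℝ, 0 < ε → ε ≤ 1 → ∃ V : Set E, μ V ≤ ENNReal.ofReal (C * ε) ∧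
      ∀ x, ∀ z ∈ frontier D, dist x z ≤ ε → x ∈ V) :
    (fun t : ℝ ↦ (Nat.card (t • D ∩ L : Set E) : ℝ) -
      μ.real D / ZLattice.covolume L μ * t ^ finrank ℝ E) =O[atTop]
        fun t : ℝ ↦ t ^ ((finrank ℝ E : ℝ) - 1) := by
  obtain ⟨R, hR0, hR⟩ := abs_card_mul_covolume_sub_le μ L
  have hcov := ZLattice.covolume_pos L μ
  refine IsBigO.of_bound (C * R / ZLattice.covolume L μ) ?_
  filter_upwards [eventually_ge_atTop R, eventually_gt_atTop 0] with t htR ht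
  obtain ⟨V, hVμ, hV⟩ := hC (R / t) (by positivity) (by rw [div_le_one ht]; exact htR)
  have hVtop : μ V ≠ ⊤ := ne_top_of_le_ne_top ENNReal.ofReal_ne_top hVμ
  have hμ (S : Set E) : μ (t • S) = ENNReal.ofReal (t ^ finrank ℝ E) * μ S := by
    rw [Measure.addHaar_smul, abs_of_pos (by positivity)]
  have key := hR (t • D) (hD.smul₀ t) (hDm.const_smul₀ t) (t • V)
    (by rw [hμ]; exact ENNReal.mul_ne_top ENNReal.ofReal_ne_top hVtop) (by
      intro x z hz hxz
      change z ∈ frontier ((Homeomorph.smulOfNeZero t ht.ne') '' D) at hz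
      rw [← (Homeomorph.smulOfNeZero t ht.ne').image_frontier] at hz
      obtain ⟨w, hw, rfl⟩ := hz
      rw [Set.mem_smul_set_iff_inv_smul_mem₀ ht.ne']
      refine hV _ w hw ?_
      have : t⁻¹ • x - w = t⁻¹ • (x - t • w) := by rw [smul_sub, inv_smul_smul₀ ht.ne']
      rw [dist_eq_norm, this, norm_smul, norm_inv, Real.norm_of_nonneg ht.le, ← dist_eq_norm,
        div_eq_inv_mul]
      gcongr
      exact hxz)
  have hVr : μ.real (t • V) ≤ t ^ finrank ℝ E * (C * (R / t)) := by
    rw [measureReal_def, hμ, ENNReal.toReal_mul, ENNReal.toReal_ofReal (by positivity)]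
    gcongr
    exact ENNReal.toReal_le_of_le_ofReal (by positivity) hVμ
  have hDr : μ.real (t • D) = t ^ finrank ℝ E * μ.real D := by
    rw [measureReal_def, hμ, ENNReal.toReal_mul, ENNReal.toReal_ofReal (by positivity),
      measureReal_def]
  have hrw : (Nat.card (t • D ∩ L : Set E) : ℝ) -
      μ.real D / ZLattice.covolume L μ * t ^ finrank ℝ E =
      ((Nat.card (t • D ∩ L : Set E) : ℝ) * ZLattice.covolume L μ - μ.real (t • D)) /
        ZLattice.covolume L μ := by
    rw [hDr]
    field_simp
  rw [hrw, norm_div, Real.norm_of_nonneg hcov.le, Real.norm_eq_abs, Real.norm_of_nonneg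
    (by positivity), Real.rpow_sub_one ht.ne', Real.rpow_natCast, div_mul_eq_mul_div]
  gcongr
  refine (key.trans hVr).trans_eq ?_
  field_simp

end LatticeCount

open MeasureTheory Metric NNReal in
/-- Neighbourhoods of a Lipschitz image of the boundary of the unit cube have linearly small
volume. -/
theorem exists_volume_le_of_lipschitzOnWith_cube {ι : Type*} [Fintype ι] [DecidableEq ι]
    [Nonempty ι] {Φ : (ι → ℝ) → ι → ℝ} {K : ℝ≥0} (hΦ : LipschitzOnWith K Φ (Set.Icc 0 1)) :
    ∃ C R : ℝ, 0 ≤ C ∧ ∀ ε : ℝ, 0 < ε → ε ≤ 1 → ∃ V : Set (ι → ℝ), IsClosed V ∧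
      V ⊆ closedBall 0 R ∧ volume V ≤ ENNReal.ofReal (C * ε) ∧
      ∀ x, ∀ y ∈ Set.Icc (0 : ι → ℝ) 1, (∃ i, y i = 0 ∨ y i = 1) → dist x (Φ y) ≤ ε → x ∈ V := by
  set d := Fintype.card ι with hd
  have hd0 : 0 < d := Fintype.card_pos
  refine ⟨d * 2 * 3 ^ (d - 1) * (2 * (K + 1)) ^ d, ‖Φ 0‖ + K + (K + 1), by positivity,
    fun ε hε hε1 ↦ ?_⟩
  set M := ⌈1 / ε⌉₊ with hM
  have hMε : 1 / ε ≤ M := Nat.le_ceil _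
  have hM0 : (0 : ℝ) < M := lt_of_lt_of_le (by positivity) hMε
  have hM1 : (M : ℝ) + 1 ≤ 3 / ε := by
    have h1 : (M : ℝ) < 1 / ε + 1 := Nat.ceil_lt_add_one (by positivity)
    have h2 : 1 ≤ 1 / ε := by rw [le_div_iff₀ hε]; linarith
    have h3 : 3 / ε = 3 * (1 / ε) := by ring
    linarith
  let G : Finset (ι → ℕ) := Finset.univ.biUnion fun i ↦ ({0, M} : Finset ℕ).biUnion fun c ↦
    Fintype.piFinset fun j ↦ if j = i then {c} else Finset.range (M + 1)
  let p : (ι → ℕ) → ι → ℝ := fun k j ↦ k j / M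
  have hpI : ∀ k ∈ G, p k ∈ Set.Icc (0 : ι → ℝ) 1 := by
    intro k hk
    simp only [G, Finset.mem_biUnion, Fintype.mem_piFinset] at hk
    obtain ⟨i, -, c, hc, hk⟩ := hk
    have hle : ∀ j, k j ≤ M := fun j ↦ by
      have := hk j
      split_ifs at this with h
      · rw [Finset.mem_singleton] at this
        simp only [Finset.mem_insert, Finset.mem_singleton] at hc
        omega
      · rw [Finset.mem_range] at this
        omega
    refine ⟨fun j ↦ by simp only [p, Pi.zero_apply]; positivity, fun j ↦ ?_⟩
    simp only [p, Pi.one_apply]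
    rw [div_le_one hM0]
    exact_mod_cast hle j
  have hGcard : G.card ≤ d * (2 * (M + 1) ^ (d - 1)) := by
    refine (Finset.card_biUnion_le_card_mul _ _ _ fun i _ ↦ ?_)
    refine (Finset.card_biUnion_le_card_mul _ _ ((M + 1) ^ (d - 1)) fun c _ ↦ ?_).trans
      (Nat.mul_le_mul_right _ Finset.card_le_two)
    rw [Fintype.card_piFinset, ← Finset.mul_prod_erase _ _ (Finset.mem_univ i), if_pos rfl,
      Finset.card_singleton, one_mul, Finset.prod_congr rfl (g := fun _ ↦ M + 1)]
    · simp [Finset.card_erase_of_mem, hd]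
    · intro j hj
      rw [if_neg (Finset.ne_of_mem_erase hj), Finset.card_range]
  refine ⟨⋃ k ∈ G, closedBall (Φ (p k)) ((K + 1) * ε), ?_, ?_, ?_, ?_⟩
  · exact isClosed_biUnion_finset fun _ _ ↦ isClosed_closedBall
  · refine Set.iUnion₂_subset fun k hk x hx ↦ ?_
    rw [mem_closedBall, dist_zero_right]
    have h1 : dist (Φ (p k)) (Φ 0) ≤ K * 1 := by
      refine (hΦ.dist_le_mul _ (hpI k hk) _ ⟨le_rfl, zero_le_one⟩).trans ?_
      gcongr
      rw [dist_zero_right, pi_norm_le_iff_of_nonneg zero_le_one]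
      intro j
      rw [Real.norm_of_nonneg ((hpI k hk).1 j)]
      exact (hpI k hk).2 j
    have h2 : dist x (Φ (p k)) ≤ (K + 1) * 1 := (mem_closedBall.mp hx).trans (by gcongr)
    calc ‖x‖ = ‖Φ 0 + ((Φ (p k) - Φ 0) + (x - Φ (p k)))‖ := by congr 1; abel
      _ ≤ ‖Φ 0‖ + (‖Φ (p k) - Φ 0‖ + ‖x - Φ (p k)‖) :=
        (norm_add_le _ _).trans (by gcongr; exact norm_add_le _ _)
      _ ≤ _ := by rw [← dist_eq_norm, ← dist_eq_norm]; linarith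
  · refine (measure_biUnion_finset_le _ _).trans ?_
    have hball (k : ι → ℕ) : volume (closedBall (Φ (p k)) ((K + 1) * ε)) =
        ENNReal.ofReal ((2 * ((K + 1) * ε)) ^ d) :=
      Real.volume_pi_closedBall _ (by positivity)
    simp_rw [hball]
    rw [Finset.sum_const, nsmul_eq_mul, ← ENNReal.ofReal_natCast, ← ENNReal.ofReal_mul
      (by positivity)]
    apply ENNReal.ofReal_le_ofReal
    have h1 : (G.card : ℝ) ≤ d * (2 * (3 / ε) ^ (d - 1)) := by
      refine (Nat.cast_le.mpr hGcard).trans ?_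
      push_cast
      gcongr
    calc (G.card : ℝ) * (2 * ((K + 1) * ε)) ^ d
        ≤ d * (2 * (3 / ε) ^ (d - 1)) * (2 * ((K + 1) * ε)) ^ d := by gcongr
      _ = d * 2 * 3 ^ (d - 1) * (2 * (K + 1)) ^ d * ε := by
        have : ε ^ d = ε ^ (d - 1) * ε := by rw [← pow_succ]; congr; omega
        rw [div_pow, show 2 * (((K : ℝ) + 1) * ε) = (2 * (K + 1)) * ε by ring, mul_pow _ ε, this]
        field_simp
  · intro x y hy ⟨i, hi⟩ hxy
    have hy0 (j : ι) : 0 ≤ M * y j := mul_nonneg hM0.le (hy.1 j)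
    let k : ι → ℕ := fun j ↦ ⌊M * y j⌋₊
    have hk : k ∈ G := by
      simp only [G, Finset.mem_biUnion, Fintype.mem_piFinset]
      refine ⟨i, Finset.mem_univ _, k i, ?_, fun j ↦ ?_⟩
      · rcases hi with hi | hi <;> simp [k, hi]
      · split_ifs with h
        · simp [h]
        · rw [Finset.mem_range, Nat.lt_succ_iff]
          refine Nat.floor_le_of_le ?_
          have := hy.2 j
          simp only [Pi.one_apply] at this
          nlinarith
    refine Set.mem_iUnion₂.mpr ⟨k, hk, ?_⟩
    rw [mem_closedBall]
    have h1 : dist y (p k) ≤ ε := by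
      rw [dist_pi_le_iff hε.le]
      intro j
      have h2 := Nat.floor_le (hy0 j)
      have h3 := Nat.lt_floor_add_one (M * y j)
      have h4 : 1 / (M : ℝ) ≤ ε := by
        rw [div_le_iff₀ hM0]
        rw [div_le_iff₀ hε] at hMε
        linarith
      refine le_trans ?_ h4
      rw [Real.dist_eq, abs_le]
      simp only [p, k]
      constructor
      · rw [← sub_nonneg]
        have : y j - ⌊M * y j⌋₊ / M - -(1 / M) = (M * y j - ⌊M * y j⌋₊ + 1) / M := by
          field_simp
          ring
        rw [this]
        exact div_nonneg (by linarith) hM0.le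
      · rw [← sub_nonneg]
        have : 1 / M - (y j - ⌊M * y j⌋₊ / M) = (1 + ⌊M * y j⌋₊ - M * y j) / M := by
          field_simp
          ring
        rw [this]
        exact div_nonneg (by linarith) hM0.le
    have h2 := hΦ.dist_le_mul _ hy _ (hpI k hk)
    calc dist x (Φ (p k)) ≤ dist x (Φ y) + dist (Φ y) (Φ (p k)) := dist_triangle _ _ _
      _ ≤ ε + K * ε := by gcongr; exact h2.trans (by gcongr)
      _ = _ := by ring

namespace NumberField.mixedEmbedding.fundamentalCone

open NumberField.InfinitePlace NumberField.Units NumberField.Units.dirichletUnitTheorem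
open MeasureTheory Metric Module

variable (K : Type*) [Field K] [NumberField K]

open scoped Classical in
/-- A polynomial-in-the-radius parametrization of `compactSet K` by the unit cube. -/
noncomputable def cubeMap (y : realSpace K) : realSpace K :=
  y w₀ • expMapBasis (fun i ↦ if i = w₀ then 0 else y i)

theorem contDiff_expMapBasis : ContDiff ℝ 1 (expMapBasis (K := K)) := by
  rw [contDiff_pi]
  intro w
  simp only [expMapBasis_apply, expMap_apply]
  have : ContDiff ℝ 1 fun x : realSpace K ↦ (completeBasis K).equivFunL.symm x :=
    ContinuousLinearEquiv.contDiff _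
  exact Real.contDiff_exp.comp (contDiff_const.mul (contDiff_pi.mp this w))

theorem contDiff_cubeMap : ContDiff ℝ 1 (cubeMap K) := by
  unfold cubeMap
  refine ContDiff.smul (contDiff_apply ℝ ℝ _) ((contDiff_expMapBasis K).comp ?_)
  rw [contDiff_pi]
  intro w
  split_ifs
  · exact contDiff_const
  · exact contDiff_apply ℝ ℝ _

theorem exists_cubeMap_eq_of_mem_frontier {x : mixedSpace K} (hx : x ∈ frontier (normLeOne K)) :
    ∃ y ∈ Set.Icc (0 : realSpace K) 1, (∃ w, y w = 0 ∨ y w = 1) ∧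
      cubeMap K y = normAtAllPlaces x := by
  classical
  obtain ⟨c, hc, _, ⟨z, hz, rfl⟩, hxz⟩ := closure_normLeOne_subset K hx.1
  have hxi : normAtAllPlaces x ∉ expMapBasis '' interior (paramSet K) :=
    fun h ↦ hx.2 (subset_interior_normLeOne K h)
  have hz' (w : InfinitePlace K) (hw : w ≠ w₀) : z w ∈ Set.Icc (0 : ℝ) 1 := by
    simpa [hw] using hz w (Set.mem_univ _)
  have hz₀ : z w₀ = 0 := by simpa using hz w₀ (Set.mem_univ _)
  let y : realSpace K := fun w ↦ if w = w₀ then c else z w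
  have hyz : (fun i ↦ if i = w₀ then 0 else y i) = z := by
    ext w
    by_cases hw : w = w₀ <;> simp [y, hw, hz₀]
  have hy : cubeMap K y = normAtAllPlaces x := by
    rw [cubeMap, hyz, ← hxz]
    simp [y]
  have hyI (w : InfinitePlace K) : y w ∈ Set.Icc (0 : ℝ) 1 := by
    by_cases hw : w = w₀
    · simpa [y, hw] using hc
    · simpa [y, hw] using hz' w hw
  refine ⟨y, ⟨fun w ↦ (hyI w).1, fun w ↦ (hyI w).2⟩, ?_, hy⟩
  by_contra! hne
  have hyo (w : InfinitePlace K) : y w ∈ Set.Ioo (0 : ℝ) 1 :=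
    ⟨(hyI w).1.lt_of_ne' (hne w).1, (hyI w).2.lt_of_ne (hne w).2⟩
  apply hxi
  have hc' : c ∈ Set.Ioo (0 : ℝ) 1 := by simpa [y] using hyo w₀
  refine ⟨fun w ↦ if w = w₀ then Real.log c else y w, ?_, ?_⟩
  · rw [interior_paramSet, Set.mem_univ_pi]
    intro w
    split_ifs with hw
    · exact Real.log_neg hc'.1 hc'.2
    · exact hyo w
  · rw [← hy, expMapBasis_apply'', cubeMap, if_pos rfl, Real.exp_log hc'.1]
    have : y w₀ = c := by simp [y]
    rw [this]
    congr 2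
    ext w
    by_cases hw : w = w₀ <;> simp [hw]

open scoped Classical in
theorem dist_normAtAllPlaces_le (x y : mixedSpace K) :
    dist (normAtAllPlaces x) (normAtAllPlaces y) ≤ dist x y := by
  rw [dist_pi_le_iff dist_nonneg]
  intro w
  have h (a b : mixedSpace K) : normAtPlace w a - normAtPlace w b ≤ dist a b := by
    have h1 := normAtPlace_add_le w (a - b) b
    rw [sub_add_cancel] at h1
    have h2 : normAtPlace w (a - b) ≤ ‖a - b‖ := by
      rw [norm_eq_sup'_normAtPlace]
      exact Finset.le_sup' (fun w ↦ normAtPlace w (a - b)) (Finset.mem_univ w)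
    rw [dist_eq_norm]
    linarith
  rw [Real.dist_eq, abs_sub_le_iff, normAtAllPlaces_apply, normAtAllPlaces_apply]
  exact ⟨h x y, dist_comm x y ▸ h y x⟩

open scoped Classical in
theorem volume_preimage_normAtAllPlaces_le {V : Set (realSpace K)} (hV : MeasurableSet V) {R : ℝ}
    (hVR : V ⊆ closedBall 0 R) :
    volume ((normAtAllPlaces : mixedSpace K → realSpace K) ⁻¹' V) ≤
      2 ^ nrRealPlaces K * .ofReal (2 * Real.pi) ^ nrComplexPlaces K *
        (.ofReal R ^ nrComplexPlaces K * volume V) := by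
  rw [volume_eq_two_pow_mul_two_pi_pow_mul_integral Set.preimage_image_preimage
    (hV.preimage (continuous_normAtAllPlaces K).measurable)]
  gcongr
  calc ∫⁻ x in normAtAllPlaces '' ((normAtAllPlaces : mixedSpace K → realSpace K) ⁻¹' V),
          ∏ w : {w : InfinitePlace K // IsComplex w}, ENNReal.ofReal (x w.1)
      ≤ ∫⁻ x in V, ∏ w : {w : InfinitePlace K // IsComplex w}, ENNReal.ofReal (x w.1) :=
        lintegral_mono_set (Set.image_preimage_subset _ _)
    _ ≤ ∫⁻ x in V, .ofReal R ^ nrComplexPlaces K := by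
        refine setLIntegral_mono' hV fun x hx ↦ ?_
        rw [nrComplexPlaces, ← Finset.card_univ]
        refine Finset.prod_le_pow_card _ _ _ fun w _ ↦ ENNReal.ofReal_le_ofReal ?_
        have := mem_closedBall_zero_iff.mp (hVR hx)
        exact (le_abs_self _).trans ((norm_le_pi_norm x w.1).trans this)
    _ = _ := by rw [setLIntegral_const]

open scoped Classical in
/-- Neighbourhoods of the frontier of `normLeOne K` have linearly small volume. -/
theorem exists_volume_nhds_frontier_normLeOne_le :
    ∃ C : ℝ, 0 ≤ C ∧ ∀ ε : ℝ, 0 < ε → ε ≤ 1 → ∃ V : Set (mixedSpace K),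
      volume V ≤ ENNReal.ofReal (C * ε) ∧
      ∀ x, ∀ z ∈ frontier (normLeOne K), dist x z ≤ ε → x ∈ V := by
  obtain ⟨L, hL⟩ := (contDiff_cubeMap K).contDiffOn.exists_lipschitzOnWith one_ne_zero
    (convex_Icc (0 : realSpace K) 1) isCompact_Icc
  obtain ⟨C, R, hC, h⟩ := exists_volume_le_of_lipschitzOnWith_cube hL
  refine ⟨2 ^ nrRealPlaces K * (2 * Real.pi) ^ nrComplexPlaces K *
    ((max R 0) ^ nrComplexPlaces K * C), by positivity, fun ε hε hε1 ↦ ?_⟩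
  obtain ⟨V, hVc, hVR, hVv, hV⟩ := h ε hε hε1
  refine ⟨normAtAllPlaces ⁻¹' V, ?_, fun x z hz hxz ↦ ?_⟩
  · refine (volume_preimage_normAtAllPlaces_le K hVc.measurableSet
      (hVR.trans (closedBall_subset_closedBall (le_max_left R 0)))).trans ?_
    have hrw : ENNReal.ofReal (2 ^ nrRealPlaces K * (2 * Real.pi) ^ nrComplexPlaces K *
        ((max R 0) ^ nrComplexPlaces K * C) * ε) =
        2 ^ nrRealPlaces K * .ofReal (2 * Real.pi) ^ nrComplexPlaces K *
          (.ofReal (max R 0) ^ nrComplexPlaces K * .ofReal (C * ε)) := by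
      rw [← ENNReal.ofReal_pow (by positivity), ← ENNReal.ofReal_pow (by positivity),
        ← ENNReal.ofReal_ofNat 2, ← ENNReal.ofReal_pow zero_le_two,
        ← ENNReal.ofReal_mul (by positivity), ← ENNReal.ofReal_mul (by positivity),
        ← ENNReal.ofReal_mul (by positivity)]
      congr 1
      ring
    rw [hrw]
    gcongr
  · obtain ⟨y, hyI, hyw, hy⟩ := exists_cubeMap_eq_of_mem_frontier K hz
    exact hV _ y hyI hyw (hy ▸ (dist_normAtAllPlaces_le K x z).trans hxz)

end NumberField.mixedEmbedding.fundamentalCone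

section

open _root_.Ideal

namespace NumberField.Ideal

open Filter Asymptotics MeasureTheory Module
open NumberField.mixedEmbedding NumberField.mixedEmbedding.fundamentalCone NumberField.Units
open scoped nonZeroDivisors Pointwise

variable (K : Type*) [Field K] [NumberField K]

theorem card_norm_le_and_mk_eq {C : ClassGroup (𝓞 K)} {J : (Ideal (𝓞 K))⁰} (s : ℝ)
    (hJ : ClassGroup.mk0 J = C⁻¹) :
    Nat.card {I : (Ideal (𝓞 K))⁰ // absNorm (I : Ideal (𝓞 K)) ≤ s ∧ ClassGroup.mk0 I = C} =
      Nat.card {I : (Ideal (𝓞 K))⁰ // (J : Ideal (𝓞 K)) ∣ I ∧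
        Submodule.IsPrincipal (I : Ideal (𝓞 K)) ∧
        absNorm (I : Ideal (𝓞 K)) ≤ s * absNorm (J : Ideal (𝓞 K))} := by
  simp_rw [← nonZeroDivisors_dvd_iff_dvd_coe]
  refine Nat.card_congr ?_
  refine ((Equiv.dvd J).subtypeEquiv fun I ↦ ?_).trans
    (Equiv.subtypeSubtypeEquivSubtypeInter (fun I : (Ideal (𝓞 K))⁰ ↦ J ∣ I) _)
  rw [← ClassGroup.mk0_eq_one_iff (SetLike.coe_mem _)]
  simp_rw [Equiv.dvd_apply, Submonoid.coe_mul, ← Submonoid.mul_def, _root_.map_mul, hJ,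
    inv_mul_eq_one, Nat.cast_mul, mul_comm s, eq_comm, and_comm, and_congr_left_iff]
  exact fun _ ↦
    (mul_le_mul_iff_of_pos_left (Nat.cast_pos.mpr (absNorm_pos_of_nonZeroDivisors J))).symm

open scoped Classical in
theorem card_idealSet_norm_le (J : (Ideal (𝓞 K))⁰) {t : ℝ} (ht : 0 < t) :
    Nat.card {a : idealSet K J // mixedEmbedding.norm (a : mixedSpace K) ≤ t ^ finrank ℚ K} =
      Nat.card (t • normLeOne K ∩
        (idealLattice K (FractionalIdeal.mk0 K J) : Set (mixedSpace K)) : Set (mixedSpace K)) := by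
  refine Nat.card_congr ((Equiv.subtypeSubtypeEquivSubtypeInter _
    (mixedEmbedding.norm · ≤ t ^ finrank ℚ K)).trans (Equiv.subtypeEquivProp ?_))
  ext x
  have hmem : x ∈ t • normLeOne K ↔
      x ∈ fundamentalCone K ∧ mixedEmbedding.norm x ≤ t ^ finrank ℚ K := by
    rw [Set.mem_smul_set_iff_inv_smul_mem₀ ht.ne', mem_normLeOne,
      smul_mem_iff_mem (inv_ne_zero ht.ne'), mixedEmbedding.norm_smul, abs_of_pos (inv_pos.2 ht),
      inv_pow, inv_mul_le_one₀ (pow_pos ht _)]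
  rw [Set.mem_inter_iff, hmem]
  simp only [mem_idealSet, SetLike.mem_coe, mem_idealLattice, FractionalIdeal.coe_mk0]
  constructor
  · rintro ⟨⟨h1, y, hy, rfl⟩, h2⟩
    exact ⟨⟨h1, h2⟩, y, by simp [hy], rfl⟩
  · rintro ⟨⟨h1, h2⟩, y, hy, rfl⟩
    simp only [FractionalIdeal.mem_coeIdeal] at hy
    obtain ⟨z, hz, rfl⟩ := hy
    exact ⟨⟨h1, z, hz, rfl⟩, h2⟩

theorem exists_card_norm_le_and_mk_eq_isBigO (C : ClassGroup (𝓞 K)) :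
    ∃ κ : ℝ, (fun s : ℝ ↦ (Nat.card {I : (Ideal (𝓞 K))⁰ //
      absNorm (I : Ideal (𝓞 K)) ≤ s ∧ ClassGroup.mk0 I = C} : ℝ) - κ * s) =O[atTop]
        fun s ↦ s ^ (1 - (finrank ℚ K : ℝ)⁻¹) := by
  classical
  obtain ⟨J, hJ⟩ := ClassGroup.mk0_surjective C⁻¹
  obtain ⟨A, hA, hV⟩ := exists_volume_nhds_frontier_normLeOne_le K
  have hJ0 : 0 < (absNorm J.1 : ℝ) := Nat.cast_pos.mpr (absNorm_pos_of_nonZeroDivisors J)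
  set n := finrank ℚ K with hn
  have hn0 : n ≠ 0 := finrank_pos.ne'
  have hnR : (0 : ℝ) < n := by exact_mod_cast finrank_pos (R := ℚ) (M := K)
  set L := idealLattice K (FractionalIdeal.mk0 K J)
  have key := card_smul_inter_lattice_isBigO volume L (isBounded_normLeOne K)
    (measurableSet_normLeOne K) hA hV
  rw [mixedEmbedding.finrank] at key
  set β := volume.real (normLeOne K) / ZLattice.covolume L volume
  have htend : Tendsto (fun s : ℝ ↦ (s * absNorm J.1) ^ ((n : ℝ)⁻¹)) atTop atTop :=
    (tendsto_rpow_atTop (inv_pos.2 hnR)).comp (tendsto_id.atTop_mul_const hJ0)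
  have key2 := (key.comp_tendsto htend).const_mul_left ((torsionOrder K : ℝ)⁻¹)
  refine ⟨(torsionOrder K : ℝ)⁻¹ * (β * absNorm J.1), ?_⟩
  refine (key2.congr' ?_ EventuallyEq.rfl).trans ?_
  · filter_upwards [eventually_gt_atTop 0] with s hs
    have hpos : 0 < s * absNorm J.1 := mul_pos hs hJ0
    have hp : ((s * absNorm J.1) ^ ((n : ℝ)⁻¹)) ^ n = s * absNorm J.1 :=
      Real.rpow_inv_natCast_pow hpos.le hn0
    have h1 := card_isPrincipal_dvd_norm_le K J (s * absNorm J.1)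
    have h2 := card_idealSet_norm_le K J (Real.rpow_pos_of_pos hpos ((n : ℝ)⁻¹))
    rw [← hn, hp] at h2
    rw [card_norm_le_and_mk_eq K s hJ]
    simp only [Function.comp_apply]
    rw [hp, ← h2, ← h1, Nat.cast_mul]
    have := torsionOrder_ne_zero K
    field_simp
  · refine IsBigO.of_bound ((absNorm J.1 : ℝ) ^ (1 - (n : ℝ)⁻¹)) ?_
    filter_upwards [eventually_gt_atTop 0] with s hs
    have hpos : 0 < s * absNorm J.1 := mul_pos hs hJ0
    simp only [Function.comp_apply]
    rw [← Real.rpow_mul hpos.le, show (n : ℝ)⁻¹ * (n - 1) = 1 - (n : ℝ)⁻¹ by field_simp,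
      Real.mul_rpow hs.le hJ0.le, Real.norm_of_nonneg (by positivity),
      Real.norm_of_nonneg (by positivity), mul_comm]

/-- The number of nonzero ideals of norm at most `s` is `κ s + O(s ^ (1 - 1 / n))`. -/
theorem card_norm_le_isBigO :
    (fun s : ℝ ↦ (Nat.card {I : (Ideal (𝓞 K))⁰ // absNorm (I : Ideal (𝓞 K)) ≤ s} : ℝ) -
      dedekindZeta_residue K * s) =O[atTop] fun s ↦ s ^ (1 - (finrank ℚ K : ℝ)⁻¹) := by
  classical
  choose κ hκ using exists_card_norm_le_and_mk_eq_isBigO K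
  have hsum := IsBigO.sum (s := Finset.univ) fun C _ ↦ hκ C
  have hO : (fun s : ℝ ↦ (Nat.card {I : (Ideal (𝓞 K))⁰ // absNorm (I : Ideal (𝓞 K)) ≤ s} : ℝ) -
      (∑ C, κ C) * s) =O[atTop] fun s ↦ s ^ (1 - (finrank ℚ K : ℝ)⁻¹) := by
    refine hsum.congr' ?_ EventuallyEq.rfl
    filter_upwards [eventually_ge_atTop 0] with s hs
    have : Fintype {I : (Ideal (𝓞 K))⁰ // absNorm (I : Ideal (𝓞 K)) ≤ s} := by
      simp_rw [← Nat.le_floor_iff hs]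
      exact @Fintype.ofFinite _ (finite_setOfPred_absNorm_le₀ ⌊s⌋₊)
    let e := fun C : ClassGroup (𝓞 K) ↦ Equiv.subtypeSubtypeEquivSubtypeInter
      (fun I : (Ideal (𝓞 K))⁰ ↦ absNorm I.1 ≤ s) (fun I ↦ ClassGroup.mk0 I = C)
    rw [Finset.sum_apply, Finset.sum_sub_distrib, Finset.sum_mul]
    congr 1
    simp_rw [← Nat.card_congr (e _), Nat.card_eq_fintype_card, Fintype.subtype_card]
    rw [Fintype.card, Finset.card_eq_sum_card_fiberwise (f := fun I ↦ ClassGroup.mk0 I.1)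
      (t := Finset.univ) (fun _ _ ↦ Finset.mem_univ _), Nat.cast_sum]
  have hlim : Tendsto (fun s : ℝ ↦
      (Nat.card {I : (Ideal (𝓞 K))⁰ // absNorm (I : Ideal (𝓞 K)) ≤ s} : ℝ) / s) atTop
        (nhds (∑ C, κ C)) := by
    have hnR : (0 : ℝ) < finrank ℚ K := by exact_mod_cast finrank_pos (R := ℚ) (M := K)
    have hlo : (fun s : ℝ ↦ s ^ (1 - (finrank ℚ K : ℝ)⁻¹)) =o[atTop] fun s : ℝ ↦ s ^ (1 : ℝ) := by
      refine isLittleO_of_tendsto' ?_ ((tendsto_rpow_neg_atTop (inv_pos.2 hnR)).congr' ?_)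
      · filter_upwards [eventually_gt_atTop 0] with s hs h
        exact absurd h (Real.rpow_pos_of_pos hs 1).ne'
      · filter_upwards [eventually_gt_atTop 0] with s hs
        rw [← Real.rpow_sub hs]
        congr 1
        ring
    have ho := hO.trans_isLittleO hlo
    have := (ho.tendsto_div_nhds_zero).add_const (∑ C, κ C)
    rw [zero_add] at this
    refine this.congr' ?_
    filter_upwards [eventually_gt_atTop 0] with s hs
    rw [Real.rpow_one]
    field_simp
    ring
  rwa [tendsto_nhds_unique hlim (Ideal.tendsto_norm_le_div_atTop₀ K)] at hO

end NumberField.Ideal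

end

section

open Filter Asymptotics MeasureTheory Set Topology

/-- An `L`-series whose coefficients have partial sums `O(n ^ r)` continues analytically to the
half plane `r < re s`. -/
theorem exists_differentiableOn_eq_LSeries {f : ℕ → ℂ} {r : ℝ} (hr : 0 ≤ r) (hr1 : r ≤ 1)
    (hS : ∀ s : ℂ, 1 < s.re → LSeriesSummable f s)
    (hO : (fun n ↦ ∑ k ∈ Finset.Icc 1 n, f k) =O[atTop] fun n ↦ (n : ℝ) ^ r) :
    ∃ H : ℂ → ℂ, DifferentiableOn ℂ H {s | r < s.re} ∧ ∀ s : ℂ, 1 < s.re → LSeries f s = H s := by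
  set T : ℝ → ℂ := fun t ↦ ∑ k ∈ Finset.Icc 1 ⌊t⌋₊, f k with hT
  have hT0 : ∀ t < 1, T t = 0 := fun t ht ↦ by simp [hT, Nat.floor_eq_zero.2 ht]
  have hloc : LocallyIntegrableOn T (Ioi 0) := by
    have := locallyIntegrableOn_mul_sum_Icc (𝕜 := ℂ) f (m := 1) (a := 0) le_rfl (g := fun _ ↦ 1)
      (by exact (continuousOn_const.locallyIntegrableOn measurableSet_Ici))
    simp only [one_mul] at this
    exact this.mono_set Ioi_subset_Ici_self
  have htop : T =O[atTop] fun t ↦ t ^ (-(-r)) := by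
    rw [neg_neg]
    refine (hO.comp_tendsto (tendsto_nat_floor_atTop (α := ℝ))).trans ?_
    refine IsBigO.of_bound 1 ?_
    filter_upwards [eventually_ge_atTop 0] with t ht
    simp only [Function.comp_apply, one_mul]
    rw [Real.norm_of_nonneg (by positivity), Real.norm_of_nonneg (by positivity)]
    exact Real.rpow_le_rpow (by positivity) (Nat.floor_le ht) hr
  have hbot (b : ℝ) : T =O[𝓝[>] 0] fun t ↦ t ^ (-b) := by
    refine (isBigO_zero _ _).congr' ?_ EventuallyEq.rfl
    have : Iio (1 : ℝ) ∈ 𝓝[>] 0 := mem_nhdsWithin_of_mem_nhds (Iio_mem_nhds one_pos)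
    filter_upwards [this] with t ht
    rw [hT0 t ht]
  refine ⟨fun s ↦ s * mellin T (-s), fun s hs ↦ ?_, fun s hs ↦ ?_⟩
  · have := mellin_differentiableAt_of_isBigO_rpow (s := -s) (b := -s.re - 1) hloc htop
      (by simpa using hs) (hbot _) (by simp)
    exact (differentiableAt_id.mul (this.comp s differentiableAt_id.neg)).differentiableWithinAt
  · rw [LSeries_eq_mul_integral f hr (hr1.trans_lt hs) (hS s hs) hO]
    simp only [mellin]
    rw [← integral_indicator measurableSet_Ioi, ← integral_indicator measurableSet_Ioi]
    congr 1
    refine integral_congr_ae ?_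
    have : ∀ᵐ t : ℝ, t ≠ 1 := by simp [ae_iff]
    filter_upwards [this] with t ht
    rcases lt_or_gt_of_ne ht with h | h
    · rw [indicator_of_notMem (by simpa using h.le)]
      by_cases h0 : 0 < t
      · rw [indicator_of_mem (by simpa using h0), hT0 t h, smul_zero]
      · rw [indicator_of_notMem (by simpa using h0)]
    · rw [indicator_of_mem (by simpa using h), indicator_of_mem (by simpa using one_pos.trans h),
        smul_eq_mul, mul_comm]
      congr 2
      ring

end

namespace NumberField

section

open Filter Asymptotics Module Topology
open _root_.Ideal
open scoped nonZeroDivisors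

variable (K : Type*) [Field K] [NumberField K]

theorem sum_card_absNorm_eq (n : ℕ) :
    ∑ k ∈ Finset.Icc 1 n, Nat.card {I : Ideal (𝓞 K) // absNorm I = k} =
      Nat.card {I : (Ideal (𝓞 K))⁰ // absNorm (I : Ideal (𝓞 K)) ≤ n} := by
  rw [← add_left_inj 1, ← card_norm_le_eq_card_norm_le_add_one,
    show Finset.Icc 1 n = Finset.Ioc 0 n from Finset.Icc_succ_left_eq_Ioc _ _,
    show 1 = Nat.card {I : Ideal (𝓞 K) // absNorm I = 0} by simp [Ideal.absNorm_eq_zero_iff],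
    Finset.sum_Ioc_add_eq_sum_Icc (n.zero_le),
    ← Finset.card_preimage_eq_sum_card_image_eq (fun k _ ↦ finite_setOfPred_absNorm_eq k)]
  simp [Set.coe_eq_subtype]

theorem sum_card_absNorm_sub_isBigO :
    (fun n : ℕ ↦ ∑ k ∈ Finset.Icc 1 n, ((Nat.card {I : Ideal (𝓞 K) // absNorm I = k} : ℝ) -
      dedekindZeta_residue K)) =O[atTop] fun n ↦ (n : ℝ) ^ (1 - (finrank ℚ K : ℝ)⁻¹) := by
  have := (Ideal.card_norm_le_isBigO K).comp_tendsto (tendsto_natCast_atTop_atTop (R := ℝ))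
  refine this.congr_left fun n ↦ ?_
  simp only [Function.comp_apply, Nat.cast_le]
  rw [← sum_card_absNorm_eq, Finset.sum_sub_distrib]
  simp [mul_comm]

theorem one_sub_inv_finrank_nonneg : 0 ≤ 1 - (finrank ℚ K : ℝ)⁻¹ := by
  have : (1 : ℝ) ≤ finrank ℚ K := by exact_mod_cast finrank_pos (R := ℚ) (M := K)
  linarith [inv_le_one_of_one_le₀ this]

theorem one_sub_inv_finrank_lt_one : 1 - (finrank ℚ K : ℝ)⁻¹ < 1 := by
  have : (0 : ℝ) < finrank ℚ K := by exact_mod_cast finrank_pos (R := ℚ) (M := K)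
  linarith [inv_pos.2 this]

theorem LSeriesSummable_card_absNorm {s : ℂ} (hs : 1 < s.re) :
    LSeriesSummable (fun n ↦ (Nat.card {I : Ideal (𝓞 K) // absNorm I = n} : ℂ)) s := by
  have hlim := (Ideal.tendsto_norm_le_div_atTop₀ K).comp (tendsto_natCast_atTop_atTop (R := ℝ))
  have hO : (fun n : ℕ ↦ ∑ k ∈ Finset.Icc 1 n, (Nat.card {I : Ideal (𝓞 K) // absNorm I = k} : ℝ))
      =O[atTop] fun n ↦ (n : ℝ) ^ (1 : ℝ) := by
    have h1 := (hlim.isBigO_one ℝ).mul (isBigO_refl (fun n : ℕ ↦ (n : ℝ)) atTop)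
    refine h1.congr' ?_ ?_
    · filter_upwards [eventually_ne_atTop 0] with n hn
      simp only [Function.comp_apply, Nat.cast_le]
      rw [← sum_card_absNorm_eq, Nat.cast_sum]
      field_simp
    · filter_upwards with n
      simp
  simpa using LSeriesSummable_of_sum_norm_bigO_and_nonneg hO (fun _ ↦ Nat.cast_nonneg _)
    zero_le_one hs

/-- The function `(s - 1) * ζ_K(s)` extends analytically to a half plane containing `re s = 1`, with
nonzero value at `1`. -/
theorem exists_differentiableOn_sub_one_mul_dedekindZeta :
    ∃ Z : ℂ → ℂ, DifferentiableOn ℂ Z {s | 1 - (finrank ℚ K : ℝ)⁻¹ < s.re} ∧ Z 1 ≠ 0 ∧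
      ∀ s : ℂ, 1 < s.re → (s - 1) * dedekindZeta K s = Z s := by
  set κ := dedekindZeta_residue K
  have hcoe : ∀ n : ℕ, ((Nat.card {I : Ideal (𝓞 K) // absNorm I = n} : ℂ) - κ) =
    (((Nat.card {I : Ideal (𝓞 K) // absNorm I = n} : ℝ) - κ : ℝ) : ℂ) := fun n ↦ by push_cast; rfl
  have hone : ∀ s : ℂ, 1 < s.re → LSeriesSummable (fun _ ↦ (κ : ℂ)) s := fun s hs ↦ by
    have := (LSeriesSummable_one_iff.2 hs).smul (κ : ℂ)
    convert this using 1
    ext; simp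
  obtain ⟨H, hH, hH'⟩ := exists_differentiableOn_eq_LSeries
    (f := fun n ↦ (Nat.card {I : Ideal (𝓞 K) // absNorm I = n} : ℂ) - κ)
    (one_sub_inv_finrank_nonneg K) (one_sub_inv_finrank_lt_one K).le
    (fun s hs ↦ (LSeriesSummable_card_absNorm K hs).sub (hone s hs)) (by
      refine IsBigO.of_norm_left ?_
      refine (sum_card_absNorm_sub_isBigO K).norm_left.congr_left fun n ↦ ?_
      simp_rw [hcoe]
      rw [← Complex.ofReal_sum, Complex.norm_real])
  refine ⟨fun s ↦ κ * riemannZeta₁ s + (s - 1) * H s,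
    ?_, ?_, fun s hs ↦ ?_⟩
  · exact ((differentiable_riemannZeta₁.const_mul _).differentiableOn).add
      ((differentiable_id.sub_const 1).differentiableOn.mul hH)
  · simpa using dedekindZeta_residue_ne_zero K
  · have hs1 : s ≠ 1 := by rintro rfl; simp at hs
    have h1 : LSeries (fun _ ↦ (κ : ℂ)) s = κ * riemannZeta s := by
      rw [← LSeries_one_eq_riemannZeta hs, ← LSeries_smul]
      congr 1
      ext; simp
    have h2 := LSeries_sub (LSeriesSummable_card_absNorm K hs) (hone s hs)
    have h3 : LSeries (fun n ↦ (Nat.card {I : Ideal (𝓞 K) // absNorm I = n} : ℂ) - κ) s =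
      dedekindZeta K s - κ * riemannZeta s := by rw [← h1]; exact h2
    simp only
    rw [← hH' s hs, h3, riemannZeta_eq_inv_sub_mul hs1]
    field_simp [sub_ne_zero.2 hs1]
    ring

end

end NumberField

section

variable {ι : Type*} {φ : ι → ℕ}

theorem summable_norm_comp_iff (hφ : ∀ n, Finite {i // φ i = n}) (w : ℕ → ℂ) :
    Summable (fun i ↦ ‖w (φ i)‖) ↔ Summable fun n ↦ (Nat.card {i // φ i = n} : ℝ) * ‖w n‖ := by
  rw [← (Equiv.sigmaFiberEquiv φ).summable_iff]
  have h (n : ℕ) (i : {i // φ i = n}) :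
      ((fun i ↦ ‖w (φ i)‖) ∘ (Equiv.sigmaFiberEquiv φ)) ⟨n, i⟩ = ‖w n‖ := by
    simp [Equiv.sigmaFiberEquiv, i.2]
  rw [summable_sigma_of_nonneg (fun _ ↦ by exact norm_nonneg _)]
  simp_rw [h, tsum_const, nsmul_eq_mul]
  exact and_iff_right fun n ↦ Summable.of_finite

theorem tsum_comp_eq {w : ℕ → ℂ}
    (hs : Summable fun i ↦ ‖w (φ i)‖) :
    ∑' i, w (φ i) = ∑' n, (Nat.card {i // φ i = n} : ℂ) * w n := by
  rw [← (Equiv.sigmaFiberEquiv φ).tsum_eq, Summable.tsum_sigma]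
  · have h (n : ℕ) (i : {i // φ i = n}) :
        w (φ ((Equiv.sigmaFiberEquiv φ) ⟨n, i⟩)) = w n := by
      simp [Equiv.sigmaFiberEquiv, i.2]
    simp_rw [h, tsum_const, nsmul_eq_mul]
  · exact (Equiv.sigmaFiberEquiv φ).summable_iff.2 hs.of_norm

end

namespace NumberField

section

open Filter Topology
open _root_.Ideal IsDedekindDomain

variable (K : Type*) [Field K] [NumberField K]

/-- The absolute norm of a prime ideal of the ring of integers. -/
noncomputable def primeNorm (v : HeightOneSpectrum (𝓞 K)) : ℕ := absNorm v.asIdeal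

variable {K}

theorem summable_norm_absNorm_cpow {s : ℂ} (hs : 1 < s.re) :
    Summable fun I : Ideal (𝓞 K) ↦ ‖(absNorm I : ℂ) ^ (-s)‖ := by
  have hs0 : s ≠ 0 := by rintro rfl; simp at hs; linarith
  refine (summable_norm_comp_iff (φ := (absNorm : Ideal (𝓞 K) → ℕ))
    (fun n ↦ finite_setOfPred_absNorm_eq n) fun n ↦ (n : ℂ) ^ (-s)).2 ?_
  refine (LSeriesSummable_card_absNorm K hs).norm.congr fun n ↦ ?_
  rcases eq_or_ne n 0 with rfl | hn
  · simp [hs0]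
  · rw [LSeries.term_of_ne_zero hn, Complex.cpow_neg, norm_div, norm_inv, div_eq_mul_inv,
      Complex.norm_natCast]

theorem tsum_absNorm_cpow {s : ℂ} (hs : 1 < s.re) :
    ∑' I : Ideal (𝓞 K), (absNorm I : ℂ) ^ (-s) = dedekindZeta K s := by
  have hs0 : s ≠ 0 := by rintro rfl; simp at hs; linarith
  rw [tsum_comp_eq (φ := (absNorm : Ideal (𝓞 K) → ℕ)) (w := fun n ↦ (n : ℂ) ^ (-s))
    (summable_norm_absNorm_cpow hs)]
  refine tsum_congr fun n ↦ ?_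
  rcases eq_or_ne n 0 with rfl | hn
  · simp [hs0]
  · rw [LSeries.term_of_ne_zero hn, Complex.cpow_neg, div_eq_mul_inv]

theorem tsum_absNorm_cpow_coprime {s : ℂ} (hs : 1 < s.re)
    (T : Finset (HeightOneSpectrum (𝓞 K))) :
    ∑' I : {I : Ideal (𝓞 K) | ∀ v ∈ T, ¬ v.asIdeal ∣ I}, (absNorm (I : Ideal (𝓞 K)) : ℂ) ^ (-s) =
      (∏ v ∈ T, (1 - (primeNorm K v : ℂ) ^ (-s))) * dedekindZeta K s := by
  classical
  induction T using Finset.induction_on with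
  | empty =>
    rw [Finset.prod_empty, one_mul, ← tsum_absNorm_cpow hs,
      tsum_subtype _ (fun I : Ideal (𝓞 K) ↦ (absNorm I : ℂ) ^ (-s))]
    exact tsum_congr fun I ↦ Set.indicator_of_mem (by simp) _
  | insert v T hv ih =>
    rw [Finset.prod_insert hv, mul_assoc, ← ih]
    set A : Set (Ideal (𝓞 K)) := {I | ∀ v ∈ T, ¬ v.asIdeal ∣ I}
    have hsum : Summable fun I : Ideal (𝓞 K) ↦ (absNorm I : ℂ) ^ (-s) :=
      (summable_norm_absNorm_cpow hs).of_norm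
    have hA : A = {I | ∀ w ∈ insert v T, ¬ w.asIdeal ∣ I} ∪ (v.asIdeal * ·) '' A := by
      ext I
      simp only [A, Set.mem_union, Set.mem_ofPred_eq, Finset.mem_insert, forall_eq_or_imp,
        Set.mem_image]
      constructor
      · intro h
        by_cases hvI : v.asIdeal ∣ I
        · obtain ⟨J, rfl⟩ := hvI
          exact Or.inr ⟨J, fun w hw hwJ ↦ h w hw (hwJ.mul_left _), rfl⟩
        · exact Or.inl ⟨hvI, h⟩
      · rintro (⟨-, h⟩ | ⟨J, hJ, rfl⟩)
        · exact h
        · intro w hw hdvd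
          rcases w.prime.dvd_or_dvd hdvd with h | h
          · refine hv ?_
            have : w = v := by
              ext1
              exact ((associated_iff_eq).1 (w.prime.associated_of_dvd v.prime h))
            exact this ▸ hw
          · exact hJ w hw h
    have hdisj : Disjoint {I : Ideal (𝓞 K) | ∀ w ∈ insert v T, ¬ w.asIdeal ∣ I}
        ((v.asIdeal * ·) '' A) := by
      rw [Set.disjoint_left]
      rintro _ h ⟨J, -, rfl⟩
      exact h v (Finset.mem_insert_self _ _) (dvd_mul_right _ _)
    have hinj : Function.Injective (fun J : Ideal (𝓞 K) ↦ v.asIdeal * J) :=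
      mul_right_injective₀ v.ne_bot
    have h1 : ∑' I : A, (absNorm (I : Ideal (𝓞 K)) : ℂ) ^ (-s) =
        ∑' I : {I : Ideal (𝓞 K) | ∀ w ∈ insert v T, ¬ w.asIdeal ∣ I},
          (absNorm (I : Ideal (𝓞 K)) : ℂ) ^ (-s) +
        ∑' I : ((v.asIdeal * ·) '' A), (absNorm (I : Ideal (𝓞 K)) : ℂ) ^ (-s) := by
      conv_lhs => rw [hA]
      exact (hsum.subtype _).tsum_union_disjoint (f := fun I : Ideal (𝓞 K) ↦ (absNorm I : ℂ) ^ (-s))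
        hdisj (hsum.subtype _)
    have h2 : ∑' I : ((v.asIdeal * ·) '' A), (absNorm (I : Ideal (𝓞 K)) : ℂ) ^ (-s) =
        (primeNorm K v : ℂ) ^ (-s) * ∑' I : A, (absNorm (I : Ideal (𝓞 K)) : ℂ) ^ (-s) := by
      rw [tsum_image (f := fun I : Ideal (𝓞 K) ↦ (absNorm I : ℂ) ^ (-s)) hinj.injOn, ← tsum_mul_left]
      refine tsum_congr fun I ↦ ?_
      rw [_root_.map_mul, Nat.cast_mul, Complex.natCast_mul_natCast_cpow, primeNorm]
    rw [h2] at h1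
    linear_combination -h1

theorem two_le_primeNorm (v : HeightOneSpectrum (𝓞 K)) : 2 ≤ primeNorm K v := by
  have h0 : absNorm v.asIdeal ≠ 0 := absNorm_eq_zero_iff.not.2 v.ne_bot
  have h1 : absNorm v.asIdeal ≠ 1 := absNorm_eq_one_iff.not.2 v.isPrime.ne_top
  unfold primeNorm
  omega

theorem norm_primeNorm_cpow_lt_one {s : ℂ} (hs : 0 < s.re) (v : HeightOneSpectrum (𝓞 K)) :
    ‖(primeNorm K v : ℂ) ^ (-s)‖ < 1 := by
  have := two_le_primeNorm v
  rw [Complex.norm_natCast_cpow_of_pos (by omega), Complex.neg_re]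
  exact Real.rpow_lt_one_of_one_lt_of_neg (by exact_mod_cast this) (by linarith)

theorem summable_norm_primeNorm_cpow {s : ℂ} (hs : 1 < s.re) :
    Summable fun v : HeightOneSpectrum (𝓞 K) ↦ ‖(primeNorm K v : ℂ) ^ (-s)‖ :=
  (summable_norm_absNorm_cpow hs).comp_injective
    (i := fun v : HeightOneSpectrum (𝓞 K) ↦ v.asIdeal) fun _ _ h ↦ HeightOneSpectrum.ext h

theorem summable_log_one_sub_primeNorm_cpow {s : ℂ} (hs : 1 < s.re) :
    Summable fun v : HeightOneSpectrum (𝓞 K) ↦ Complex.log (1 - (primeNorm K v : ℂ) ^ (-s)) := by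
  have := (summable_norm_primeNorm_cpow (K := K) hs).of_norm.neg
  simpa [sub_eq_add_neg] using Complex.summable_log_one_add_of_summable this

/-- The Euler product of the Dedekind zeta function. -/
theorem dedekindZeta_eq_exp_tsum {s : ℂ} (hs : 1 < s.re) :
    dedekindZeta K s = Complex.exp
      (∑' v : HeightOneSpectrum (𝓞 K), -Complex.log (1 - (primeNorm K v : ℂ) ^ (-s))) := by
  classical
  have hlog := summable_log_one_sub_primeNorm_cpow (K := K) hs
  have hexp : Tendsto (fun T : Finset (HeightOneSpectrum (𝓞 K)) ↦
      (∏ v ∈ T, (1 - (primeNorm K v : ℂ) ^ (-s))) * dedekindZeta K s) atTop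
      (𝓝 (Complex.exp (∑' v : HeightOneSpectrum (𝓞 K),
        Complex.log (1 - (primeNorm K v : ℂ) ^ (-s))) * dedekindZeta K s)) := by
    refine Tendsto.mul_const _ ?_
    refine ((Complex.continuous_exp.tendsto _).comp hlog.hasSum).congr fun T ↦ ?_
    simp only [Function.comp_apply]
    rw [Complex.exp_sum]
    refine Finset.prod_congr rfl fun v _ ↦ Complex.exp_log fun h ↦ ?_
    have := norm_primeNorm_cpow_lt_one (s := s) (by linarith) v
    rw [← sub_eq_zero.1 h] at this
    simp at this
  have hone : Tendsto (fun T : Finset (HeightOneSpectrum (𝓞 K)) ↦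
      (∏ v ∈ T, (1 - (primeNorm K v : ℂ) ^ (-s))) * dedekindZeta K s) atTop (𝓝 1) := by
    simp_rw [← tsum_absNorm_cpow_coprime hs]
    have hs0 : s ≠ 0 := by rintro rfl; simp at hs; linarith
    have hlim : ∑' I : Ideal (𝓞 K), (if I = ⊤ then (1 : ℂ) else 0) = 1 := by
      rw [tsum_ite_eq]
    rw [← hlim]
    simp_rw [tsum_subtype _ (fun I : Ideal (𝓞 K) ↦ (absNorm I : ℂ) ^ (-s))]
    refine tendsto_tsum_of_dominated_convergence (summable_norm_absNorm_cpow (K := K) hs)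
      (fun I ↦ ?_) (.of_forall fun T I ↦ norm_indicator_le_norm_self _ _)
    refine tendsto_const_nhds.congr' ?_
    by_cases hI : I = ⊤
    · filter_upwards with T
      rw [if_pos hI, Set.indicator_of_mem]
      · simp [hI]
      · intro v _ hv
        exact v.isPrime.ne_top (top_le_iff.1 (hI ▸ Ideal.le_of_dvd hv))
    · obtain ⟨M, hM, hIM⟩ := Ideal.exists_le_maximal I hI
      by_cases hM0 : M = ⊥
      · filter_upwards with T
        have : I = ⊥ := le_bot_iff.1 (hM0 ▸ hIM)
        rw [if_neg hI]
        symm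
        rw [Set.indicator_apply_eq_zero]
        intro _
        simp [this, hs0]
      · filter_upwards [eventually_ge_atTop {⟨M, hM.isPrime, hM0⟩}] with T hT
        rw [if_neg hI, Set.indicator_of_notMem]
        intro h
        exact h _ (hT (Finset.mem_singleton_self _)) (Ideal.dvd_iff_le.2 hIM)
  have := tendsto_nhds_unique hexp hone
  rw [tsum_neg, Complex.exp_neg]
  exact eq_inv_of_mul_eq_one_right this

end

end NumberField

namespace NumberField

section

open Filter Topology Module
open _root_.Ideal IsDedekindDomain

variable (K : Type*) [Field K] [NumberField K]

/-- The rational prime below a prime ideal of the ring of integers. -/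
noncomputable def primeBelow (v : HeightOneSpectrum (𝓞 K)) : ℕ := absNorm (under ℤ v.asIdeal)

/-- The number of prime ideals of norm `n` if `n` is prime, and zero otherwise. -/
noncomputable def degreeOneCount (n : ℕ) : ℕ :=
  if n.Prime then Nat.card {v : HeightOneSpectrum (𝓞 K) // primeNorm K v = n} else 0

variable {K}

theorem prime_primeBelow (v : HeightOneSpectrum (𝓞 K)) : (primeBelow K v).Prime := by
  have := v.isPrime
  have : NeZero v.asIdeal := ⟨v.ne_bot⟩
  exact Nat.absNorm_under_prime v.asIdeal

theorem exists_primeNorm_eq_pow (v : HeightOneSpectrum (𝓞 K)) :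
    ∃ f, f ≠ 0 ∧ primeNorm K v = primeBelow K v ^ f := by
  have : v.asIdeal.LiesOver (span {(primeBelow K v : ℤ)}) := Int.liesOver_span_absNorm v.asIdeal
  have h := absNorm_eq_pow_inertiaDeg' v.asIdeal (prime_primeBelow v)
  refine ⟨_, fun h0 ↦ ?_, h⟩
  have h2 := two_le_primeNorm v
  rw [primeNorm, h, h0] at h2
  simp at h2

theorem primeBelow_le_primeNorm (v : HeightOneSpectrum (𝓞 K)) :
    primeBelow K v ≤ primeNorm K v := by
  obtain ⟨f, hf, h⟩ := exists_primeNorm_eq_pow v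
  rw [h]
  exact Nat.le_self_pow hf _

theorem sq_primeBelow_le_primeNorm {v : HeightOneSpectrum (𝓞 K)} (hv : ¬ (primeNorm K v).Prime) :
    primeBelow K v ^ 2 ≤ primeNorm K v := by
  obtain ⟨f, hf, h⟩ := exists_primeNorm_eq_pow v
  rw [h]
  refine Nat.pow_le_pow_right (prime_primeBelow v).pos ?_
  have : f ≠ 1 := by
    rintro rfl
    rw [h, pow_one] at hv
    exact hv (prime_primeBelow v)
  omega

theorem primeBelow_eq_of_primeNorm_eq {v : HeightOneSpectrum (𝓞 K)} {p : ℕ} (hp : p.Prime)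
    (hv : primeNorm K v = p) : primeBelow K v = p := by
  obtain ⟨f, hf, h⟩ := exists_primeNorm_eq_pow v
  rw [hv] at h
  exact ((Nat.prime_dvd_prime_iff_eq (prime_primeBelow v) hp).1 (h ▸ dvd_pow_self _ hf))

theorem finite_primeBelow_eq_and_card_le (p : ℕ) :
    Finite {v : HeightOneSpectrum (𝓞 K) // primeBelow K v = p} ∧
    Nat.card {v : HeightOneSpectrum (𝓞 K) // primeBelow K v = p} ≤ finrank ℚ K := by
  by_cases hp : p.Prime
  · have hp0 : span {(p : ℤ)} ≠ ⊥ := by simpa using hp.ne_zero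
    have hmax : (span {(p : ℤ)}).IsMaximal :=
      IsPrime.isMaximal ((span_singleton_prime (by exact_mod_cast hp.ne_zero)).2
        (Nat.prime_iff_prime_int.1 hp)) hp0
    let i : {v : HeightOneSpectrum (𝓞 K) // primeBelow K v = p} →
        IsDedekindDomain.primesOverFinset (span {(p : ℤ)}) (𝓞 K) := fun v ↦ ⟨v.1.asIdeal, by
      rw [IsDedekindDomain.mem_primesOverFinset_iff hp0]
      refine ⟨v.1.isPrime, ?_⟩
      have := Int.liesOver_span_absNorm v.1.asIdeal
      have h := v.2
      rw [primeBelow] at h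
      rwa [h] at this⟩
    have hi : Function.Injective i := fun v w h ↦
      Subtype.ext (HeightOneSpectrum.ext (Subtype.mk.inj h))
    refine ⟨Finite.of_injective i hi, ?_⟩
    refine (Nat.card_le_card_of_injective i hi).trans ?_
    rw [Nat.card_eq_fintype_card, Fintype.card_coe]
    exact card_primesOverFinset_le_finrank (𝓞 K) ℚ K hp0
  · have : IsEmpty {v : HeightOneSpectrum (𝓞 K) // primeBelow K v = p} :=
      ⟨fun v ↦ hp (v.2 ▸ prime_primeBelow v.1)⟩
    exact ⟨inferInstance, by simp⟩

theorem degreeOneCount_le (n : ℕ) : degreeOneCount K n ≤ finrank ℚ K := by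
  unfold degreeOneCount
  split_ifs with hn
  · have := (finite_primeBelow_eq_and_card_le (K := K) n).1
    refine le_trans ?_ (finite_primeBelow_eq_and_card_le (K := K) n).2
    exact Nat.card_le_card_of_injective (fun v ↦ ⟨v.1, primeBelow_eq_of_primeNorm_eq hn v.2⟩)
      fun v w h ↦ Subtype.ext (Subtype.mk.inj h)
  · exact Nat.zero_le _

theorem summable_primeBelow_rpow {r : ℝ} (hr : 1 < r) :
    Summable fun v : HeightOneSpectrum (𝓞 K) ↦ (primeBelow K v : ℝ) ^ (-r) := by
  have h : ∀ v : HeightOneSpectrum (𝓞 K), (primeBelow K v : ℝ) ^ (-r) =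
      ‖(((primeBelow K v : ℝ) ^ (-r) : ℝ) : ℂ)‖ := fun v ↦ by
    rw [Complex.norm_real, Real.norm_of_nonneg (by positivity)]
  refine (summable_congr h).2 <| (summable_norm_comp_iff (φ := primeBelow K)
    (fun n ↦ (finite_primeBelow_eq_and_card_le n).1) fun n ↦ (((n : ℝ) ^ (-r) : ℝ) : ℂ)).2 ?_
  refine Summable.of_nonneg_of_le (fun n ↦ by positivity) (fun n ↦ ?_)
    ((Real.summable_nat_rpow.2 (show -r < -1 by linarith)).mul_left (finrank ℚ K : ℝ))
  rw [Complex.norm_real, Real.norm_of_nonneg (by positivity)]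
  gcongr
  exact (finite_primeBelow_eq_and_card_le n).2

open scoped Classical in
/-- The difference between the logarithm of the Euler factor and its degree one part. -/
noncomputable def eulerRemainder (s : ℂ) (v : HeightOneSpectrum (𝓞 K)) : ℂ :=
  -Complex.log (1 - (primeNorm K v : ℂ) ^ (-s)) -
    if (primeNorm K v).Prime then (primeNorm K v : ℂ) ^ (-s) else 0

theorem norm_eulerRemainder_le {s : ℂ} (hs : 3 / 4 < s.re) (v : HeightOneSpectrum (𝓞 K)) :
    ‖eulerRemainder s v‖ ≤ 4 * (primeBelow K v : ℝ) ^ (-(3 / 2) : ℝ) := by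
  have hp := prime_primeBelow v
  have hp0 : (0 : ℝ) < primeBelow K v := by exact_mod_cast hp.pos
  have hp1 : (1 : ℝ) ≤ primeBelow K v := by exact_mod_cast hp.one_le
  have hN := two_le_primeNorm v
  have hN0 : (0 : ℝ) < primeNorm K v := by exact_mod_cast (by omega : 0 < primeNorm K v)
  have hN1 : (1 : ℝ) ≤ primeNorm K v := by exact_mod_cast (by omega : 1 ≤ primeNorm K v)
  set z := (primeNorm K v : ℂ) ^ (-s) with hz
  have hznorm : ‖z‖ = (primeNorm K v : ℝ) ^ (-s.re) := by
    rw [hz, Complex.norm_natCast_cpow_of_pos (by omega), Complex.neg_re]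
  have hzle : ‖z‖ ≤ (primeNorm K v : ℝ) ^ (-(3 / 4) : ℝ) := by
    rw [hznorm]
    exact Real.rpow_le_rpow_of_exponent_le hN1 (by linarith)
  have hz23 : ‖z‖ ≤ 2 / 3 := by
    refine hzle.trans ?_
    have h1 : (primeNorm K v : ℝ) ^ (-(3 / 4) : ℝ) ≤ (2 : ℝ) ^ (-(3 / 4) : ℝ) :=
      Real.rpow_le_rpow_of_nonpos two_pos (by exact_mod_cast hN) (by norm_num)
    refine h1.trans ?_
    rw [show (-(3 / 4) : ℝ) = -3 * (1 / 4 : ℝ) by norm_num, Real.rpow_mul zero_le_two]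
    rw [← Real.rpow_le_rpow_iff (z := 4) (by positivity) (by norm_num) (by norm_num),
      ← Real.rpow_mul (by positivity)]
    norm_num
  have hzlt : ‖-z‖ < 1 := by rw [norm_neg]; linarith
  have hsq : ‖z‖ ^ 2 ≤ (primeBelow K v : ℝ) ^ (-(3 / 2) : ℝ) := by
    calc ‖z‖ ^ 2 ≤ ((primeNorm K v : ℝ) ^ (-(3 / 4) : ℝ)) ^ 2 := by gcongr
      _ = (primeNorm K v : ℝ) ^ (-(3 / 2) : ℝ) := by
        rw [← Real.rpow_natCast, ← Real.rpow_mul hN0.le]; norm_num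
      _ ≤ _ := Real.rpow_le_rpow_of_nonpos hp0 (by exact_mod_cast primeBelow_le_primeNorm v)
        (by norm_num)
  have hlog := Complex.norm_log_one_add_sub_self_le hzlt
  rw [norm_neg] at hlog
  have hinv : (1 - ‖z‖)⁻¹ ≤ 3 := by
    rw [inv_le_comm₀ (by linarith) (by norm_num)]
    linarith
  have hlog2 : ‖Complex.log (1 + -z) - -z‖ ≤ 2 * ‖z‖ ^ 2 := by
    refine hlog.trans ?_
    nlinarith [sq_nonneg ‖z‖]
  unfold eulerRemainder
  rw [← hz]
  split_ifs with hprime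
  · have : -Complex.log (1 - z) - z = -(Complex.log (1 + -z) - -z) := by
      rw [← sub_eq_add_neg]; ring
    rw [this, norm_neg]
    linarith [Real.rpow_nonneg hp0.le (-(3 / 2))]
  · have h1 : ‖z‖ ≤ (primeBelow K v : ℝ) ^ (-(3 / 2) : ℝ) := by
      refine hzle.trans ?_
      calc (primeNorm K v : ℝ) ^ (-(3 / 4) : ℝ) ≤ ((primeBelow K v : ℝ) ^ 2) ^ (-(3 / 4) : ℝ) :=
            Real.rpow_le_rpow_of_nonpos (by positivity)
              (by exact_mod_cast sq_primeBelow_le_primeNorm hprime) (by norm_num)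
        _ = _ := by rw [← Real.rpow_natCast, ← Real.rpow_mul hp0.le]; norm_num
    have : -Complex.log (1 - z) - 0 = -(Complex.log (1 + -z) - -z) + z := by
      rw [← sub_eq_add_neg]; ring
    rw [this]
    refine (norm_add_le _ _).trans ?_
    rw [norm_neg]
    linarith [Real.rpow_nonneg hp0.le (-(3 / 2))]

theorem differentiableOn_tsum_eulerRemainder :
    DifferentiableOn ℂ (fun s ↦ ∑' v : HeightOneSpectrum (𝓞 K), eulerRemainder s v)
      {s | 3 / 4 < s.re} := by
  refine Complex.differentiableOn_tsum_of_summable_norm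
    ((summable_primeBelow_rpow (K := K) (r := 3 / 2) (by norm_num)).mul_left 4) (fun v s hs ↦ ?_)
    (isOpen_lt continuous_const Complex.continuous_re) fun v s hs ↦ norm_eulerRemainder_le hs v
  have hs' : 3 / 4 < s.re := hs
  have hN := two_le_primeNorm v
  have hd : DifferentiableAt ℂ (fun s : ℂ ↦ (primeNorm K v : ℂ) ^ (-s)) s :=
    differentiableAt_id.neg.const_cpow (Or.inl (by exact_mod_cast (by omega : primeNorm K v ≠ 0)))
  have hlog : DifferentiableAt ℂ (fun s : ℂ ↦ -Complex.log (1 - (primeNorm K v : ℂ) ^ (-s))) s := by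
    refine ((hd.const_sub 1).clog ?_).neg
    rw [sub_eq_add_neg]
    refine Complex.mem_slitPlane_of_norm_lt_one ?_
    rw [norm_neg]
    exact norm_primeNorm_cpow_lt_one (by linarith) v
  refine DifferentiableAt.differentiableWithinAt ?_
  unfold eulerRemainder
  split_ifs
  · exact hlog.sub hd
  · exact hlog.sub (differentiableAt_const 0)

theorem LSeriesSummable_degreeOneCount {s : ℂ} (hs : 1 < s.re) :
    LSeriesSummable (fun n ↦ (degreeOneCount K n : ℂ)) s := by
  refine LSeriesSummable_of_bounded_of_one_lt_re (m := finrank ℚ K) (fun n _ ↦ ?_) hs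
  rw [Complex.norm_natCast]
  exact_mod_cast degreeOneCount_le n

theorem dedekindZeta_eq_exp_LSeries_add {s : ℂ} (hs : 1 < s.re) :
    dedekindZeta K s = Complex.exp (LSeries (fun n ↦ (degreeOneCount K n : ℂ)) s +
      ∑' v : HeightOneSpectrum (𝓞 K), eulerRemainder s v) := by
  classical
  have hs0 : s ≠ 0 := by rintro rfl; simp at hs; linarith
  have hsum : Summable fun v : HeightOneSpectrum (𝓞 K) ↦
      ‖(fun n : ℕ ↦ if n.Prime then (n : ℂ) ^ (-s) else 0) (primeNorm K v)‖ := by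
    refine Summable.of_nonneg_of_le (fun _ ↦ norm_nonneg _) (fun v ↦ ?_)
      (summable_norm_primeNorm_cpow hs)
    simp only
    split_ifs <;> simp
  have hL : LSeries (fun n ↦ (degreeOneCount K n : ℂ)) s = ∑' v : HeightOneSpectrum (𝓞 K),
      if (primeNorm K v).Prime then (primeNorm K v : ℂ) ^ (-s) else 0 := by
    refine Eq.trans (tsum_congr fun n ↦ ?_) (tsum_comp_eq (φ := primeNorm K)
      (w := fun n : ℕ ↦ if n.Prime then (n : ℂ) ^ (-s) else 0) hsum).symm
    rcases eq_or_ne n 0 with rfl | hn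
    · simp [Nat.not_prime_zero]
    · rw [LSeries.term_of_ne_zero hn, degreeOneCount]
      split_ifs with h
      · rw [Complex.cpow_neg, div_eq_mul_inv]
      · simp
  rw [dedekindZeta_eq_exp_tsum hs, hL, ← Summable.tsum_add hsum.of_norm]
  · congr 1
    refine tsum_congr fun v ↦ ?_
    rw [eulerRemainder]
    ring
  · exact (summable_log_one_sub_primeNorm_cpow hs).neg.sub hsum.of_norm

end

end NumberField

section

open Filter Topology Complex LSeries

variable {c : ℕ → ℝ}

theorem three_four_one_re_LSeries_nonneg (hc : ∀ n, 0 ≤ c n)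
    (hsum : ∀ s : ℂ, 1 < s.re → LSeriesSummable (fun n ↦ (c n : ℂ)) s) {x : ℝ} (hx : 1 < x)
    (y : ℝ) :
    0 ≤ 3 * (LSeries (fun n ↦ (c n : ℂ)) x).re + 4 * (LSeries (fun n ↦ (c n : ℂ)) (x + y * I)).re +
      (LSeries (fun n ↦ (c n : ℂ)) (x + 2 * y * I)).re := by
  have h0 := hasSum_re (hsum (x : ℂ) (by simpa)).hasSum
  have h1 := hasSum_re (hsum (x + y * I) (by simpa)).hasSum
  have h2 := hasSum_re (hsum (x + 2 * y * I) (by simpa)).hasSum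
  have h := ((h0.mul_left 3).add (h1.mul_left 4)).add h2
  refine h.nonneg fun n ↦ ?_
  rcases eq_or_ne n 0 with rfl | hn
  · simp
  have hnC : (n : ℂ) ≠ 0 := by exact_mod_cast hn
  set z : ℂ := (n : ℂ) ^ (-(y * I)) with hz
  have hz1 : ‖z‖ = 1 := by
    rw [hz, norm_natCast_cpow_of_pos (Nat.pos_of_ne_zero hn)]
    simp
  have hu : ((n : ℂ) ^ (-(x : ℂ))) = (((n : ℝ) ^ (-x) : ℝ) : ℂ) := by
    rw [ofReal_cpow (by positivity)]
    simp
  have e0 : term (fun n ↦ (c n : ℂ)) x n = ((c n * (n : ℝ) ^ (-x) : ℝ) : ℂ) := by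
    rw [term_of_ne_zero hn, div_eq_mul_inv, ← cpow_neg, hu, ofReal_mul]
  have e1 : term (fun n ↦ (c n : ℂ)) (x + y * I) n = ((c n * (n : ℝ) ^ (-x) : ℝ) : ℂ) * z := by
    rw [term_of_ne_zero hn, div_eq_mul_inv, ← cpow_neg, neg_add, cpow_add _ _ hnC, hu, ofReal_mul,
      mul_assoc]
  have e2 : term (fun n ↦ (c n : ℂ)) (x + 2 * y * I) n =
      ((c n * (n : ℝ) ^ (-x) : ℝ) : ℂ) * z ^ 2 := by
    rw [term_of_ne_zero hn, div_eq_mul_inv, ← cpow_neg, neg_add, cpow_add _ _ hnC, hu, ofReal_mul,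
      hz, ← cpow_nat_mul, show -(2 * y * I) = (2 : ℕ) * -(y * I) by push_cast; ring, mul_assoc]
  rw [e0, e1, e2, re_ofReal_mul, re_ofReal_mul, ofReal_re]
  have hre : (z ^ 2).re = 2 * z.re ^ 2 - 1 := by
    have := Complex.sq_norm_sub_sq_re z
    rw [hz1] at this
    rw [sq, mul_re]
    nlinarith
  rw [hre]
  have hpos : 0 ≤ c n * (n : ℝ) ^ (-x) := mul_nonneg (hc n) (by positivity)
  nlinarith [mul_nonneg hpos (sq_nonneg (1 + z.re))]

theorem ne_zero_of_re_eq_one_of_eq_exp_LSeries (hc : ∀ n, 0 ≤ c n)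
    (hsum : ∀ s : ℂ, 1 < s.re → LSeriesSummable (fun n ↦ (c n : ℂ)) s) {Y : ℂ → ℂ} {r : ℝ}
    (hr : r < 1) (hY : DifferentiableOn ℂ Y {s | r < s.re}) (hY1 : Y 1 ≠ 0)
    (hYe : ∀ s : ℂ, 1 < s.re → (s - 1) * exp (LSeries (fun n ↦ (c n : ℂ)) s) = Y s) (y : ℝ) :
    Y (1 + y * I) ≠ 0 := by
  intro hzero
  have hy : y ≠ 0 := by
    rintro rfl
    exact hY1 (by simpa using hzero)
  have hdiff (w : ℝ) : DifferentiableAt ℂ Y (1 + w * I) :=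
    hY.differentiableAt ((isOpen_lt continuous_const continuous_re).mem_nhds (by simpa))
  have hcurve (w : ℝ) : Tendsto (fun x : ℝ ↦ Y (1 + x + w * I)) (𝓝[>] 0) (𝓝 (Y (1 + w * I))) := by
    have h : Tendsto (fun x : ℝ ↦ (1 + x + w * I : ℂ)) (𝓝[>] 0) (𝓝 (1 + w * I)) := by
      have : Continuous fun x : ℝ ↦ (1 + x + w * I : ℂ) := by fun_prop
      simpa using (this.tendsto 0).mono_left nhdsWithin_le_nhds
    exact (hdiff w).continuousAt.tendsto.comp h
  have hslope : Tendsto (fun x : ℝ ↦ Y (1 + x + y * I) / x) (𝓝[>] 0)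
      (𝓝 (deriv Y (1 + y * I))) := by
    have h1 : HasDerivAt (fun x : ℝ ↦ Y (1 + x + y * I)) (deriv Y (1 + y * I)) 0 := by
      have h2 : HasDerivAt (fun x : ℂ ↦ Y (1 + x + y * I)) (deriv Y (1 + y * I)) ((0 : ℝ) : ℂ) := by
        have h3 : HasDerivAt (fun x : ℂ ↦ 1 + x + y * I) 1 ((0 : ℝ) : ℂ) :=
          ((hasDerivAt_id _).const_add 1).add_const _
        have h4 : HasDerivAt Y (deriv Y (1 + y * I)) (1 + ((0 : ℝ) : ℂ) + y * I) := by
          simpa using (hdiff y).hasDerivAt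
        simpa [Function.comp_def] using HasDerivAt.comp (h₂ := Y) ((0 : ℝ) : ℂ) h4 h3
      exact h2.comp_ofReal
    have h5 := (hasDerivAt_iff_tendsto_slope.1 h1).mono_left
      (nhdsWithin_mono 0 fun x (hx : (0 : ℝ) < x) ↦ hx.ne')
    refine h5.congr fun x ↦ ?_
    rw [slope_def_module]
    simp [hzero, div_eq_inv_mul]
  have hlim : Tendsto (fun x : ℝ ↦ ‖Y (1 + x + (0 : ℝ) * I)‖ ^ 3 * ‖Y (1 + x + y * I) / x‖ ^ 4 *
      ‖Y (1 + x + (2 * y : ℝ) * I)‖ * x) (𝓝[>] 0) (𝓝 0) := by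
    have := ((((hcurve 0).norm.pow 3).mul (hslope.norm.pow 4)).mul (hcurve (2 * y)).norm).mul
      (tendsto_id.mono_left (nhdsWithin_le_nhds (a := (0 : ℝ)) (s := Set.Ioi 0)))
    simpa using this
  have hlow : Tendsto (fun x : ℝ ↦ ‖(x + y * I : ℂ)‖ ^ 4 * ‖(x + 2 * y * I : ℂ)‖) (𝓝[>] 0)
      (𝓝 (‖(y * I : ℂ)‖ ^ 4 * ‖(2 * y * I : ℂ)‖)) := by
    have : Continuous fun x : ℝ ↦ ‖(x + y * I : ℂ)‖ ^ 4 * ‖(x + 2 * y * I : ℂ)‖ := by fun_prop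
    simpa using (this.tendsto 0).mono_left nhdsWithin_le_nhds
  have hle := le_of_tendsto_of_tendsto hlow hlim ?_
  · have : 0 < ‖(y * I : ℂ)‖ ^ 4 * ‖(2 * y * I : ℂ)‖ := by
      have : (y : ℂ) ≠ 0 := by exact_mod_cast hy
      have h1 : (y * I : ℂ) ≠ 0 := mul_ne_zero this I_ne_zero
      have h2 : (2 * y * I : ℂ) ≠ 0 := mul_ne_zero (mul_ne_zero two_ne_zero this) I_ne_zero
      positivity
    linarith
  · filter_upwards [self_mem_nhdsWithin] with x hx
    have hx : 0 < x := hx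
    have h341 := three_four_one_re_LSeries_nonneg hc hsum (show 1 < 1 + x by linarith) y
    rw [← Real.one_le_exp_iff] at h341
    have e0 := hYe ((1 + x : ℝ) : ℂ) (by simpa)
    have e1 := hYe ((1 + x : ℝ) + y * I) (by simpa)
    have e2 := hYe ((1 + x : ℝ) + 2 * y * I) (by simpa)
    have a0 : ‖Y (1 + x + (0 : ℝ) * I)‖ =
        x * Real.exp (LSeries (fun n ↦ (c n : ℂ)) ((1 + x : ℝ) : ℂ)).re := by
      have : (1 + x + (0 : ℝ) * I : ℂ) = ((1 + x : ℝ) : ℂ) := by push_cast; ring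
      rw [this, ← e0, norm_mul, norm_exp]
      push_cast
      rw [add_sub_cancel_left, norm_real, Real.norm_of_nonneg hx.le]
    have a1 : ‖Y (1 + x + y * I)‖ = ‖(x + y * I : ℂ)‖ *
        Real.exp (LSeries (fun n ↦ (c n : ℂ)) ((1 + x : ℝ) + y * I)).re := by
      have : (1 + x + y * I : ℂ) = ((1 + x : ℝ) + y * I : ℂ) := by push_cast; ring
      rw [this, ← e1, norm_mul, norm_exp]
      congr 2
      push_cast
      ring
    have a2 : ‖Y (1 + x + (2 * y : ℝ) * I)‖ = ‖(x + 2 * y * I : ℂ)‖ *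
        Real.exp (LSeries (fun n ↦ (c n : ℂ)) ((1 + x : ℝ) + 2 * y * I)).re := by
      have : (1 + x + (2 * y : ℝ) * I : ℂ) = ((1 + x : ℝ) + 2 * y * I : ℂ) := by push_cast; ring
      rw [this, ← e2, norm_mul, norm_exp]
      congr 2
      push_cast
      ring
    rw [norm_div, a0, a1, a2, norm_real, Real.norm_of_nonneg hx.le]
    rw [Real.exp_add, Real.exp_add, mul_comm (3 : ℝ), mul_comm (4 : ℝ)] at h341
    rw [show ((3 : ℝ)) = ((3 : ℕ) : ℝ) by norm_num, show ((4 : ℝ)) = ((4 : ℕ) : ℝ) by norm_num,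
      mul_comm _ ((3 : ℕ) : ℝ), mul_comm _ ((4 : ℕ) : ℝ), Real.exp_nat_mul, Real.exp_nat_mul] at h341
    generalize Real.exp (LSeries (fun n ↦ (c n : ℂ)) ((1 + x : ℝ) : ℂ)).re = A at h341 ⊢
    generalize Real.exp (LSeries (fun n ↦ (c n : ℂ)) ((1 + x : ℝ) + y * I)).re = B at h341 ⊢
    generalize Real.exp (LSeries (fun n ↦ (c n : ℂ)) ((1 + x : ℝ) + 2 * y * I)).re = D at h341 ⊢
    have : (x * A) ^ 3 * (‖(x + y * I : ℂ)‖ * B / x) ^ 4 * (‖(x + 2 * y * I : ℂ)‖ * D) * x =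
        ‖(x + y * I : ℂ)‖ ^ 4 * ‖(x + 2 * y * I : ℂ)‖ * (A ^ 3 * B ^ 4 * D) := by
      field_simp
    rw [this]
    exact le_mul_of_one_le_right (by positivity) h341

theorem exists_continuousOn_LSeries_logMul (hc : ∀ n, 0 ≤ c n)
    (hsum : ∀ s : ℂ, 1 < s.re → LSeriesSummable (fun n ↦ (c n : ℂ)) s) {Y : ℂ → ℂ} {r : ℝ}
    (hr : r < 1) (hY : DifferentiableOn ℂ Y {s | r < s.re}) (hY1 : Y 1 ≠ 0)
    (hYe : ∀ s : ℂ, 1 < s.re → (s - 1) * exp (LSeries (fun n ↦ (c n : ℂ)) s) = Y s) :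
    ∃ G : ℂ → ℂ, ContinuousOn G {s | 1 ≤ s.re} ∧
      ∀ s : ℂ, 1 < s.re → LSeries (logMul fun n ↦ (c n : ℂ)) s = 1 / (s - 1) + G s := by
  have hopen : IsOpen {s : ℂ | r < s.re} := isOpen_lt continuous_const continuous_re
  have hsub : {s : ℂ | 1 ≤ s.re} ⊆ {s : ℂ | r < s.re} := fun s (hs : 1 ≤ s.re) ↦ hr.trans_le hs
  have hne (s : ℂ) (hs : 1 < s.re) : s - 1 ≠ 0 := by
    intro h
    rw [sub_eq_zero.1 h] at hs
    simp at hs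
  refine ⟨fun s ↦ -(deriv Y s / Y s), ?_, fun s hs ↦ ?_⟩
  · refine (ContinuousOn.div ((hY.deriv hopen).continuousOn.mono hsub) (hY.continuousOn.mono hsub)
      fun s hs ↦ ?_).neg
    rcases (show 1 ≤ s.re from hs).eq_or_lt with h | h
    · have : s = 1 + s.im * I := by
        apply Complex.ext <;> simp [← h]
      rw [this]
      exact ne_zero_of_re_eq_one_of_eq_exp_LSeries hc hsum hr hY hY1 hYe _
    · rw [← hYe s h]
      exact mul_ne_zero (hne s h) (exp_ne_zero _)
  · have habs : abscissaOfAbsConv (fun n ↦ (c n : ℂ)) < s.re :=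
      (abscissaOfAbsConv_le_of_forall_lt_LSeriesSummable (x := 1)
        fun y hy ↦ hsum y (by simpa)).trans_lt (by exact_mod_cast hs)
    have hd : HasDerivAt (fun s ↦ (s - 1) * exp (LSeries (fun n ↦ (c n : ℂ)) s))
        (1 * exp (LSeries (fun n ↦ (c n : ℂ)) s) + (s - 1) * (exp (LSeries (fun n ↦ (c n : ℂ)) s) *
          (-LSeries (logMul fun n ↦ (c n : ℂ)) s))) s :=
      ((hasDerivAt_id s).sub_const 1).mul (LSeries_hasDerivAt habs).cexp
    have heq : Y =ᶠ[𝓝 s] fun s ↦ (s - 1) * exp (LSeries (fun n ↦ (c n : ℂ)) s) := by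
      filter_upwards [(isOpen_lt continuous_const continuous_re).mem_nhds hs] with w hw
      exact (hYe w hw).symm
    have hdY := (hd.congr_of_eventuallyEq heq).deriv
    have h1 := hne s hs
    have h2 := exp_ne_zero (LSeries (fun n ↦ (c n : ℂ)) s)
    beta_reduce
    rw [hdY, ← hYe s hs]
    field_simp
    ring

end

namespace NumberField

section

open Filter Topology Complex LSeries Module

variable (K : Type*) [Field K] [NumberField K]

theorem exists_continuousOn_LSeries_logMul_degreeOneCount :
    ∃ G : ℂ → ℂ, ContinuousOn G {s | 1 ≤ s.re} ∧
      ∀ s : ℂ, 1 < s.re → LSeries (logMul fun n ↦ ((degreeOneCount K n : ℝ) : ℂ)) s =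
        1 / (s - 1) + G s := by
  obtain ⟨Z, hZ, hZ1, hZe⟩ := exists_differentiableOn_sub_one_mul_dedekindZeta K
  refine exists_continuousOn_LSeries_logMul (c := fun n ↦ (degreeOneCount K n : ℝ))
    (r := max (1 - (finrank ℚ K : ℝ)⁻¹) (3 / 4))
    (Y := fun s ↦ Z s * exp (-∑' v, eulerRemainder (K := K) s v))
    (fun n ↦ Nat.cast_nonneg _) (fun s hs ↦ ?_) ?_ ?_ ?_ fun s hs ↦ ?_
  · simpa using LSeriesSummable_degreeOneCount hs
  · exact max_lt (one_sub_inv_finrank_lt_one K) (by norm_num)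
  · refine (hZ.mono fun s hs ↦ ?_).mul
      ((differentiableOn_tsum_eulerRemainder.mono fun s hs ↦ ?_).neg.cexp)
    · exact (max_lt_iff.1 (Set.mem_ofPred_eq.mp hs)).1
    · exact (max_lt_iff.1 (Set.mem_ofPred_eq.mp hs)).2
  · exact mul_ne_zero hZ1 (exp_ne_zero _)
  · rw [← hZe s hs, dedekindZeta_eq_exp_LSeries_add hs, exp_add, mul_assoc, mul_assoc, ← exp_add]
    simp

end

end NumberField

section

open Filter Topology Complex MeasureTheory Set
open scoped FourierTransform

/-- The Fourier transform of the tent function `max (1 - |y|) 0`, away from zero. -/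
noncomputable def fejerKernel (x : ℝ) : ℝ := 2 * (1 - Real.cos x) / x ^ 2

theorem fejerKernel_nonneg (x : ℝ) : 0 ≤ fejerKernel x :=
  div_nonneg (mul_nonneg zero_le_two (sub_nonneg.2 (Real.cos_le_one x))) (sq_nonneg x)

theorem fejerKernel_le (x : ℝ) : fejerKernel x ≤ 8 * (1 + x ^ 2)⁻¹ := by
  rcases eq_or_ne x 0 with rfl | hx
  · simp [fejerKernel]
  have hx2 : 0 < x ^ 2 := by positivity
  rw [fejerKernel, ← div_eq_mul_inv, div_le_div_iff₀ hx2 (by positivity)]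
  nlinarith [Real.one_sub_sq_div_two_le_cos (x := x), Real.neg_one_le_cos x, Real.cos_le_one x]

theorem measurable_fejerKernel : Measurable fejerKernel := by
  unfold fejerKernel
  fun_prop

theorem integrable_fejerKernel : Integrable fejerKernel :=
  (integrable_inv_one_add_sq.const_mul 8).mono' measurable_fejerKernel.aestronglyMeasurable
    (ae_of_all _ fun x ↦ by
      rw [Real.norm_of_nonneg (fejerKernel_nonneg x)]
      exact fejerKernel_le x)

theorem integral_fejerKernel_pos : 0 < ∫ x, fejerKernel x := by
  rw [integral_pos_iff_support_of_nonneg fejerKernel_nonneg integrable_fejerKernel]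
  refine lt_of_lt_of_le ?_ (measure_mono (s := Ioo 0 1) fun x hx ↦ ?_)
  · simp
  · have h : Real.cos x < 1 := by
      refine (Real.cos_le_one x).lt_of_ne fun h ↦ hx.1.ne' ?_
      rw [Real.cos_eq_one_iff_of_lt_of_lt] at h
      · exact h
      · linarith [hx.1, Real.pi_pos]
      · linarith [hx.2, Real.pi_gt_three]
    have : 0 < fejerKernel x :=
      div_pos (mul_pos two_pos (sub_pos.2 h)) (pow_pos hx.1 2)
    exact this.ne'

theorem integral_one_sub_mul_exp {x : ℝ} (hx : x ≠ 0) :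
    ∫ y : ℝ in (0)..1, ((1 - y : ℝ) : ℂ) * exp (y * x * I) =
      (exp (x * I) - 1) / (x * I) ^ 2 - 1 / (x * I) := by
  have hxI : (x * I : ℂ) ≠ 0 := mul_ne_zero (by exact_mod_cast hx) I_ne_zero
  have hxC : (x : ℂ) ≠ 0 := by exact_mod_cast hx
  have hderiv (y : ℝ) : HasDerivAt (fun y : ℝ ↦ ((1 - y : ℝ) : ℂ) * exp (y * x * I) / (x * I) +
      exp (y * x * I) / (x * I) ^ 2) (((1 - y : ℝ) : ℂ) * exp (y * x * I)) y := by
    have h1 : HasDerivAt (fun y : ℝ ↦ ((1 - y : ℝ) : ℂ)) ((-1 : ℝ) : ℂ) y :=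
      ((hasDerivAt_id y).const_sub 1).ofReal_comp
    have h2 : HasDerivAt (fun y : ℝ ↦ exp (y * x * I)) (exp (y * x * I) * (x * I)) y := by
      have : HasDerivAt (fun y : ℝ ↦ (y * x * I : ℂ)) (1 * (x * I)) y := by
        simpa [mul_assoc] using (ofRealCLM.hasDerivAt (x := y)).mul_const (x * I : ℂ)
      simpa using this.cexp
    refine (((h1.mul h2).div_const (x * I)).add (h2.div_const ((x * I) ^ 2))).congr_deriv ?_
    field_simp
    push_cast
    ring
  rw [intervalIntegral.integral_eq_sub_of_hasDerivAt fun y _ ↦ hderiv y]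
  · simp
    field_simp
    ring
  · exact Continuous.intervalIntegrable (by fun_prop) _ _

theorem integral_tent_mul_exp {x : ℝ} (hx : x ≠ 0) :
    ∫ y : ℝ in (-1)..1, ((1 - |y| : ℝ) : ℂ) * exp (y * x * I) = fejerKernel x := by
  have hcont : Continuous fun y : ℝ ↦ ((1 - |y| : ℝ) : ℂ) * exp (y * x * I) := by fun_prop
  rw [← intervalIntegral.integral_add_adjacent_intervals (b := 0)
    (hcont.intervalIntegrable _ _) (hcont.intervalIntegrable _ _)]
  have h1 : ∫ y : ℝ in (0)..1, ((1 - |y| : ℝ) : ℂ) * exp (y * x * I) =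
      ∫ y : ℝ in (0)..1, ((1 - y : ℝ) : ℂ) * exp (y * x * I) := by
    refine intervalIntegral.integral_congr fun y hy ↦ ?_
    rw [uIcc_of_le zero_le_one] at hy
    simp [abs_of_nonneg hy.1]
  have h2 : ∫ y : ℝ in (-1)..0, ((1 - |y| : ℝ) : ℂ) * exp (y * x * I) =
      ∫ y : ℝ in (0)..1, ((1 - y : ℝ) : ℂ) * exp (y * (-x : ℝ) * I) := by
    have := intervalIntegral.integral_comp_neg (a := 0) (b := 1)
      fun y : ℝ ↦ ((1 - |y| : ℝ) : ℂ) * exp (y * x * I)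
    rw [neg_zero] at this
    rw [← this]
    refine intervalIntegral.integral_congr fun y hy ↦ ?_
    rw [uIcc_of_le zero_le_one] at hy
    simp [abs_of_nonneg hy.1]
  rw [h1, h2, integral_one_sub_mul_exp hx, integral_one_sub_mul_exp (neg_ne_zero.2 hx), fejerKernel]
  have hxI : (x : ℂ) ≠ 0 := by exact_mod_cast hx
  have hcos : (2 * Real.cos x : ℂ) = exp (x * I) + exp (-x * I) := by
    rw [ofReal_cos, Complex.two_cos]
  push_cast
  simp only [neg_mul, ofReal_cos] at hcos
  field_simp
  rw [I_sq]
  linear_combination -hcos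

variable {k : ℝ → ℝ} {B : ℝ} {H : ℂ → ℂ}

theorem integral_tent_mul_laplace (hk : Measurable k) (hB : ∀ u, |k u| ≤ B)
    (hHe : ∀ s : ℂ, 0 < s.re → ∫ u in Ioi (0 : ℝ), (k u : ℂ) * exp (-u * s) = H s)
    {σ : ℝ} (hσ : 0 < σ) (v : ℝ) :
    ∫ y in Ioc (-1 : ℝ) 1, ((1 - |y| : ℝ) : ℂ) * exp (y * v * I) * H (σ + y * I) =
      ∫ u in Ioi (0 : ℝ), ((k u * Real.exp (-σ * u) * fejerKernel (v - u) : ℝ) : ℂ) := by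
  have hint : Integrable (Function.uncurry fun (y u : ℝ) ↦ ((1 - |y| : ℝ) : ℂ) * exp (y * v * I) *
      ((k u : ℂ) * exp (-u * (σ + y * I))))
      ((volume.restrict (Ioc (-1 : ℝ) 1)).prod (volume.restrict (Ioi (0 : ℝ)))) := by
    have h1 : Integrable (fun y : ℝ ↦ (1 - |y|)) (volume.restrict (Ioc (-1 : ℝ) 1)) :=
      ((continuous_const.sub continuous_abs).integrableOn_Ioc)
    have h2 : Integrable (fun u : ℝ ↦ B * Real.exp (-σ * u)) (volume.restrict (Ioi (0 : ℝ))) :=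
      (exp_neg_integrableOn_Ioi 0 hσ).const_mul B
    refine (h1.mul_prod h2).mono ?_ (ae_of_all _ fun p ↦ ?_)
    · refine Measurable.aestronglyMeasurable ?_
      simp only [Function.uncurry_def]
      fun_prop
    · simp only [Function.uncurry, norm_mul, norm_exp, norm_real, Real.norm_eq_abs, Real.abs_exp]
      have e1 : (p.1 * v * I : ℂ).re = 0 := by simp
      have e2 : (-p.2 * (σ + p.1 * I) : ℂ).re = -σ * p.2 := by simp; ring
      rw [e1, e2, Real.exp_zero, mul_one]
      exact mul_le_mul_of_nonneg_left (mul_le_mul_of_nonneg_right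
        ((hB _).trans (le_abs_self B)) (Real.exp_pos _).le) (abs_nonneg _)
  have hswap := integral_integral_swap hint
  calc _ = ∫ y in Ioc (-1 : ℝ) 1, ∫ u in Ioi (0 : ℝ), ((1 - |y| : ℝ) : ℂ) * exp (y * v * I) *
      ((k u : ℂ) * exp (-u * (σ + y * I))) := by
        refine integral_congr_ae (ae_of_all _ fun y ↦ ?_)
        beta_reduce
        rw [← hHe (σ + y * I) (by simpa), integral_const_mul]
    _ = _ := hswap
    _ = _ := by
        refine integral_congr_ae ?_
        have hne : ∀ᵐ u : ℝ ∂(volume.restrict (Ioi (0 : ℝ))), u ≠ v := by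
          refine ae_restrict_of_ae ?_
          simp [ae_iff]
        filter_upwards [hne] with u hu
        have h := integral_tent_mul_exp (sub_ne_zero.2 hu.symm)
        rw [intervalIntegral.integral_of_le (by norm_num)] at h
        push_cast
        rw [← h, ← integral_const_mul]
        refine integral_congr_ae (ae_of_all _ fun y ↦ ?_)
        have : exp (y * v * I) * exp (-u * (σ + y * I)) =
            exp (-σ * u) * exp (y * (v - u : ℝ) * I) := by
          rw [← exp_add, ← exp_add]
          congr 1
          push_cast
          ring
        push_cast at this ⊢
        linear_combination (1 - (|y| : ℝ) : ℂ) * k u * this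

theorem integral_tent_mul_boundary (hk : Measurable k) (hB : ∀ u, |k u| ≤ B)
    (hH : ContinuousOn H {s | 0 ≤ s.re})
    (hHe : ∀ s : ℂ, 0 < s.re → ∫ u in Ioi (0 : ℝ), (k u : ℂ) * exp (-u * s) = H s) (v : ℝ) :
    ∫ y in Ioc (-1 : ℝ) 1, ((1 - |y| : ℝ) : ℂ) * exp (y * v * I) * H (y * I) =
      ∫ u in Ioi (0 : ℝ), ((k u * fejerKernel (v - u) : ℝ) : ℂ) := by
  have hR : Tendsto (fun σ : ℝ ↦ ∫ u in Ioi (0 : ℝ),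
      ((k u * Real.exp (-σ * u) * fejerKernel (v - u) : ℝ) : ℂ)) (𝓝[>] 0)
      (𝓝 (∫ u in Ioi (0 : ℝ), ((k u * fejerKernel (v - u) : ℝ) : ℂ))) := by
    refine tendsto_integral_filter_of_dominated_convergence
      (fun u ↦ B * fejerKernel (v - u)) ?_ ?_ ?_ ?_
    · refine Eventually.of_forall fun σ ↦ Measurable.aestronglyMeasurable ?_
      have := measurable_fejerKernel
      fun_prop
    · filter_upwards [self_mem_nhdsWithin] with σ hσ
      filter_upwards [ae_restrict_mem measurableSet_Ioi] with u hu
      have hσ : 0 < σ := hσ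
      have hu : 0 < u := hu
      rw [norm_real, norm_mul, norm_mul, Real.norm_of_nonneg (fejerKernel_nonneg _),
        Real.norm_of_nonneg (Real.exp_pos _).le, Real.norm_eq_abs]
      refine mul_le_mul_of_nonneg_right ?_ (fejerKernel_nonneg _)
      refine (mul_le_of_le_one_right (abs_nonneg _) ?_).trans (hB u)
      rw [Real.exp_le_one_iff]
      nlinarith
    · exact ((integrable_fejerKernel.comp_sub_left v).const_mul B).integrableOn
    · refine ae_of_all _ fun u ↦ ?_
      have : Continuous fun σ : ℝ ↦ ((k u * Real.exp (-σ * u) * fejerKernel (v - u) : ℝ) : ℂ) := by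
        fun_prop
      simpa using (this.tendsto 0).mono_left nhdsWithin_le_nhds
  have hL : Tendsto (fun σ : ℝ ↦ ∫ y in Ioc (-1 : ℝ) 1,
      ((1 - |y| : ℝ) : ℂ) * exp (y * v * I) * H (σ + y * I)) (𝓝[>] 0)
      (𝓝 (∫ y in Ioc (-1 : ℝ) 1, ((1 - |y| : ℝ) : ℂ) * exp (y * v * I) * H (y * I))) := by
    obtain ⟨M, hM⟩ := ((isCompact_Icc (a := (0 : ℝ)) (b := 1)).reProdIm
      (isCompact_Icc (a := (-1 : ℝ)) (b := 1))).exists_bound_of_continuousOn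
      (hH.mono fun s hs ↦ hs.1.1)
    refine tendsto_integral_filter_of_dominated_convergence (fun _ ↦ M) ?_ ?_ ?_ ?_
    · filter_upwards [self_mem_nhdsWithin] with σ hσ
      refine ContinuousOn.aestronglyMeasurable ?_ measurableSet_Ioc
      refine ContinuousOn.mul (by fun_prop) (hH.comp (by fun_prop) fun y _ ↦ ?_)
      simpa using (show 0 < σ from hσ).le
    · filter_upwards [Ioc_mem_nhdsGT (zero_lt_one (α := ℝ))] with σ hσ
      filter_upwards [ae_restrict_mem measurableSet_Ioc] with y hy
      have hb := hM (σ + y * I) ⟨by simpa using ⟨hσ.1.le, hσ.2⟩, by simpa using ⟨hy.1.le, hy.2⟩⟩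
      have hy1 : |y| ≤ 1 := abs_le.2 ⟨hy.1.le, hy.2⟩
      have e1 : (y * v * I : ℂ).re = 0 := by simp
      rw [norm_mul, norm_mul, norm_exp, e1, Real.exp_zero, mul_one, norm_real,
        Real.norm_of_nonneg (by linarith)]
      exact (mul_le_of_le_one_left (norm_nonneg _) (by linarith [abs_nonneg y])).trans hb
    · exact integrable_const M
    · refine ae_of_all _ fun y ↦ Tendsto.const_mul _ ?_
      have h0 : ContinuousWithinAt H {s | 0 ≤ s.re} (y * I) := hH _ (by simp)
      refine h0.tendsto.comp (tendsto_nhdsWithin_iff.2 ⟨?_, ?_⟩)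
      · have : Continuous fun σ : ℝ ↦ (σ + y * I : ℂ) := by fun_prop
        simpa using (this.tendsto 0).mono_left nhdsWithin_le_nhds
      · filter_upwards [self_mem_nhdsWithin] with σ hσ
        simpa using (show 0 < σ from hσ).le
  refine tendsto_nhds_unique hL (hR.congr' ?_)
  filter_upwards [self_mem_nhdsWithin] with σ hσ
  exact (integral_tent_mul_laplace hk hB hHe hσ v).symm

theorem tendsto_integral_mul_fejerKernel (hk : Measurable k) (hB : ∀ u, |k u| ≤ B)
    (hH : ContinuousOn H {s | 0 ≤ s.re})
    (hHe : ∀ s : ℂ, 0 < s.re → ∫ u in Ioi (0 : ℝ), (k u : ℂ) * exp (-u * s) = H s) :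
    Tendsto (fun v ↦ ∫ u in Ioi (0 : ℝ), k u * fejerKernel (v - u)) atTop (𝓝 0) := by
  have hRL := (Real.tendsto_integral_exp_smul_cocompact ((Ioc (-1 : ℝ) 1).indicator fun y : ℝ ↦
    ((1 - |y| : ℝ) : ℂ) * H (y * I))).comp
      ((tendsto_neg_atTop_atBot.comp (tendsto_id.atTop_div_const
        (show (0 : ℝ) < 2 * Real.pi by positivity))).mono_right atBot_le_cocompact)
  have hre := (continuous_re.tendsto 0).comp hRL
  refine hre.congr fun v ↦ ?_
  have h := integral_tent_mul_boundary hk hB hH hHe v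
  rw [integral_complex_ofReal] at h
  have : (∫ u in Ioi (0 : ℝ), k u * fejerKernel (v - u)) = ((∫ y in Ioc (-1 : ℝ) 1,
      ((1 - |y| : ℝ) : ℂ) * exp (y * v * I) * H (y * I))).re := by
    rw [h]
    exact (ofReal_re _).symm
  rw [this, ← integral_indicator measurableSet_Ioc]
  simp only [Function.comp_apply, id_eq]
  congr 1
  refine integral_congr_ae (ae_of_all _ fun y ↦ ?_)
  by_cases hy : y ∈ Ioc (-1 : ℝ) 1
  · simp only [indicator_of_mem hy, Circle.smul_def, Real.fourierChar_apply, smul_eq_mul]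
    have : ((2 * Real.pi * -(y * -(v / (2 * Real.pi))) : ℝ) : ℂ) * I = y * v * I := by
      have : (2 * Real.pi * -(y * -(v / (2 * Real.pi))) : ℝ) = y * v := by
        field_simp
      rw [this]
      push_cast
      ring
    rw [this]
    ring
  · simp [indicator_of_notMem hy]

end

section

open Filter Topology Complex MeasureTheory Set

variable {k : ℝ → ℝ} {B : ℝ} {H : ℂ → ℂ}

theorem tendsto_integral_comp_mul_mul_fejerKernel (hk : Measurable k) (hB : ∀ u, |k u| ≤ B)
    (hH : ContinuousOn H {s | 0 ≤ s.re})
    (hHe : ∀ s : ℂ, 0 < s.re → ∫ u in Ioi (0 : ℝ), (k u : ℂ) * exp (-u * s) = H s)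
    {b : ℝ} (hb : 0 < b) :
    Tendsto (fun v ↦ ∫ u in Ioi (0 : ℝ), k (b * u) * fejerKernel (v - u)) atTop (𝓝 0) := by
  refine tendsto_integral_mul_fejerKernel (k := fun u ↦ k (b * u)) (B := B)
    (H := fun s ↦ ((b⁻¹ : ℝ) : ℂ) * H ((b⁻¹ : ℝ) * s)) (by fun_prop) (fun u ↦ hB _) ?_ fun s hs ↦ ?_
  · refine ContinuousOn.mul continuousOn_const (hH.comp (f := fun s : ℂ ↦ ((b⁻¹ : ℝ) : ℂ) * s)
      (continuous_const_mul _).continuousOn fun s hs ↦ ?_)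
    have hs : 0 ≤ s.re := hs
    rw [mem_ofPred_eq, re_ofReal_mul]
    positivity
  · rw [← hHe _ (by rw [re_ofReal_mul]; positivity)]
    have h := integral_comp_mul_left_Ioi (fun u : ℝ ↦ (k u : ℂ) * exp (-u * ((b⁻¹ : ℝ) * s))) 0 hb
    rw [mul_zero, real_smul] at h
    rw [← h]
    refine integral_congr_ae (ae_of_all _ fun u ↦ ?_)
    beta_reduce
    congr 2
    push_cast
    have : (b : ℂ) ≠ 0 := by exact_mod_cast hb.ne'
    field_simp

theorem exists_integral_fejerKernel_split (ε : ℝ) (hε : 0 < ε) (B : ℝ) :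
    ∃ R > 0, B * ∫ x in (Icc (-R) R)ᶜ, fejerKernel x < ε * ∫ x in Icc (-R) R, fejerKernel x := by
  have hcov : Tendsto (fun R : ℝ ↦ ∫ x in Icc (-R) R, fejerKernel x) atTop
      (𝓝 (∫ x, fejerKernel x)) :=
    (aecover_Icc tendsto_neg_atTop_atBot tendsto_id).integral_tendsto_of_countably_generated
      integrable_fejerKernel
  have h1 : Tendsto (fun R : ℝ ↦ ε * (∫ x in Icc (-R) R, fejerKernel x) -
      B * ∫ x in (Icc (-R) R)ᶜ, fejerKernel x) atTop (𝓝 (ε * ∫ x, fejerKernel x)) := by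
    have h2 : Tendsto (fun R : ℝ ↦ ε * (∫ x in Icc (-R) R, fejerKernel x) -
        B * ((∫ x, fejerKernel x) - ∫ x in Icc (-R) R, fejerKernel x)) atTop
        (𝓝 (ε * (∫ x, fejerKernel x) - B * ((∫ x, fejerKernel x) - ∫ x, fejerKernel x))) :=
      (hcov.const_mul ε).sub ((hcov.const_sub _).const_mul B)
    rw [sub_self, mul_zero, sub_zero] at h2
    refine h2.congr fun R ↦ ?_
    rw [← integral_add_compl (measurableSet_Icc (a := -R) (b := R)) integrable_fejerKernel]
    ring
  obtain ⟨R, hR, hR0⟩ := ((h1.eventually (lt_mem_nhds (mul_pos hε integral_fejerKernel_pos))).and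
    (eventually_gt_atTop 0)).exists
  exact ⟨R, hR0, by linarith⟩

theorem eventually_exists_lt_of_laplace (hk : Measurable k) (hB : ∀ u, |k u| ≤ B)
    (hH : ContinuousOn H {s | 0 ≤ s.re})
    (hHe : ∀ s : ℂ, 0 < s.re → ∫ u in Ioi (0 : ℝ), (k u : ℂ) * exp (-u * s) = H s)
    {ε h : ℝ} (hε : 0 < ε) (hh : 0 < h) :
    ∀ᶠ v in atTop, ∃ t ∈ Icc v (v + h), k t < ε := by
  have hB0 : 0 ≤ B := (abs_nonneg _).trans (hB 0)
  obtain ⟨R, hR, hRlt⟩ := exists_integral_fejerKernel_split ε hε B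
  set b := h / (2 * R) with hb
  have hb0 : 0 < b := by positivity
  have hbR : b * (2 * R) = h := by rw [hb]; field_simp
  have hlim := tendsto_integral_comp_mul_mul_fejerKernel hk hB hH hHe hb0
  have hV : Tendsto (fun v : ℝ ↦ v / b + R) atTop atTop :=
    tendsto_atTop_add_const_right _ _ (tendsto_id.atTop_div_const hb0)
  filter_upwards [(hlim.comp hV).eventually (gt_mem_nhds (sub_pos.2 hRlt)), eventually_gt_atTop 0]
    with v hv hv0
  by_contra! hcon
  refine hv.not_ge ?_
  rw [Function.comp_apply]
  set V := v / b + R with hVdef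
  have hvb : 0 < v / b := by positivity
  let K₁ : ℝ → ℝ := (Icc (-R) R).indicator fejerKernel
  let K₂ : ℝ → ℝ := (Icc (-R) R)ᶜ.indicator fejerKernel
  have hK₁ : Integrable K₁ := integrable_fejerKernel.indicator measurableSet_Icc
  have hK₂ : Integrable K₂ := integrable_fejerKernel.indicator measurableSet_Icc.compl
  have hK₂0 (x : ℝ) : 0 ≤ K₂ x := indicator_nonneg (fun x _ ↦ fejerKernel_nonneg x) x
  have e₁ : ∫ x in Icc (-R) R, fejerKernel x = ∫ u in Ioi (0 : ℝ), K₁ (V - u) := by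
    rw [← integral_indicator measurableSet_Icc, ← integral_sub_left_eq_self _ volume V,
      setIntegral_eq_integral_of_forall_compl_eq_zero]
    intro u hu
    refine indicator_of_notMem (fun h' ↦ hu ?_) _
    have := h'.2
    rw [mem_Ioi]
    linarith
  have e₂ : ∫ u in Ioi (0 : ℝ), K₂ (V - u) ≤ ∫ x in (Icc (-R) R)ᶜ, fejerKernel x := by
    rw [← integral_indicator measurableSet_Icc.compl,
      ← integral_sub_left_eq_self _ volume V]
    exact setIntegral_le_integral (hK₂.comp_sub_left V) (ae_of_all _ fun u ↦ hK₂0 _)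
  have hle : ε * (∫ u in Ioi (0 : ℝ), K₁ (V - u)) - B * (∫ u in Ioi (0 : ℝ), K₂ (V - u)) ≤
      ∫ u in Ioi (0 : ℝ), k (b * u) * fejerKernel (V - u) := by
    have i₁ : IntegrableOn (fun u ↦ ε * K₁ (V - u)) (Ioi (0 : ℝ)) :=
      ((hK₁.comp_sub_left V).const_mul ε).integrableOn
    have i₂ : IntegrableOn (fun u ↦ B * K₂ (V - u)) (Ioi (0 : ℝ)) :=
      ((hK₂.comp_sub_left V).const_mul B).integrableOn
    rw [← integral_const_mul, ← integral_const_mul, ← integral_sub i₁ i₂]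
    refine integral_mono (i₁.sub i₂) ?_ fun u ↦ ?_
    · refine ((integrable_fejerKernel.comp_sub_left V).integrableOn.bdd_mul (c := B) ?_
        (ae_of_all _ fun u ↦ hB (b * u)))
      exact (hk.comp (measurable_const_mul b)).aestronglyMeasurable
    · beta_reduce
      by_cases hu : V - u ∈ Icc (-R) R
      · simp only [K₁, K₂, indicator_of_mem hu, indicator_of_notMem (notMem_compl_iff.2 hu), mul_zero,
          sub_zero]
        refine mul_le_mul_of_nonneg_right (hcon _ ⟨?_, ?_⟩) (fejerKernel_nonneg _)
        · have : v / b ≤ u := by linarith [hu.2]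
          rwa [div_le_iff₀' hb0] at this
        · have h1 : u ≤ v / b + 2 * R := by linarith [hu.1]
          calc b * u ≤ b * (v / b + 2 * R) := by gcongr
            _ = v + h := by rw [mul_add, hbR, mul_div_cancel₀ _ hb0.ne']
      · simp only [K₁, K₂, indicator_of_notMem hu, indicator_of_mem (mem_compl hu), mul_zero,
          zero_sub]
        have := fejerKernel_nonneg (V - u)
        nlinarith [neg_abs_le (k (b * u)), hB (b * u)]
  rw [← e₁] at hle
  nlinarith

/-- A Tauberian theorem of Wiener–Ikehara type for bounded functions. -/
theorem tendsto_one_of_laplace {f : ℝ → ℝ} {C : ℝ} (hf : Measurable f) (hf0 : ∀ u, 0 ≤ f u)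
    (hfC : ∀ u, f u ≤ C) (hslow : ∀ u h, 0 ≤ h → f u ≤ Real.exp h * f (u + h))
    (hH : ContinuousOn H {s | 0 ≤ s.re})
    (hHe : ∀ s : ℂ, 0 < s.re → ∫ u in Ioi (0 : ℝ), ((f u - 1 : ℝ) : ℂ) * exp (-u * s) = H s) :
    Tendsto f atTop (𝓝 1) := by
  have hbound (u : ℝ) : |f u - 1| ≤ C + 1 := by
    rw [abs_le]
    constructor <;> linarith [hf0 u, hfC u]
  refine tendsto_order.2 ⟨fun a ha ↦ ?_, fun a ha ↦ ?_⟩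
  · set a' := max a (1 / 2) with ha'
    have ha1 : a' < 1 := max_lt ha (by norm_num)
    have ha0 : 0 < a' := lt_of_lt_of_le (by norm_num) (le_max_right a (1 / 2))
    set b := (1 + a') / 2 with hb
    have hb0 : 0 < b := by positivity
    have hlog : 0 < Real.log (b / a') := Real.log_pos (by rw [one_lt_div ha0]; linarith)
    have h1 := eventually_exists_lt_of_laplace (k := fun u ↦ 1 - f u) (B := C + 1)
      (H := fun s ↦ -H s) (measurable_const.sub hf) (fun u ↦ by rw [abs_sub_comm]; exact hbound u)
      hH.neg (fun s hs ↦ ?_) (ε := 1 - b) (by linarith) hlog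
    · have h2 := (tendsto_atTop_add_const_right atTop (-Real.log (b / a')) tendsto_id).eventually h1
      filter_upwards [h2] with v ⟨t, ht, hft⟩
      have ht1 : v - Real.log (b / a') ≤ t := ht.1
      have ht2 : t ≤ v := by
        have := ht.2
        simp only [id_eq] at this
        linarith
      have h3 := hslow t (v - t) (by linarith)
      rw [add_sub_cancel] at h3
      have h4 : Real.exp (v - t) ≤ b / a' := by
        rw [← Real.le_log_iff_exp_le (by positivity)]
        linarith
      have h5 : b < b / a' * f v :=
        lt_of_lt_of_le (by linarith) (h3.trans (mul_le_mul_of_nonneg_right h4 (hf0 v)))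
      have h6 : a' < f v := by
        rw [div_mul_eq_mul_div, lt_div_iff₀ ha0] at h5
        exact lt_of_mul_lt_mul_left h5 hb0.le
      exact (le_max_left a (1 / 2)).trans_lt h6
    · rw [← hHe s hs, ← integral_neg]
      refine integral_congr_ae (ae_of_all _ fun u ↦ ?_)
      push_cast
      ring
  · set b := (1 + a) / 2 with hb
    have hb0 : 0 < b := by linarith
    have hlog : 0 < Real.log (a / b) := Real.log_pos (by rw [one_lt_div hb0]; linarith)
    filter_upwards [eventually_exists_lt_of_laplace (k := fun u ↦ f u - 1) (B := C + 1)
      (hf.sub measurable_const) hbound hH hHe (ε := b - 1) (by linarith) hlog] with v ⟨t, ht, hft⟩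
    have h3 := hslow v (t - v) (by linarith [ht.1])
    rw [add_sub_cancel] at h3
    have h4 : Real.exp (t - v) ≤ a / b := by
      rw [← Real.le_log_iff_exp_le (div_pos (by linarith) hb0)]
      linarith [ht.2]
    calc f v ≤ a / b * f t := h3.trans (mul_le_mul_of_nonneg_right h4 (hf0 t))
      _ < a / b * b := mul_lt_mul_of_pos_left (by linarith) (div_pos (by linarith) hb0)
      _ = a := div_mul_cancel₀ _ hb0.ne'

end

section

open Filter Topology Complex MeasureTheory Set

/-- The Wiener–Ikehara theorem, under a Chebyshev type upper bound on the partial sums. -/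
theorem tendsto_sum_div_of_LSeries {a : ℕ → ℝ} (ha : ∀ n, 0 ≤ a n) {C : ℝ}
    (hC : ∀ n : ℕ, ∑ k ∈ Finset.Icc 1 n, a k ≤ C * n) {G : ℂ → ℂ}
    (hG : ContinuousOn G {s | 1 ≤ s.re})
    (hGe : ∀ s : ℂ, 1 < s.re → LSeries (fun n ↦ (a n : ℂ)) s = 1 / (s - 1) + G s) :
    Tendsto (fun x : ℝ ↦ (∑ k ∈ Finset.Icc 1 ⌊x⌋₊, a k) / x) atTop (𝓝 1) := by
  set S : ℝ → ℝ := fun x ↦ ∑ k ∈ Finset.Icc 1 ⌊x⌋₊, a k with hS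
  have hS0 (x : ℝ) : 0 ≤ S x := Finset.sum_nonneg fun k _ ↦ ha k
  have hSmono : Monotone S := fun x y hxy ↦ Finset.sum_le_sum_of_subset_of_nonneg
    (Finset.Icc_subset_Icc_right (Nat.floor_le_floor hxy)) fun k _ _ ↦ ha k
  have hC0 : 0 ≤ C := by
    have := hC 1
    simp at this
    exact (ha 1).trans this
  set f : ℝ → ℝ := fun u ↦ S (Real.exp u) * Real.exp (-u) with hf
  have hfmeas : Measurable f := by
    have := hSmono.measurable
    fun_prop
  have hf0 (u : ℝ) : 0 ≤ f u := mul_nonneg (hS0 _) (Real.exp_pos _).le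
  have hfC (u : ℝ) : f u ≤ C := by
    calc f u ≤ C * Real.exp u * Real.exp (-u) := by
          refine mul_le_mul_of_nonneg_right ((hC _).trans ?_) (Real.exp_pos _).le
          exact mul_le_mul_of_nonneg_left (Nat.floor_le (Real.exp_pos _).le) hC0
      _ = C := by rw [mul_assoc, ← Real.exp_add, add_neg_cancel, Real.exp_zero, mul_one]
  have key : Tendsto f atTop (𝓝 1) := by
    refine tendsto_one_of_laplace (C := C) (H := fun s ↦ (G (1 + s) - 1) / (1 + s)) hfmeas hf0 hfC
      (fun u h hh ↦ ?_) ?_ fun s hs ↦ ?_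
    · calc f u ≤ S (Real.exp (u + h)) * Real.exp (-u) := by
            refine mul_le_mul_of_nonneg_right (hSmono ?_) (Real.exp_pos _).le
            exact Real.exp_le_exp.2 (by linarith)
        _ = Real.exp h * f (u + h) := by
            rw [hf, mul_left_comm, ← Real.exp_add]
            congr 2
            ring
    · refine ContinuousOn.div ?_ (by fun_prop) fun s hs h0 ↦ ?_
      · refine (hG.comp (f := fun s : ℂ ↦ 1 + s) (continuous_const_add 1).continuousOn
          fun s hs ↦ ?_).sub continuousOn_const
        simpa using hs
      · have hs : 0 ≤ s.re := hs
        have := congrArg re h0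
        simp at this
        linarith
    · have hint1 : IntegrableOn (fun u : ℝ ↦ exp (-u * s)) (Ioi 0) := by
        have := integrableOn_exp_mul_complex_Ioi (a := -s) (by simpa) 0
        refine this.congr_fun (fun u _ ↦ ?_) measurableSet_Ioi
        beta_reduce
        congr 1
        ring
      have hint2 : IntegrableOn (fun u : ℝ ↦ (f u : ℂ) * exp (-u * s)) (Ioi 0) := by
        refine Integrable.bdd_mul (c := C) hint1 ?_ (ae_of_all _ fun u ↦ ?_)
        · exact (measurable_ofReal.comp hfmeas).aestronglyMeasurable
        · rw [norm_real, Real.norm_of_nonneg (hf0 u)]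
          exact hfC u
      have hval1 : ∫ u in Ioi (0 : ℝ), exp (-u * s) = 1 / s := by
        have := integral_exp_mul_complex_Ioi (a := -s) (by simpa) 0
        simp only [ofReal_zero, mul_zero, exp_zero] at this
        rw [neg_div_neg_eq] at this
        rw [← this]
        refine integral_congr_ae (ae_of_all _ fun u ↦ ?_)
        beta_reduce
        congr 1
        ring
      have hO : (fun n : ℕ ↦ ∑ k ∈ Finset.Icc 1 n, a k) =O[atTop] fun n ↦ (n : ℝ) ^ (1 : ℝ) := by
        refine Asymptotics.IsBigO.of_bound C (Eventually.of_forall fun n ↦ ?_)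
        rw [Real.norm_of_nonneg (Finset.sum_nonneg fun k _ ↦ ha k), Real.rpow_one,
          Real.norm_of_nonneg (Nat.cast_nonneg n)]
        exact hC n
      have hL := LSeries_eq_mul_integral_of_nonneg a zero_le_one (s := 1 + s) (by simpa) hO ha
      have hsub := integral_image_eq_integral_abs_deriv_smul (measurableSet_Ioi (a := (0 : ℝ)))
        (fun x _ ↦ (Real.hasDerivAt_exp x).hasDerivWithinAt) Real.exp_injective.injOn
        fun t : ℝ ↦ (∑ k ∈ Finset.Icc 1 ⌊t⌋₊, (a k : ℂ)) * (t : ℂ) ^ (-(1 + s + 1))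
      rw [Real.image_exp_Ioi, Real.exp_zero] at hsub
      have hval2 : ∫ u in Ioi (0 : ℝ), (f u : ℂ) * exp (-u * s) =
          ∫ t in Ioi (1 : ℝ), (∑ k ∈ Finset.Icc 1 ⌊t⌋₊, (a k : ℂ)) *
            (t : ℂ) ^ (-(1 + s + 1)) := by
        rw [hsub]
        refine integral_congr_ae (ae_of_all _ fun u ↦ ?_)
        simp only [hf, hS]
        rw [abs_of_pos (Real.exp_pos u), cpow_def_of_ne_zero (by simp), ← ofReal_log
          (Real.exp_pos u).le, Real.log_exp, real_smul]
        push_cast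
        have : exp (-u) * exp (-u * s) = exp u * exp (u * -(1 + s + 1)) := by
          rw [← exp_add, ← exp_add]
          congr 1
          ring
        linear_combination (∑ k ∈ Finset.Icc 1 ⌊Real.exp u⌋₊, (a k : ℂ)) * this
      have hs0 : s ≠ 0 := by rintro rfl; simp at hs
      have hs1 : 1 + s ≠ 0 := by
        intro h0
        have := congrArg re h0
        simp at this
        linarith
      rw [hGe (1 + s) (by simpa), add_sub_cancel_left, ← hval2] at hL
      have hfinal : ∫ u in Ioi (0 : ℝ), ((f u - 1 : ℝ) : ℂ) * exp (-u * s) =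
          (∫ u in Ioi (0 : ℝ), (f u : ℂ) * exp (-u * s)) - ∫ u in Ioi (0 : ℝ), exp (-u * s) := by
        rw [← integral_sub hint2 hint1]
        refine integral_congr_ae (ae_of_all _ fun u ↦ ?_)
        push_cast
        ring
      rw [hfinal, hval1, eq_div_iff hs1, sub_mul, mul_comm _ (1 + s), ← hL]
      field_simp
      ring
  refine (key.comp Real.tendsto_log_atTop).congr' ?_
  filter_upwards [eventually_gt_atTop 0] with x hx
  simp only [hf, Function.comp_apply, Real.exp_neg, Real.exp_log hx]
  rw [div_eq_mul_inv]

end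

namespace NumberField

open Filter Topology Module LSeries

/-- The prime ideal theorem for prime ideals of degree one. -/
theorem tendsto_sum_degreeOneCount_mul_log_div (K : Type*) [Field K] [NumberField K] :
    Tendsto (fun x : ℝ ↦ (∑ k ∈ Finset.Icc 1 ⌊x⌋₊, degreeOneCount K k * Real.log k) / x)
      atTop (𝓝 1) := by
  obtain ⟨G, hG, hGe⟩ := exists_continuousOn_LSeries_logMul_degreeOneCount K
  refine tendsto_sum_div_of_LSeries (C := finrank ℚ K * Real.log 4)
    (fun n ↦ mul_nonneg (Nat.cast_nonneg _) (Real.log_natCast_nonneg n)) (fun n ↦ ?_) hG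
    fun s hs ↦ ?_
  · have h := Chebyshev.theta_le_log4_mul_x (Nat.cast_nonneg (α := ℝ) n)
    rw [Chebyshev.theta_eq_sum_Icc, Nat.floor_natCast, Finset.sum_filter] at h
    calc ∑ k ∈ Finset.Icc 1 n, degreeOneCount K k * Real.log k
        ≤ ∑ k ∈ Finset.Icc 1 n, finrank ℚ K * (if k.Prime then Real.log k else 0) := by
          refine Finset.sum_le_sum fun k _ ↦ ?_
          split_ifs with hk
          · exact mul_le_mul_of_nonneg_right (by exact_mod_cast degreeOneCount_le k)
              (Real.log_natCast_nonneg k)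
          · simp [degreeOneCount, hk]
      _ ≤ ∑ k ∈ Finset.Icc 0 n, finrank ℚ K * (if k.Prime then Real.log k else 0) :=
          Finset.sum_le_sum_of_subset_of_nonneg (Finset.Icc_subset_Icc_left zero_le_one)
            fun k _ _ ↦ by
              have := Real.log_natCast_nonneg k
              split_ifs <;> positivity
      _ ≤ finrank ℚ K * Real.log 4 * n := by
          rw [← Finset.mul_sum, mul_assoc]
          gcongr
  · rw [← hGe s hs]
    congr 1
    ext n
    simp [logMul, mul_comm]

end NumberField

namespace NumberField

section

open Module
open scoped Pointwise
open _root_.Ideal IsDedekindDomain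

variable {K : Type*} [Field K] [NumberField K]

theorem exists_primeBelow_eq {q : ℕ} (hq : q.Prime) :
    ∃ v : HeightOneSpectrum (𝓞 K), primeBelow K v = q := by
  have hq0 : span {(q : ℤ)} ≠ ⊥ := by simpa using hq.ne_zero
  have hprime : (span {(q : ℤ)}).IsPrime :=
    (span_singleton_prime (by exact_mod_cast hq.ne_zero)).2 (Nat.prime_iff_prime_int.1 hq)
  obtain ⟨⟨P, hP, hPq⟩⟩ := (inferInstance : Nonempty (primesOver (span {(q : ℤ)}) (𝓞 K)))
  refine ⟨⟨P, hP, ne_bot_of_liesOver_of_ne_bot hq0 P⟩, ?_⟩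
  rw [primeBelow, ← over_def P (span {(q : ℤ)})]
  simp

theorem primeBelow_mem (v : HeightOneSpectrum (𝓞 K)) : (primeBelow K v : 𝓞 K) ∈ v.asIdeal := by
  have := absNorm_mem (under ℤ v.asIdeal)
  simpa [under, primeBelow] using this

theorem card_quotient_eq_primeNorm (v : HeightOneSpectrum (𝓞 K)) :
    Nat.card (𝓞 K ⧸ v.asIdeal) = primeNorm K v := rfl

theorem nonempty_ringHom_zmod {q : ℕ} (hq : q.Prime) (h : degreeOneCount K q ≠ 0) :
    Nonempty (𝓞 K →+* ZMod q) := by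
  rw [degreeOneCount, if_pos hq] at h
  obtain ⟨⟨v, hv⟩⟩ := Nat.card_ne_zero.1 h |>.1
  have := v.isMaximal
  let _ : Field (𝓞 K ⧸ v.asIdeal) := Ideal.Quotient.field _
  have : Finite (𝓞 K ⧸ v.asIdeal) := Nat.finite_of_card_ne_zero (by
    rw [card_quotient_eq_primeNorm, hv]; exact hq.ne_zero)
  have : Fintype (𝓞 K ⧸ v.asIdeal) := Fintype.ofFinite _
  have e : ZMod q ≃+* (𝓞 K ⧸ v.asIdeal) := ZMod.ringEquivOfPrime _ hq (by
    rw [← Nat.card_eq_fintype_card, card_quotient_eq_primeNorm, hv])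
  exact ⟨e.symm.toRingHom.comp (Ideal.Quotient.mk v.asIdeal)⟩

theorem degreeOneCount_eq_finrank_of_stabilizer [IsGalois ℚ K] {q : ℕ} (hq : q.Prime)
    {v : HeightOneSpectrum (𝓞 K)} (hv : primeBelow K v = q)
    (hstab : ∀ σ : Gal(K/ℚ), σ • v.asIdeal = v.asIdeal → σ = 1) :
    degreeOneCount K q = finrank ℚ K := by
  have hq0 : span {(q : ℤ)} ≠ ⊥ := by simpa using hq.ne_zero
  have hprime : (span {(q : ℤ)}).IsPrime :=
    (span_singleton_prime (by exact_mod_cast hq.ne_zero)).2 (Nat.prime_iff_prime_int.1 hq)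
  have hmax : (span {(q : ℤ)}).IsMaximal := hprime.isMaximal hq0
  have : Fact q.Prime := ⟨hq⟩
  have hlies (w : HeightOneSpectrum (𝓞 K)) (hw : primeBelow K w = q) :
      w.asIdeal.LiesOver (span {(q : ℤ)}) := by
    have := Int.liesOver_span_absNorm w.asIdeal
    rw [primeBelow] at hw
    rwa [hw] at this
  have := hlies v hv
  have := v.isPrime
  have hcard := card_stabilizer_eq (G := Gal(K/ℚ)) (span {(q : ℤ)}) v.asIdeal
  have hone : Nat.card (MulAction.stabilizer Gal(K/ℚ) v.asIdeal) = 1 := by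
    rw [Subgroup.card_eq_one, eq_bot_iff]
    intro σ hσ
    exact hstab σ hσ
  have hf : (span {(q : ℤ)}).inertiaDegIn (𝓞 K) = 1 :=
    Nat.eq_one_of_mul_eq_one_left (hcard.symm.trans hone)
  have hmain := ncard_primesOver_mul_ramificationIdxIn_mul_inertiaDegIn
    (span {(q : ℤ)}) (𝓞 K) Gal(K/ℚ)
  rw [← hcard, hone, mul_one, IsGalois.card_aut_eq_finrank] at hmain
  rw [degreeOneCount, if_pos hq, ← hmain, ← Nat.card_coe_set_eq]
  refine Nat.card_congr
    { toFun := fun w ↦ ⟨w.1.asIdeal, w.1.isPrime, hlies w.1 (primeBelow_eq_of_primeNorm_eq hq w.2)⟩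
      invFun := fun P ↦ ⟨⟨P.1, P.2.1, ?_⟩, ?_⟩
      left_inv := fun w ↦ rfl
      right_inv := fun P ↦ rfl }
  · have := P.2.2
    exact ne_bot_of_liesOver_of_ne_bot hq0 P.1
  · have := P.2.2
    have := P.2.1
    have hP : P.1 ≠ ⊥ := ne_bot_of_liesOver_of_ne_bot hq0 P.1
    have : P.1.IsMaximal := this.isMaximal hP
    rw [primeNorm, absNorm_eq_pow_inertiaDeg' P.1 hq, inertiaDeg'_eq_inertiaDeg,
      ← inertiaDegIn_eq_inertiaDeg (span {(q : ℤ)}) P.1 Gal(K/ℚ), hf, pow_one]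

open Polynomial in
/-- If the roots of `f` in the ring of integers of its splitting field are congruent to rational
integers modulo every prime above `q`, then `q` splits completely, up to finitely many `q`. -/
theorem exists_forall_degreeOneCount_eq_finrank {f : ℤ[X]} (hf : f.Monic)
    [hK : (f.map (algebraMap ℤ ℚ)).IsSplittingField ℚ K] :
    ∃ d : ℕ, d ≠ 0 ∧ ∀ q : ℕ, q.Prime → ¬ q ∣ d →
      (∀ v : HeightOneSpectrum (𝓞 K), primeBelow K v = q →
        ∀ α : 𝓞 K, aeval α f = 0 → α ^ q - α ∈ v.asIdeal) →
      degreeOneCount K q = finrank ℚ K := by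
  classical
  have : Normal ℚ K := Normal.of_isSplittingField (f.map (algebraMap ℤ ℚ))
  have : IsGalois ℚ K := ⟨⟩
  let s : Finset (𝓞 K) := (f.map (algebraMap ℤ (𝓞 K))).roots.toFinset
  have hs (α : 𝓞 K) : α ∈ s ↔ aeval α f = 0 := by
    simp [s, (hf.map _).ne_zero, aeval_def, eval_map]
  have hs' (α : 𝓞 K) : α ∈ s ↔ aeval (α : K) f = 0 := by
    rw [hs, ← RingOfIntegers.coe_injective.eq_iff]
    rw [← aeval_algebraMap_apply]
    simp
  have hsmul (σ : Gal(K/ℚ)) {α : 𝓞 K} (hα : α ∈ s) : σ • α ∈ s := by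
    rw [hs'] at hα ⊢
    have h : ((σ • α : 𝓞 K) : K) = (σ : K →+* K).toIntAlgHom (α : K) := rfl
    rw [h, aeval_algHom_apply, hα, map_zero]
  set D : 𝓞 K := ∏ p ∈ s.offDiag, (p.1 - p.2) with hD
  have hD0 : D ≠ 0 := by
    refine Finset.prod_ne_zero_iff.2 fun p hp ↦ sub_ne_zero.2 ?_
    exact (Finset.mem_offDiag.1 hp).2.2
  refine ⟨absNorm (span {D}), by simpa [absNorm_eq_zero_iff] using hD0, fun q hq hqd hv ↦ ?_⟩
  obtain ⟨v, hvq⟩ := exists_primeBelow_eq (K := K) hq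
  refine degreeOneCount_eq_finrank_of_stabilizer hq hvq fun σ hσ ↦ ?_
  have : Fact q.Prime := ⟨hq⟩
  have := v.isMaximal
  let _ : Field (𝓞 K ⧸ v.asIdeal) := Ideal.Quotient.field _
  have hqv : (q : 𝓞 K) ∈ v.asIdeal := hvq ▸ primeBelow_mem v
  have : CharP (𝓞 K ⧸ v.asIdeal) q := by
    refine (CharP.charP_iff_prime_eq_zero hq).2 ?_
    have := Ideal.Quotient.eq_zero_iff_mem.2 hqv
    simpa using this
  have hDv : D ∉ v.asIdeal := fun h ↦ hqd <| by
    have h1 : absNorm v.asIdeal ∣ absNorm (span {D}) :=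
      absNorm_dvd_absNorm_of_le (by simpa [span_le] using h)
    obtain ⟨e, he, h2⟩ := exists_primeNorm_eq_pow v
    refine dvd_trans ?_ h1
    change q ∣ primeNorm K v
    rw [h2, hvq]
    exact dvd_pow_self _ he
  have hfix {α : 𝓞 K} (hα : α ∈ s) : σ • α = α := by
    by_contra hne
    have h1 : (Ideal.Quotient.mk v.asIdeal α) ^ q = Ideal.Quotient.mk v.asIdeal α := by
      rw [← map_pow, ← sub_eq_zero, ← map_sub, Ideal.Quotient.eq_zero_iff_mem]
      exact hv v hvq α ((hs α).1 hα)
    obtain ⟨a, ha⟩ := (mem_bot_iff_intCast q _).1 <|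
      (Subfield.mem_bot_iff_pow_eq_self (𝓞 K ⧸ v.asIdeal) q).2 h1
    have h2 : α - a ∈ v.asIdeal := by
      rw [← Ideal.Quotient.eq_zero_iff_mem, map_sub, map_intCast, ha, sub_self]
    have h3 : σ • (α - a) ∈ v.asIdeal := hσ ▸ Ideal.smul_mem_pointwise_smul σ _ _ h2
    have h4 : σ • (α - a) = σ • α - a := by
      rw [smul_sub]
      congr 1
      exact map_intCast (MulSemiringAction.toRingHom Gal(K/ℚ) (𝓞 K) σ) a
    rw [h4] at h3
    have h5 : σ • α - α ∈ v.asIdeal := by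
      have := v.asIdeal.sub_mem h3 h2
      rwa [sub_sub_sub_cancel_right] at this
    refine hDv (v.asIdeal.mem_of_dvd ?_ h5)
    exact Finset.dvd_prod_of_mem (fun p : 𝓞 K × 𝓞 K ↦ p.1 - p.2)
      (show (σ • α, α) ∈ s.offDiag from Finset.mem_offDiag.2 ⟨hsmul σ hα, hα, hne⟩)
  have hext : (σ : K →ₐ[ℚ] K) = AlgHom.id ℚ K := by
    refine AlgHom.ext_of_adjoin_eq_top
      (IsSplittingField.adjoin_rootSet K (f.map (algebraMap ℤ ℚ))) fun x hx ↦ ?_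
    have hx0 : aeval x f = 0 := by
      have := (mem_rootSet.1 hx).2
      rwa [aeval_map_algebraMap] at this
    let α : 𝓞 K := ⟨x, ⟨f, hf, by rwa [aeval_def] at hx0⟩⟩
    have hα := hfix ((hs' α).2 hx0)
    exact congrArg (fun β : 𝓞 K ↦ (β : K)) hα
  exact AlgEquiv.ext fun x ↦ DFunLike.congr_fun hext x

end

end NumberField

namespace NumberField

section

open Module Polynomial
open _root_.Ideal IsDedekindDomain

variable {K : Type*} [Field K]

theorem mod_eq_one_of_isPrimitiveRoot {m : ℕ} (hm : 1 < m) {ζ : K} (hζ : IsPrimitiveRoot ζ m)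
    {q : ℕ} (hq : q.Prime) (hqm : ¬ q ∣ m) (φ : 𝓞 K →+* ZMod q) : q % m = 1 := by
  have : Fact q.Prime := ⟨hq⟩
  have : NeZero m := ⟨by omega⟩
  have : NeZero (m : ZMod q) := ⟨by rwa [Ne, ZMod.natCast_eq_zero_iff]⟩
  have h1 : (cyclotomic m (𝓞 K)).IsRoot hζ.toInteger :=
    hζ.toInteger_isPrimitiveRoot.isRoot_cyclotomic (by omega)
  have h2 := h1.map (f := φ)
  rw [map_cyclotomic, isRoot_cyclotomic_iff] at h2
  have h3 : m ∣ q - 1 := by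
    rw [h2.eq_orderOf]
    exact ZMod.orderOf_dvd_card_sub_one (h2.ne_zero (by omega))
  obtain ⟨k, hk⟩ := h3
  have : q = 1 + m * k := by have := hq.one_le; omega
  rw [this, Nat.add_mul_mod_self_left, Nat.mod_eq_of_lt hm]

theorem pow_eq_self_of_mod_eq_one {R : Type*} [CommRing R] {m q : ℕ} (hqm : q % m = 1) {α : R}
    (hα : α ^ m = 1) : α ^ q = α := by
  rw [← Nat.div_add_mod q m, hqm, pow_add, pow_mul, hα, one_pow, one_mul, pow_one]

variable [NumberField K]

theorem exists_forall_degreeOneCount_cyclotomic_eq {m : ℕ} (hm : 1 < m)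
    [IsCyclotomicExtension {m} ℚ K] :
    ∃ d : ℕ, d ≠ 0 ∧ ∀ q : ℕ, q.Prime → ¬ q ∣ d →
      (degreeOneCount K q : ℝ) = if q % m = 1 then (finrank ℚ K : ℝ) else 0 := by
  have : NeZero m := ⟨by omega⟩
  have : ((X ^ m - 1 : ℤ[X]).map (algebraMap ℤ ℚ)).IsSplittingField ℚ K := by
    simpa using IsCyclotomicExtension.isSplittingField_X_pow_sub_one m ℚ K
  obtain ⟨d, hd, h⟩ := exists_forall_degreeOneCount_eq_finrank (K := K) (f := X ^ m - 1)
    (monic_X_pow_sub_C (1 : ℤ) (by omega : m ≠ 0))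
  refine ⟨d * m, mul_ne_zero hd (by omega), fun q hq hqd ↦ ?_⟩
  split_ifs with hqm
  · rw [h q hq (fun h ↦ hqd (h.mul_right _)) fun v _ α hα ↦ ?_]
    have hα : α ^ m = 1 := by simpa [sub_eq_zero] using hα
    rw [pow_eq_self_of_mod_eq_one hqm hα, sub_self]
    exact v.asIdeal.zero_mem
  · rw [Nat.cast_eq_zero]
    by_contra h0
    obtain ⟨φ⟩ := nonempty_ringHom_zmod hq h0
    exact hqm <| mod_eq_one_of_isPrimitiveRoot hm (IsCyclotomicExtension.zeta_spec m ℚ K) hq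
      (fun h ↦ hqd (h.mul_left _)) φ

section Kummer

variable {N : ℕ} {g : ℤ}
  [hK : ((X ^ N - C (g : ℚ)) * (X ^ (2 * N) - 1) : ℚ[X]).IsSplittingField ℚ K]

include hK

theorem exists_pow_eq_of_isSplittingField (hN : N ≠ 0) : ∃ x : K, x ^ N = g := by
  have hs := hK.splits
  have hne : ((X ^ N - C (g : ℚ)) * (X ^ (2 * N) - 1) : ℚ[X]) ≠ 0 :=
    mul_ne_zero (X_pow_sub_C_ne_zero (by omega) _)
      (by simpa using X_pow_sub_C_ne_zero (by omega : 0 < 2 * N) (1 : ℚ))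
  have hs1 := hs.of_dvd (f := (X ^ N - C (g : ℚ) : ℚ[X]).map (algebraMap ℚ K))
    (Polynomial.map_ne_zero hne) (Polynomial.map_dvd _ (dvd_mul_right _ _))
  obtain ⟨x, hx⟩ := hs1.exists_eval_eq_zero (by
    rw [degree_map, degree_X_pow_sub_C (by omega)]
    exact_mod_cast hN)
  exact ⟨x, by simpa [sub_eq_zero] using hx⟩

theorem nonempty_algHom_of_isSplittingField (hN : N ≠ 0) {F : Type*} [Field F] [CharZero F]
    [IsCyclotomicExtension {2 * N} ℚ F] : Nonempty (F →ₐ[ℚ] K) := by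
  have : NeZero (2 * N) := ⟨by omega⟩
  have := IsCyclotomicExtension.isSplittingField_X_pow_sub_one (2 * N) ℚ F
  have hne : ((X ^ N - C (g : ℚ)) * (X ^ (2 * N) - 1) : ℚ[X]) ≠ 0 :=
    mul_ne_zero (X_pow_sub_C_ne_zero (by omega) _)
      (by simpa using X_pow_sub_C_ne_zero (by omega : 0 < 2 * N) (1 : ℚ))
  exact ⟨IsSplittingField.lift F (X ^ (2 * N) - 1) <| hK.splits.of_dvd
    (Polynomial.map_ne_zero hne) (Polynomial.map_dvd _ (dvd_mul_left _ _))⟩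

theorem finrank_lt_finrank_of_isSplittingField (hN : N ≠ 0) {F : Type*} [Field F] [NumberField F]
    [IsCyclotomicExtension {2 * N} ℚ F] (hF : ∀ x : F, x ^ N ≠ g) :
    finrank ℚ F < finrank ℚ K := by
  obtain ⟨ι⟩ := nonempty_algHom_of_isSplittingField (K := K) (g := g) hN (F := F)
  have hι : Function.Injective ι.toLinearMap := ι.toRingHom.injective
  refine lt_of_le_of_ne (LinearMap.finrank_le_finrank_of_injective hι) fun h ↦ ?_
  obtain ⟨x, hx⟩ := exists_pow_eq_of_isSplittingField (K := K) (g := g) hN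
  obtain ⟨y, rfl⟩ := (LinearMap.injective_iff_surjective_of_finrank_eq_finrank h).1 hι x
  refine hF y (ι.toRingHom.injective ?_)
  simpa using hx

theorem exists_forall_degreeOneCount_kummer_eq (hN : N ≠ 0) (hg : g ≠ 0) :
    ∃ d : ℕ, d ≠ 0 ∧ ∀ q : ℕ, q.Prime → ¬ q ∣ d → (degreeOneCount K q : ℝ) =
      open scoped Classical in
      if q % (2 * N) = 1 ∧ ∃ y : ZMod q, y ^ N = g then (finrank ℚ K : ℝ) else 0 := by
  have : NeZero (2 * N) := ⟨by omega⟩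
  have : IsCyclotomicExtension {2 * N} ℚ (CyclotomicField (2 * N) ℚ) :=
    CyclotomicField.isCyclotomicExtension (2 * N) ℚ
  have : (((X ^ N - C g) * (X ^ (2 * N) - 1) : ℤ[X]).map (algebraMap ℤ ℚ)).IsSplittingField
      ℚ K := by
    simpa using hK
  obtain ⟨d, hd, h⟩ := exists_forall_degreeOneCount_eq_finrank (K := K)
    (f := (X ^ N - C g) * (X ^ (2 * N) - 1))
    ((monic_X_pow_sub_C g hN).mul (monic_X_pow_sub_C (1 : ℤ) (by omega : 2 * N ≠ 0)))
  obtain ⟨ι⟩ := nonempty_algHom_of_isSplittingField (K := K) (g := g) hN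
    (F := CyclotomicField (2 * N) ℚ)
  obtain ⟨x, hx⟩ := exists_pow_eq_of_isSplittingField (K := K) (g := g) hN
  refine ⟨d * (2 * N) * g.natAbs, by simp [hd, hN, hg], fun q hq hqd ↦ ?_⟩
  have : Fact q.Prime := ⟨hq⟩
  have hqd' : ¬ q ∣ d := fun h ↦ hqd ((h.mul_right _).mul_right _)
  have hqm : ¬ q ∣ 2 * N := fun h ↦ hqd ((h.mul_left _).mul_right _)
  have hqg : ¬ (q : ℤ) ∣ g := fun h ↦ hqd ((Int.natCast_dvd.1 h).mul_left _)
  split_ifs with hcond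
  · obtain ⟨hmod, y, hy⟩ := hcond
    rw [h q hq hqd' fun v hv α hα ↦ ?_]
    have hα : α ^ N = g ∨ α ^ (2 * N) = 1 := by simpa [sub_eq_zero] using hα
    rcases hα with hα | hα
    · have hy0 : y ≠ 0 := by
        rintro rfl
        rw [zero_pow hN, eq_comm, ZMod.intCast_zmod_eq_zero_iff_dvd] at hy
        exact hqg hy
      have hdiv := Nat.div_add_mod q (2 * N)
      rw [hmod] at hdiv
      set t := q / (2 * N) with ht
      have h1 : (q : ℤ) ∣ g ^ (2 * t) - 1 := by
        rw [← ZMod.intCast_zmod_eq_zero_iff_dvd, Int.cast_sub, Int.cast_pow, ← hy, ← pow_mul,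
          show N * (2 * t) = q - 1 by rw [← hdiv, Nat.add_sub_cancel]; ring,
          ZMod.pow_card_sub_one_eq_one hy0, Int.cast_one, sub_self]
      obtain ⟨b, hb⟩ := h1
      have h2 : α ^ q - α = α * b * (q : 𝓞 K) := by
        have h3 : (g : 𝓞 K) ^ (2 * t) - 1 = q * b := by exact_mod_cast congrArg Int.cast hb
        have h4 : α ^ q = α * (g : 𝓞 K) ^ (2 * t) := by
          rw [← hα, ← pow_mul, ← pow_succ']
          congr 1
          rw [← hdiv]
          ring
        rw [h4]
        linear_combination α * h3
      rw [h2]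
      exact v.asIdeal.mul_mem_left _ (hv ▸ primeBelow_mem v)
    · rw [pow_eq_self_of_mod_eq_one hmod hα, sub_self]
      exact v.asIdeal.zero_mem
  · rw [Nat.cast_eq_zero]
    by_contra h0
    obtain ⟨φ⟩ := nonempty_ringHom_zmod hq h0
    refine hcond ⟨mod_eq_one_of_isPrimitiveRoot (by omega)
      ((IsCyclotomicExtension.zeta_spec (2 * N) ℚ (CyclotomicField (2 * N) ℚ)).map_of_injective
        (f := ι) ι.toRingHom.injective) hq hqm φ, ?_⟩
    have hint : IsIntegral ℤ x := IsIntegral.of_pow (Nat.pos_of_ne_zero hN) (by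
      rw [hx]
      exact isIntegral_algebraMap (R := ℤ) (x := g))
    let α : 𝓞 K := ⟨x, hint⟩
    have hα : α ^ N = g := by
      apply RingOfIntegers.coe_injective
      rw [map_pow, map_intCast]
      exact hx
    exact ⟨φ α, by rw [← map_pow, hα, map_intCast]⟩

end Kummer

end

end NumberField

section PrimeDensity

open Filter Topology Set

/-- The Chebyshev function of a set of natural numbers. -/
noncomputable def Set.chebyshevTheta (P : Set ℕ) (x : ℕ) : ℝ :=
  ∑ k ∈ Finset.range (x + 1), P.indicator (fun k ↦ Real.log k) k

theorem tendsto_chebyshevTheta_div_of_eventuallyEq {P : Set ℕ} {w : ℕ → ℝ} {c : ℝ} {D : ℕ}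
    (hw : Tendsto (fun x : ℝ ↦ (∑ k ∈ Finset.Icc 1 ⌊x⌋₊, w k * Real.log k) / x) atTop (𝓝 c))
    (hP : ∀ k > D, w k = P.indicator 1 k) :
    Tendsto (fun x : ℕ ↦ P.chebyshevTheta x / x) atTop (𝓝 c) := by
  have h1 := hw.comp tendsto_natCast_atTop_atTop
  set E : ℝ := ∑ k ∈ Finset.range (D + 1), (P.indicator 1 k - w k) * Real.log k with hE
  have h2 : Tendsto (fun x : ℕ ↦ E / (x : ℝ)) atTop (𝓝 0) :=
    tendsto_natCast_atTop_atTop.const_div_atTop E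
  have h3 := h1.add h2
  rw [add_zero] at h3
  refine h3.congr' ?_
  filter_upwards [eventually_ge_atTop D] with x hx
  simp only [Function.comp_apply, Nat.floor_natCast]
  rw [← add_div]
  congr 1
  have hI : ∑ k ∈ Finset.Icc 1 x, w k * Real.log k =
      ∑ k ∈ Finset.range (x + 1), w k * Real.log k := by
    rw [Finset.range_eq_Ico, Finset.sum_eq_sum_Ico_succ_bot (Nat.succ_pos x)]
    simp only [Nat.cast_zero, Real.log_zero, mul_zero, zero_add]
    rfl
  have hE' : E = ∑ k ∈ Finset.range (x + 1), (P.indicator 1 k - w k) * Real.log k := by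
    refine Finset.sum_subset (Finset.range_mono (by omega)) fun k _ hk ↦ ?_
    rw [hP k (by simpa using hk), sub_self, zero_mul]
  rw [hI, hE', ← Finset.sum_add_distrib, chebyshevTheta]
  refine Finset.sum_congr rfl fun k _ ↦ ?_
  by_cases hk : k ∈ P
  · simp only [hk, indicator_of_mem, Pi.one_apply]
    ring
  · simp [hk]

open scoped Classical in
theorem tendsto_card_mul_log_div {P : Set ℕ} {c : ℝ} (hP0 : 0 ∉ P)
    (h : Tendsto (fun x : ℕ ↦ P.chebyshevTheta x / x) atTop (𝓝 c)) :
    Tendsto (fun x : ℕ ↦ (((Finset.range (x + 1)).filter (· ∈ P)).card : ℝ) * Real.log x / x)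
      atTop (𝓝 c) := by
  have hlog : Tendsto (fun x : ℕ ↦ Real.log x) atTop atTop :=
    Real.tendsto_log_atTop.comp tendsto_natCast_atTop_atTop
  have hll : Tendsto (fun x : ℕ ↦ Real.log (Real.log x) / Real.log x) atTop (𝓝 0) :=
    (Real.isLittleO_log_id_atTop.tendsto_div_nhds_zero).comp hlog
  have hratio : Tendsto (fun x : ℕ ↦ (1 - 2 * (Real.log (Real.log x) / Real.log x))⁻¹)
      atTop (𝓝 1) := by
    simpa using ((hll.const_mul 2).const_sub 1).inv₀ (by simp)
  have hupper : Tendsto (fun x : ℕ ↦ P.chebyshevTheta x / x *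
      (1 - 2 * (Real.log (Real.log x) / Real.log x))⁻¹ + (Real.log x)⁻¹) atTop (𝓝 c) := by
    simpa using (h.mul hratio).add hlog.inv_tendsto_atTop
  have hsmall : ∀ᶠ x : ℕ in atTop, Real.log (Real.log x) / Real.log x < 1 / 4 :=
    hll.eventually_lt_const (by norm_num)
  refine tendsto_of_tendsto_of_tendsto_of_le_of_le' h hupper ?_ ?_
  · filter_upwards [eventually_ge_atTop 1] with x hx
    gcongr
    rw [chebyshevTheta, ← nsmul_eq_mul, ← Finset.sum_const, Finset.sum_filter]
    refine Finset.sum_le_sum fun k hk ↦ ?_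
    by_cases hkP : k ∈ P
    · have hk0 : k ≠ 0 := fun h0 ↦ hP0 (h0 ▸ hkP)
      simp only [hkP, indicator_of_mem, if_true]
      have : k ≤ x := by simpa [Nat.lt_succ_iff] using hk
      gcongr
    · simp [hkP]
  · filter_upwards [hsmall, hlog.eventually_ge_atTop 1, eventually_ge_atTop 1] with x hx hx1 hx2
    have hx0 : (0 : ℝ) < x := by exact_mod_cast hx2
    set l := Real.log x with hl
    have hl0 : 0 < l := by linarith
    set y : ℝ := x / l ^ 2 with hy
    have hy0 : 0 < y := by positivity
    have hlogy : Real.log y = l * (1 - 2 * (Real.log l / l)) := by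
      rw [hy, Real.log_div hx0.ne' (by positivity), Real.log_pow]
      field_simp
      push_cast
      ring
    have hlogy0 : 0 < Real.log y := by
      rw [hlogy]
      apply mul_pos hl0
      linarith
    have hcount : (((Finset.range (x + 1)).filter (· ∈ P)).card : ℝ) ≤
        P.chebyshevTheta x / Real.log y + y := by
      rw [← Finset.card_filter_add_card_filter_not (s := (Finset.range (x + 1)).filter (· ∈ P))
        (fun k : ℕ ↦ y < k)]
      push_cast
      refine add_le_add ?_ ?_
      · rw [le_div_iff₀ hlogy0, ← nsmul_eq_mul, ← Finset.sum_const, Finset.filter_filter,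
          Finset.sum_filter, chebyshevTheta]
        refine Finset.sum_le_sum fun k _ ↦ ?_
        by_cases hkP : k ∈ P
        · by_cases hky : y < k
          · simp only [hkP, hky, and_self, if_true, indicator_of_mem]
            gcongr
          · simp only [hkP, hky, and_false, if_false, indicator_of_mem]
            exact Real.log_natCast_nonneg k
        · simp [hkP]
      · have hsub : ((Finset.range (x + 1)).filter (· ∈ P)).filter (fun k : ℕ ↦ ¬ y < k) ⊆
            Finset.Icc 1 ⌊y⌋₊ := fun k hk ↦ by
          simp only [Finset.mem_filter, not_lt] at hk
          rw [Finset.mem_Icc]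
          exact ⟨Nat.one_le_iff_ne_zero.2 fun h0 ↦ hP0 (h0 ▸ hk.1.2), Nat.le_floor hk.2⟩
        have := Finset.card_le_card hsub
        rw [Nat.card_Icc, Nat.add_sub_cancel] at this
        exact (Nat.cast_le.2 this).trans (Nat.floor_le hy0.le)
    calc _ ≤ (P.chebyshevTheta x / Real.log y + y) * l / x := by gcongr
      _ = _ := by
        have : 1 - 2 * (Real.log l / l) ≠ 0 := by
          intro h0; rw [h0, mul_zero] at hlogy; exact hlogy0.ne' hlogy
        rw [hlogy, hy, add_mul, add_div]
        congr 1
        · rw [← div_eq_mul_inv, mul_comm l, ← div_div, div_mul_cancel₀ _ hl0.ne']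
          ring
        · field_simp

open scoped Classical in
theorem tendsto_card_div_card {P Q : Set ℕ} {c : ℝ} (hP0 : 0 ∉ P) (hQ0 : 0 ∉ Q)
    (hP : Tendsto (fun x : ℕ ↦ P.chebyshevTheta x / x) atTop (𝓝 c))
    (hQ : Tendsto (fun x : ℕ ↦ Q.chebyshevTheta x / x) atTop (𝓝 1)) :
    Tendsto (fun x : ℕ ↦ (((Finset.range (x + 1)).filter (· ∈ P)).card : ℝ) /
      (((Finset.range (x + 1)).filter (· ∈ Q)).card : ℝ)) atTop (𝓝 c) := by
  have h := (tendsto_card_mul_log_div hP0 hP).div (tendsto_card_mul_log_div hQ0 hQ) one_ne_zero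
  rw [div_one] at h
  refine h.congr' ?_
  filter_upwards [eventually_ge_atTop 2] with x hx
  have hx0 : (0 : ℝ) < x := by exact_mod_cast (by omega : 0 < x)
  have hl : 0 < Real.log x := Real.log_pos (by exact_mod_cast (by omega : 1 < x))
  simp only [Pi.div_apply]
  rw [div_div_div_cancel_right₀ hx0.ne', mul_div_mul_right _ _ hl.ne']

theorem not_summable_one_div_of_tendsto {P : Set ℕ} {c : ℝ} (hP0 : 0 ∉ P) (hc : 0 < c)
    (h : Tendsto (fun x : ℕ ↦ P.chebyshevTheta x / x) atTop (𝓝 c)) :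
    ¬ Summable fun q : P ↦ (1 : ℝ) / ((q : ℕ) : ℝ) := by
  intro hs
  have hs' : Summable (P.indicator fun k : ℕ ↦ (1 : ℝ) / k) :=
    summable_subtype_iff_indicator.1 hs
  set f := P.indicator fun k : ℕ ↦ (1 : ℝ) / k with hf
  have hf0 : ∀ k, 0 ≤ f k := fun k ↦ indicator_nonneg (fun _ _ ↦ by positivity) k
  set F : ℕ → ℝ := fun n ↦ ∑ k ∈ Finset.range (n + 1), f k with hF
  have hFle : ∀ n, F n ≤ ∑' k, f k := fun n ↦ hs'.sum_le_tsum _ fun k _ ↦ hf0 k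
  have hF0 : ∀ n, 0 ≤ F n := fun n ↦ Finset.sum_nonneg fun k _ ↦ hf0 k
  have hFmono : Monotone F := fun m n hmn ↦
    Finset.sum_le_sum_of_subset_of_nonneg (Finset.range_mono (by omega)) fun k _ _ ↦ hf0 k
  have hblock : Summable fun k : ℕ ↦ F (2 ^ (k + 1)) - F (2 ^ k) := by
    refine summable_of_sum_range_le (c := ∑' k, f k)
      (fun k ↦ sub_nonneg.2 (hFmono (Nat.pow_le_pow_right two_pos k.le_succ))) fun n ↦ ?_
    rw [Finset.sum_range_sub (fun k ↦ F (2 ^ k))]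
    linarith [hFle (2 ^ n), hF0 (2 ^ 0)]
  have hpow : Tendsto (fun k : ℕ ↦ 2 ^ k) atTop atTop :=
    tendsto_pow_atTop_atTop_of_one_lt one_lt_two
  have hlim : Tendsto (fun k : ℕ ↦ (P.chebyshevTheta (2 ^ (k + 1)) - P.chebyshevTheta (2 ^ k)) /
      (2 : ℝ) ^ (k + 1)) atTop (𝓝 (c / 2)) := by
    have h1 := h.comp (hpow.comp (tendsto_add_atTop_nat 1))
    have h2 := (h.comp hpow).div_const 2
    have h3 := h1.sub h2
    rw [sub_half] at h3
    refine h3.congr fun k ↦ ?_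
    simp only [Function.comp_apply, Nat.cast_pow, Nat.cast_ofNat]
    rw [sub_div, div_div, ← pow_succ]
  have hlow : ∀ k : ℕ, (P.chebyshevTheta (2 ^ (k + 1)) - P.chebyshevTheta (2 ^ k)) /
      (2 : ℝ) ^ (k + 1) / ((k + 1) * Real.log 2) ≤ F (2 ^ (k + 1)) - F (2 ^ k) := fun k ↦ by
    have hle : 2 ^ k + 1 ≤ 2 ^ (k + 1) + 1 := by
      have := Nat.pow_le_pow_right two_pos k.le_succ
      omega
    have hlog2 : 0 < Real.log 2 := Real.log_pos one_lt_two
    rw [chebyshevTheta, chebyshevTheta, ← Finset.sum_Ico_eq_sub _ hle, hF,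
      ← Finset.sum_Ico_eq_sub _ hle, div_div, div_le_iff₀ (by positivity), Finset.sum_mul]
    refine Finset.sum_le_sum fun j hj ↦ ?_
    by_cases hjP : j ∈ P
    · have hj0 : (0 : ℝ) < j := by
        exact_mod_cast Nat.pos_of_ne_zero fun h0 ↦ hP0 (h0 ▸ hjP)
      have hj1 : (1 : ℝ) ≤ j := by exact_mod_cast Nat.cast_pos.1 hj0
      have hj2 : (j : ℝ) ≤ 2 ^ (k + 1) := by
        have := (Finset.mem_Ico.1 hj).2
        exact_mod_cast Nat.lt_succ_iff.1 this
      have hlogj : Real.log j ≤ (k + 1) * Real.log 2 := by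
        have := Real.log_le_log hj0 hj2
        rw [Real.log_pow] at this
        exact_mod_cast this
      rw [hf]
      simp only [hjP, indicator_of_mem]
      rw [one_div, ← div_eq_inv_mul, le_div_iff₀ hj0, mul_comm]
      exact mul_le_mul hj2 hlogj (Real.log_nonneg hj1) (by positivity)
    · simp [hf, hjP]
  have hharm : Summable fun k : ℕ ↦ c / 4 / (((k : ℝ) + 1) * Real.log 2) := by
    refine hblock.of_norm_bounded_eventually_nat ?_
    filter_upwards [hlim.eventually_const_le (show c / 4 < c / 2 by linarith)] with k hk
    have hlog2 : 0 < Real.log 2 := Real.log_pos one_lt_two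
    rw [Real.norm_of_nonneg (by positivity)]
    refine le_trans ?_ (hlow k)
    gcongr
  have hlog2 : 0 < Real.log 2 := Real.log_pos one_lt_two
  have hone : Summable fun k : ℕ ↦ (1 : ℝ) / ((k + 1 : ℕ) : ℝ) := by
    refine (hharm.mul_left (4 / c * Real.log 2)).congr fun k ↦ ?_
    push_cast
    field_simp
  exact Real.not_summable_one_div_natCast
    ((summable_nat_add_iff (f := fun k : ℕ ↦ (1 : ℝ) / k) 1).1 hone)

end PrimeDensity

namespace NumberField

section

open Filter Topology Module Polynomial

theorem tendsto_chebyshevTheta_setOf_prime_div :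
    Tendsto (fun x : ℕ ↦ Set.chebyshevTheta {q | q.Prime} x / x) atTop (𝓝 1) := by
  have : IsCyclotomicExtension {2} ℚ (CyclotomicField 2 ℚ) :=
    CyclotomicField.isCyclotomicExtension 2 ℚ
  have hfin : finrank ℚ (CyclotomicField 2 ℚ) = 1 := by
    rw [IsCyclotomicExtension.finrank (n := 2) _ (cyclotomic.irreducible_rat two_pos),
      Nat.totient_two]
  obtain ⟨d, hd, h⟩ := exists_forall_degreeOneCount_cyclotomic_eq (K := CyclotomicField 2 ℚ)
    one_lt_two
  refine tendsto_chebyshevTheta_div_of_eventuallyEq (D := d + 2)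
    (tendsto_sum_degreeOneCount_mul_log_div (CyclotomicField 2 ℚ)) fun k hk ↦ ?_
  by_cases hkp : k.Prime
  · have hkd : ¬ k ∣ d := fun h ↦ by
      have := Nat.le_of_dvd (Nat.pos_of_ne_zero hd) h
      omega
    have hk2 : k % 2 = 1 := hkp.mod_two_eq_one_iff_ne_two.2 (by omega)
    rw [h k hkp hkd, if_pos hk2, hfin]
    simp [hkp]
  · simp [degreeOneCount, hkp]

theorem tendsto_chebyshevTheta_not_pow_div {K L : Type*} [Field K] [NumberField K] [Field L]
    [NumberField L] {N : ℕ} (hN : N ≠ 0) {g : ℤ} (hg : g ≠ 0) [IsCyclotomicExtension {2 * N} ℚ K]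
    [((X ^ N - C (g : ℚ)) * (X ^ (2 * N) - 1) : ℚ[X]).IsSplittingField ℚ L] :
    Tendsto (fun x : ℕ ↦ Set.chebyshevTheta {q | q.Prime ∧ ¬ (q : ℤ) ∣ 2 * N * g ∧
        q % (2 * N) = 1 ∧ ¬ ∃ y : ZMod q, y ^ N = g} x / x) atTop
      (𝓝 (1 / finrank ℚ K - 1 / finrank ℚ L)) := by
  obtain ⟨d, hd, hK⟩ := exists_forall_degreeOneCount_cyclotomic_eq (K := K)
    (by omega : 1 < 2 * N)
  obtain ⟨e, he, hL⟩ := exists_forall_degreeOneCount_kummer_eq (K := L) (N := N) hN hg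
  have hlim := ((tendsto_sum_degreeOneCount_mul_log_div K).div_const (finrank ℚ K : ℝ)).sub
    ((tendsto_sum_degreeOneCount_mul_log_div L).div_const (finrank ℚ L : ℝ))
  have hK0 : (finrank ℚ K : ℝ) ≠ 0 := by exact_mod_cast finrank_pos.ne'
  have hL0 : (finrank ℚ L : ℝ) ≠ 0 := by exact_mod_cast finrank_pos.ne'
  refine tendsto_chebyshevTheta_div_of_eventuallyEq (D := d + e + (2 * N * g).natAbs)
    (w := fun k ↦ degreeOneCount K k / (finrank ℚ K : ℝ) - degreeOneCount L k / (finrank ℚ L : ℝ))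
    (hlim.congr fun x ↦ ?_) fun k hk ↦ ?_
  · simp only [sub_mul, Finset.sum_sub_distrib, div_mul_eq_mul_div, ← Finset.sum_div]
    rw [sub_div, div_right_comm, div_right_comm (_ : ℝ) (finrank ℚ L : ℝ)]
  · by_cases hkp : k.Prime
    · have hkd : ¬ k ∣ d := fun h ↦ by
        have := Nat.le_of_dvd (Nat.pos_of_ne_zero hd) h
        omega
      have hke : ¬ k ∣ e := fun h ↦ by
        have := Nat.le_of_dvd (Nat.pos_of_ne_zero he) h
        omega
      have hkg : ¬ (k : ℤ) ∣ 2 * N * g := fun h ↦ by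
        have := Nat.le_of_dvd (Int.natAbs_pos.2 (by simp [hN, hg])) (Int.natCast_dvd.1 h)
        omega
      simp only [hK k hkp hkd, hL k hkp hke]
      by_cases h1 : k % (2 * N) = 1 <;> by_cases h2 : ∃ y : ZMod k, y ^ N = g
      · rw [Set.indicator_of_notMem (by simp [h2])]
        simp [h1, h2, hK0, hL0]
      · rw [Set.indicator_of_mem (by exact ⟨hkp, hkg, h1, h2⟩)]
        simp [h1, h2, hK0]
      · rw [Set.indicator_of_notMem (by simp [h1])]
        simp [h1]
      · rw [Set.indicator_of_notMem (by simp [h1])]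
        simp [h1]
    · simp [degreeOneCount, hkp]

end

end NumberField

open Polynomial Filter
open scoped Classical

/-- **Chebotarev–Kummer production of obstructing primes.**  Let `N ≥ 2` and let `g` be a
nonzero integer such that `X^N − g` has no root in `ℚ(ζ_{2N})`.  Let `P_g` be the set of
primes `q` with `q ∤ 2Ng`, `q ≡ 1 (mod 2N)` and `g` not an `N`-th power mod `q`, let `L_g`
be the splitting field of `(X^N − g)(X^{2N} − 1)` over `ℚ`, and set
`δ_g = 1/φ(2N) − 1/[L_g : ℚ]`.  Then `δ_g > 0`, the set `P_g` has natural density `δ_g`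
among the primes, and `∑_{q ∈ P_g} 1/q = ∞`. -/
theorem Pg_positive_density (N : ℕ+) (hN : 2 ≤ (N : ℕ)) (g : ℤ) (hg : g ≠ 0)
    (hroot : ∀ x : CyclotomicField (2 * N) ℚ, x ^ (N : ℕ) ≠ (g : CyclotomicField (2 * N) ℚ))
    (P : Set ℕ)
    (hP : P = {q : ℕ | q.Prime ∧ ¬ ((q : ℤ) ∣ 2 * (N : ℕ) * g) ∧ q % (2 * (N : ℕ)) = 1 ∧
        ¬ ∃ y : ZMod q, y ^ (N : ℕ) = (g : ZMod q)})
    (δ : ℝ)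
    (hδ : δ = 1 / (Nat.totient (2 * (N : ℕ)) : ℝ) -
        1 / (Module.finrank ℚ
          ((((X : ℚ[X]) ^ (N : ℕ) - C (g : ℚ)) *
            ((X : ℚ[X]) ^ (2 * (N : ℕ)) - 1)).SplittingField) : ℝ)) :
    0 < δ ∧
    Tendsto (fun x : ℕ =>
        (((Finset.range (x + 1)).filter (fun q => q ∈ P)).card : ℝ) /
          (((Finset.range (x + 1)).filter Nat.Prime).card : ℝ)) atTop (nhds δ) ∧
    ¬ Summable fun q : P => (1 : ℝ) / ((q : ℕ) : ℝ) := by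
  have hN0 : (N : ℕ) ≠ 0 := by omega
  have hcyc : IsCyclotomicExtension {2 * (N : ℕ)} ℚ (CyclotomicField (2 * N) ℚ) :=
    CyclotomicField.isCyclotomicExtension (2 * N) ℚ
  have hfin : Module.finrank ℚ (CyclotomicField (2 * N) ℚ) = Nat.totient (2 * (N : ℕ)) :=
    IsCyclotomicExtension.finrank (n := 2 * (N : ℕ)) _ (cyclotomic.irreducible_rat (by omega))
  set f : ℚ[X] := (X ^ (N : ℕ) - C (g : ℚ)) * (X ^ (2 * (N : ℕ)) - 1) with hf
  have hnum : NumberField f.SplittingField := ⟨⟩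
  have hsplit : f.IsSplittingField ℚ f.SplittingField := IsSplittingField.splittingField f
  have hθ := NumberField.tendsto_chebyshevTheta_not_pow_div
    (K := CyclotomicField (2 * N) ℚ) (L := f.SplittingField) hN0 hg
  rw [hfin, ← hP, ← hδ] at hθ
  have hlt := NumberField.finrank_lt_finrank_of_isSplittingField (K := f.SplittingField) (g := g)
    hN0 (F := CyclotomicField (2 * N) ℚ) hroot
  rw [hfin] at hlt
  have hδ0 : 0 < δ := by
    rw [hδ, sub_pos]
    have h0 : (0 : ℝ) < Nat.totient (2 * (N : ℕ)) := by
      exact_mod_cast Nat.totient_pos.2 (by omega : 0 < 2 * (N : ℕ))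
    exact one_div_lt_one_div_of_lt h0 (by exact_mod_cast hlt)
  have hP0 : 0 ∉ P := fun h ↦ by
    rw [hP] at h
    exact Nat.not_prime_zero h.1
  refine ⟨hδ0, ?_, not_summable_one_div_of_tendsto hP0 hδ0 hθ⟩
  convert tendsto_card_div_card hP0 (show 0 ∉ {q : ℕ | q.Prime} from Nat.not_prime_zero) hθ
    NumberField.tendsto_chebyshevTheta_setOf_prime_div using 3
  congr 2
  ext
  simp
end
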